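/- arXiv:1501.07656 — 2 statements merged into one kernel-verified Lean document; each statement's English description precedes it below -/
import Mathlib

section
/- For n ≥ 2 with n ≠ 4, every proper closed connected subgroup of O(n, ℝ) of dimension at least (n-1)(n-2)/2 + 1 equals SO(n, ℝ). -/
open scoped ENNReal

/-- The dimension of a subgroup of the orthogonal group `O(n, ℝ)`, measured as the
Hausdorff dimension of its underlying set of matrices. -/
noncomputable def orthSubgroupDim (n : ℕ) (H : Subgroup ↥(Matrix.orthogonalGroup (Fin n) ℝ)) :
    ℝ≥0∞ :=
  dimH ((fun A : ↥(Matrix.orthogonalGroup (Fin n) ℝ) =>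
    fun i j : Fin n => (A : Matrix (Fin n) (Fin n) ℝ) i j) ''
      (H : Set ↥(Matrix.orthogonalGroup (Fin n) ℝ)))

/-!
A closed subgroup `H` of `O(n)` has a Lie algebra `𝔤 ⊆ so n`, consisting of the generators of its
one-parameter subgroups, and near `1` the group `H` is the image of `𝔤` under `exp`; hence
`dim H ≤ dim 𝔤`. A proper Lie subalgebra `𝔥` of `so n` is small: `so n` is simple for `n ≠ 4`, so
`𝔥` acts faithfully on its orthogonal complement for the trace form, by skew-adjoint maps, and with
`d = dim so n - dim 𝔥` this gives `dim 𝔥 ≤ d (d - 1) / 2`. Together with `dim so n = n (n - 1) / 2`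
this forces `dim 𝔥 ≤ (n - 1) (n - 2) / 2`. Under the dimension hypothesis therefore `𝔤 = so n`, and
`H` is open in `O(n)`. As the hyperplane reflections form a connected family, an open subgroup
contains every product of two of them, and these generate `SO(n)`.
-/

open Filter Module NormedSpace Set Topology
open LieAlgebra.Orthogonal (so mem_so)
open LinearMap (BilinForm)

attribute [local instance] LieRing.ofAssociativeRing

section ClosedSubgroupOfUnits

variable {A : Type*} [NormedRing A] [NormedAlgebra ℝ A] [CompleteSpace A]

/-- The exponential of an element of a real Banach algebra, as a unit of that algebra. -/
noncomputable def expUnit (X : A) : Aˣ :=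
  letI := NormedAlgebra.restrictScalars ℚ ℝ A
  letI := invertibleExp X
  unitOfInvertible (exp X)

lemma coe_expUnit (X : A) : (expUnit X : A) = exp X := rfl

lemma expUnit_zero : expUnit (0 : A) = 1 := Units.ext exp_zero

lemma expUnit_add_of_commute {X Y : A} (h : Commute X Y) :
    expUnit (X + Y) = expUnit X * expUnit Y :=
  letI := NormedAlgebra.restrictScalars ℚ ℝ A
  Units.ext (exp_add_of_commute h)

lemma expUnit_neg (X : A) : expUnit (-X) = (expUnit X)⁻¹ := by
  rw [eq_inv_iff_mul_eq_one, ← expUnit_add_of_commute (Commute.refl X).neg_left, neg_add_cancel,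
    expUnit_zero]

lemma expUnit_nsmul (n : ℕ) (X : A) : expUnit (n • X) = expUnit X ^ n :=
  letI := NormedAlgebra.restrictScalars ℚ ℝ A
  Units.ext (exp_nsmul n X)

lemma expUnit_zsmul (n : ℤ) (X : A) : expUnit (n • X) = expUnit X ^ n := by
  cases n with
  | ofNat n => simpa using expUnit_nsmul n X
  | negSucc n => rw [negSucc_zsmul, expUnit_neg, expUnit_nsmul, zpow_negSucc]

lemma continuous_exp : Continuous (exp : A → A) :=
  letI := NormedAlgebra.restrictScalars ℚ ℝ A
  exp_continuous

lemma continuous_expUnit : Continuous (expUnit : A → Aˣ) :=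
  Units.isOpenEmbedding_val.isEmbedding.continuous_iff.2 continuous_exp

lemma exists_log_hasStrictFDerivAt :
    ∃ log : A → A, log 1 = 0 ∧ HasStrictFDerivAt log (1 : A →L[ℝ] A) 1 ∧
      ∀ᶠ a in 𝓝 1, exp (log a) = a := by
  have hexp : HasStrictFDerivAt (exp : A → A) (ContinuousLinearEquiv.refl ℝ A : A →L[ℝ] A) 0 :=
    hasStrictFDerivAt_exp_zero
  have hright := hexp.eventually_right_inverse
  have hderiv := hexp.to_localInverse
  have hzero := hexp.localInverse_apply_image
  rw [exp_zero] at hright hderiv hzero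
  exact ⟨_, hzero, hderiv, hright⟩

lemma hasDerivAt_exp_smul_zero (X : A) : HasDerivAt (fun t : ℝ => exp (t • X)) X 0 := by
  simpa using hasDerivAt_exp_smul_const (𝕂 := ℝ) X 0

lemma expUnit_conj (g : Aˣ) (X : A) : expUnit (g * X * ↑g⁻¹) = g * expUnit X * g⁻¹ :=
  letI := NormedAlgebra.restrictScalars ℚ ℝ A
  Units.ext (exp_units_conj g X)

variable (G : ClosedSubgroup Aˣ)

-- The element `exp (tX)` is the limit of the powers `exp (Y k) ^ ⌊t / s k⌋`.
lemma expUnit_smul_mem_of_tendsto {α : Type*} {l : Filter α} [l.NeBot] {s : α → ℝ} {Y : α → A}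
    {X : A} (hs : Tendsto s l (𝓝[≠] 0)) (hY : ∃ᶠ k in l, expUnit (Y k) ∈ G)
    (hX : Tendsto (fun k => (s k)⁻¹ • Y k) l (𝓝 X)) (t : ℝ) : expUnit (t • X) ∈ G := by
  obtain ⟨hs_zero, hs_ne⟩ := tendsto_nhdsWithin_iff.1 hs
  have hfloor : Tendsto (fun k => ⌊t / s k⌋ * s k) l (𝓝 t) := by
    refine tendsto_iff_norm_sub_tendsto_zero.2 <| squeeze_zero' (.of_forall fun _ => norm_nonneg _)
      (hs_ne.mono fun k hk => ?_) (tendsto_zero_iff_norm_tendsto_zero.1 hs_zero)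
    have hfract : ⌊t / s k⌋ * s k - t = -(Int.fract (t / s k) * s k) := by
      rw [← Int.self_sub_floor, sub_mul, div_mul_cancel₀ t hk, neg_sub]
    rw [hfract, norm_neg, norm_mul, Real.norm_of_nonneg (Int.fract_nonneg _)]
    exact mul_le_of_le_one_left (norm_nonneg _) (Int.fract_lt_one _).le
  have hsmul : Tendsto (fun k => ⌊t / s k⌋ • Y k) l (𝓝 (t • X)) := by
    refine (hfloor.smul hX).congr' (hs_ne.mono fun k hk => ?_)
    dsimp only
    rw [smul_smul, mul_assoc, mul_inv_cancel₀ hk, mul_one, Int.cast_smul_eq_zsmul]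
  refine G.isClosed'.mem_of_frequently_of_tendsto (hY.mono fun k hk => ?_)
    ((continuous_expUnit.tendsto _).comp hsmul)
  rw [Function.comp_apply, expUnit_zsmul]
  exact zpow_mem hk _

lemma expUnit_smul_mem_of_hasDerivAt {γ : ℝ → Aˣ} (hγ : ∀ t, γ t ∈ G) (hγ_zero : γ 0 = 1) {X : A}
    (hX : HasDerivAt (fun t => (γ t : A)) X 0) (t : ℝ) : expUnit (t • X) ∈ G := by
  obtain ⟨log, hlog_one, hlog, hexp⟩ := exists_log_hasStrictFDerivAt (A := A)
  have hγ_one : (γ 0 : A) = 1 := by rw [hγ_zero, Units.val_one]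
  have hderiv : HasDerivAt (fun t => log (γ t)) X 0 := by
    rw [← hγ_one] at hlog
    exact hlog.hasFDerivAt.comp_hasDerivAt 0 hX
  have hexp_log : ∀ᶠ t in 𝓝[≠] 0, expUnit (log (γ t)) ∈ G := by
    have hcont := hX.continuousAt.tendsto
    rw [hγ_one] at hcont
    filter_upwards [(hcont.mono_left nhdsWithin_le_nhds).eventually hexp] with t ht
    rw [show expUnit (log (γ t)) = γ t from Units.ext ht]
    exact hγ t
  refine expUnit_smul_mem_of_tendsto G tendsto_id hexp_log.frequently ?_ t
  simpa [hγ_one, hlog_one] using hderiv.tendsto_slope_zero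

lemma isClosed_setOf_forall_expUnit_smul_mem :
    IsClosed {X : A | ∀ t : ℝ, expUnit (t • X) ∈ G} := by
  rw [ofPred_forall]
  exact isClosed_iInter fun t =>
    G.isClosed'.preimage (continuous_expUnit.comp (continuous_const_smul t))

/-- The tangent space at the identity of a closed subgroup `G` of the units of a Banach algebra,
encoded as the set of generators of the one-parameter subgroups `t ↦ exp (tX)` contained in `G`. -/
noncomputable def tangentSpace : Submodule ℝ A where
  carrier := {X | ∀ t : ℝ, expUnit (t • X) ∈ G}
  zero_mem' t := by
    rw [smul_zero, expUnit_zero]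
    exact one_mem G
  add_mem' {X Y} hX hY := by
    refine expUnit_smul_mem_of_hasDerivAt G
      (γ := fun t => expUnit (t • X) * expUnit (t • Y)) (fun t => mul_mem (hX t) (hY t)) ?_ ?_
    · simp [expUnit_zero]
    · simpa [coe_expUnit] using
        (hasDerivAt_exp_smul_zero X).fun_mul (hasDerivAt_exp_smul_zero Y)
  smul_mem' c X hX t := by
    rw [smul_smul]
    exact hX (t * c)

lemma conj_mem_tangentSpace {g : Aˣ} (hg : g ∈ G) {X : A} (hX : X ∈ tangentSpace G) :
    g * X * ↑g⁻¹ ∈ tangentSpace G := fun t => by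
  rw [← smul_mul_assoc, ← mul_smul_comm, expUnit_conj]
  exact mul_mem (mul_mem hg (hX t)) (inv_mem hg)

-- `[X, Y]` is the derivative at `0` of the curve `exp (tX) Y exp (-tX)` in the tangent space.
lemma lie_mem_tangentSpace {X Y : A} (hX : X ∈ tangentSpace G) (hY : Y ∈ tangentSpace G) :
    ⁅X, Y⁆ ∈ tangentSpace G := by
  have hcurve (t : ℝ) : exp (t • X) * Y * exp (t • -X) ∈ tangentSpace G := by
    simpa [smul_neg, ← coe_expUnit, expUnit_neg] using conj_mem_tangentSpace G (hX t) hY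
  have hderiv : HasDerivAt (fun t : ℝ => exp (t • X) * Y * exp (t • -X)) ⁅X, Y⁆ 0 := by
    simpa [Ring.lie_def, sub_eq_add_neg] using
      ((hasDerivAt_exp_smul_zero X).mul_const Y).fun_mul (hasDerivAt_exp_smul_zero (-X))
  refine (isClosed_setOf_forall_expUnit_smul_mem G).mem_of_tendsto hderiv.tendsto_slope_zero
    (.of_forall fun t => ?_)
  exact (tangentSpace G).smul_mem _ ((tangentSpace G).sub_mem (hcurve _) (hcurve _))

/-- The Lie algebra of a closed subgroup `G` of the units of a Banach algebra: its tangent space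
with the commutator bracket. -/
noncomputable def tangentLieAlgebra : LieSubalgebra ℝ A where
  toSubmodule := tangentSpace G
  lie_mem' := lie_mem_tangentSpace G

section FiniteDimensional

variable [FiniteDimensional ℝ A]

-- Otherwise the directions of a sequence of counterexamples accumulate at a unit vector of `m`
-- which is tangent to `G`.
lemma eventually_expUnit_mem_imp_eq_zero_of_disjoint {m : Submodule ℝ A}
    (hm : Disjoint (tangentSpace G) m) : ∀ᶠ Y : m in 𝓝 0, expUnit (Y : A) ∈ G → Y = 0 := by
  by_contra hfreq
  have hfreq' : ∃ᶠ Y : m in 𝓝[≠] 0, expUnit (Y : A) ∈ G := by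
    rw [frequently_nhdsWithin_iff]
    exact (not_eventually.1 hfreq).mono fun Y hY => by simpa using hY
  rw [frequently_iff_neBot] at hfreq'
  set l := Ultrafilter.of (𝓝[≠] (0 : m) ⊓ 𝓟 {Y : m | expUnit (Y : A) ∈ G})
  have hl : (l : Filter m) ≤ 𝓝[≠] 0 ⊓ 𝓟 {Y : m | expUnit (Y : A) ∈ G} := Ultrafilter.of_le _
  have hl_ne : ∀ᶠ Y : m in l, Y ≠ 0 :=
    (hl.trans inf_le_left) self_mem_nhdsWithin
  have hsphere : ∀ᶠ Y : m in l, ‖Y‖⁻¹ • Y ∈ Metric.sphere (0 : m) 1 :=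
    hl_ne.mono fun Y hY => by simp [norm_smul, hY]
  obtain ⟨X, hX_norm, hX⟩ := (isCompact_sphere (0 : m) 1).ultrafilter_le_nhds
    (l.map fun Y => ‖Y‖⁻¹ • Y) (tendsto_principal.2 hsphere)
  have hX_mem : (X : A) ∈ tangentSpace G := by
    refine expUnit_smul_mem_of_tendsto G
      ((tendsto_norm_nhdsNE_zero.mono_left (hl.trans inf_le_left)).mono_right ?_)
      (Eventually.frequently (hl.trans inf_le_right <| mem_principal_self _))
      ((continuous_subtype_val.tendsto X).comp hX)
    exact nhdsWithin_mono _ fun _ hx => ne_of_gt hx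
  have hX_zero : X = 0 := Subtype.ext (hm.le_bot ⟨hX_mem, X.2⟩)
  simp [hX_zero] at hX_norm

lemma hasStrictFDerivAt_exp_mul_exp {T m : Submodule ℝ A} (h : IsCompl T m) :
    HasStrictFDerivAt (fun p : T × m => exp (p.1 : A) * exp (p.2 : A))
      ((T.prodEquivOfIsCompl m h).toContinuousLinearEquiv : T × m →L[ℝ] A) 0 := by
  have hexp (V : Submodule ℝ A) : HasStrictFDerivAt (fun X : V => exp (X : A)) V.subtypeL 0 := by
    rw [← V.subtypeL.id_comp]
    exact HasStrictFDerivAt.comp (0 : V) (g := exp) hasStrictFDerivAt_exp_zero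
      V.subtypeL.hasStrictFDerivAt
  have hfst := (hexp T).comp (0 : T × m) (f := Prod.fst) hasStrictFDerivAt_fst
  have hsnd := (hexp m).comp (0 : T × m) (f := Prod.snd) hasStrictFDerivAt_snd
  refine (hfst.mul' hsnd).congr_fderiv ?_
  ext <;> simp

lemma eventually_exists_mem_tangentSpace_exp_eq :
    ∀ᶠ g : Aˣ in 𝓝 1, g ∈ G → ∃ X ∈ tangentSpace G, exp X = (g : A) := by
  obtain ⟨m, hm⟩ := (tangentSpace G).exists_isCompl
  have hsurj := (hasStrictFDerivAt_exp_mul_exp hm).map_nhds_eq_of_equiv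
  have hzero : exp ((0 : tangentSpace G × m).1 : A) * exp ((0 : tangentSpace G × m).2 : A) = 1 := by
    simp
  rw [hzero] at hsurj
  have htransverse : ∀ᶠ p : tangentSpace G × m in 𝓝 0, expUnit (p.2 : A) ∈ G → p.2 = 0 :=
    (continuous_snd.tendsto (0 : tangentSpace G × m)).eventually
      (eventually_expUnit_mem_imp_eq_zero_of_disjoint G hm.disjoint)
  have himage := hsurj ▸ image_mem_map htransverse
  filter_upwards [Units.continuous_val.tendsto 1 himage] with g ⟨⟨X, Y⟩, hY, hXY⟩ hg
  have hg_eq : expUnit (X : A) * expUnit (Y : A) = g := Units.ext hXY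
  have hexpX : expUnit (X : A) ∈ G := by simpa using X.2 1
  have hY_zero : Y = 0 := hY <| (mul_mem_cancel_left hexpX).1 (hg_eq ▸ hg)
  exact ⟨X, X.2, by simpa [hY_zero] using hXY⟩

lemma eventually_mem_of_tangentSpace_le {K : ClosedSubgroup Aˣ}
    (h : tangentSpace K ≤ tangentSpace G) : ∀ᶠ g : Aˣ in 𝓝 1, g ∈ K → g ∈ G := by
  filter_upwards [eventually_exists_mem_tangentSpace_exp_eq K] with g hexp hg
  obtain ⟨X, hX, hXg⟩ := hexp hg
  rw [← show expUnit X = g from Units.ext hXg]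
  simpa using h hX 1

lemma dimH_image_val_le_finrank_tangentSpace :
    dimH (Units.val '' (G : Set Aˣ)) ≤ finrank ℝ (tangentSpace G) := by
  let := NormedAlgebra.restrictScalars ℚ ℝ A
  by_contra! hlt
  obtain ⟨_, ⟨g, hg, rfl⟩, hdim⟩ := exists_mem_nhdsWithin_lt_dimH_of_lt_dimH hlt
  let chart : tangentSpace G → A := fun X => g * exp (X : A)
  have hchart : ContDiff ℝ 1 chart :=
    contDiff_const.mul <| (contDiff_iff_contDiffAt.2 fun X => (exp_analytic X).contDiffAt).comp
      (tangentSpace G).subtypeL.contDiff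
  refine (hdim (range chart) ?_).not_ge hchart.dimH_range_le
  rw [← Units.isOpenEmbedding_val.isEmbedding.map_nhdsWithin_eq, mem_map,
    mem_nhdsWithin_iff_eventually]
  have hshift : Tendsto (fun h => g⁻¹ * h) (𝓝 g) (𝓝 1) := by
    simpa using (continuous_const_mul g⁻¹).tendsto g
  filter_upwards [hshift.eventually (eventually_exists_mem_tangentSpace_exp_eq G)] with h hexp hh
  obtain ⟨X, hX, hXg⟩ := hexp (mul_mem (inv_mem hg) hh)
  exact ⟨⟨X, hX⟩, by simp [chart, hXg]⟩

end FiniteDimensional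

end ClosedSubgroupOfUnits

section ClosedSubgroupOfUnitary

lemma isClosedEmbedding_toUnits {M : Type*} [Monoid M] [StarMul M] [TopologicalSpace M] [T1Space M]
    [ContinuousMul M] [ContinuousStar M] :
    IsClosedEmbedding (Unitary.toUnits : unitary M → Mˣ) where
  toIsEmbedding := .of_comp
    (Units.continuous_iff.2 ⟨continuous_subtype_val, continuous_subtype_val.comp continuous_inv⟩)
    Units.continuous_val .subtypeVal
  isClosed_range := by
    have hrange : range (Unitary.toUnits : unitary M → Mˣ) = Units.val ⁻¹' unitary M :=
      Subset.antisymm (range_subset_iff.2 fun u => u.2) fun u hu => ⟨⟨u, hu⟩, Units.ext rfl⟩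
    exact hrange ▸ isClosed_unitary.preimage Units.continuous_val

variable {A : Type*} [NormedRing A] [StarRing A] [ContinuousStar A]

/-- A closed group of unitary elements, as a closed subgroup of the group of units. -/
def closedSubgroupUnits (H : ClosedSubgroup (unitary A)) : ClosedSubgroup Aˣ where
  toSubgroup := H.toSubgroup.map Unitary.toUnits
  isClosed' := isClosedEmbedding_toUnits.isClosedMap _ H.isClosed'

lemma toUnits_mem_closedSubgroupUnits {H : ClosedSubgroup (unitary A)} {u : unitary A} :
    Unitary.toUnits u ∈ closedSubgroupUnits H ↔ u ∈ H :=
  Subgroup.mem_map_iff_mem Unitary.toUnits_injective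

variable [NormedAlgebra ℝ A] [CompleteSpace A]

lemma tangentSpace_le_skewAdjoint [StarModule ℝ A] (H : ClosedSubgroup (unitary A)) :
    tangentSpace (closedSubgroupUnits H) ≤ skewAdjoint.submodule ℝ A := by
  intro X hX
  have hunitary (t : ℝ) : star (exp (t • X)) * exp (t • X) = 1 := by
    obtain ⟨u, -, hu⟩ := hX t
    rw [← coe_expUnit, ← hu]
    exact Unitary.coe_star_mul_self u
  have hderiv : HasDerivAt (fun t : ℝ => star (exp (t • X)) * exp (t • X)) (star X + X) 0 := by
    simpa using (hasDerivAt_exp_smul_zero X).star.fun_mul (hasDerivAt_exp_smul_zero X)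
  simp only [hunitary] at hderiv
  exact eq_neg_of_add_eq_zero_left (hderiv.unique (hasDerivAt_const _ _))

variable [FiniteDimensional ℝ A]

lemma isOpen_of_skewAdjoint_le_tangentSpace [StarModule ℝ A] {H : ClosedSubgroup (unitary A)}
    (h : skewAdjoint.submodule ℝ A ≤ tangentSpace (closedSubgroupUnits H)) :
    IsOpen (H : Set (unitary A)) := by
  have hnhds := eventually_mem_of_tangentSpace_le _
    ((tangentSpace_le_skewAdjoint ⟨⊤, isClosed_univ⟩).trans h)
  refine H.toSubgroup.isOpen_of_mem_nhds (g := 1) ?_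
  have hcont := (isClosedEmbedding_toUnits (M := A)).continuous.tendsto 1
  rw [map_one] at hcont
  filter_upwards [hcont.eventually hnhds] with u hu
  exact toUnits_mem_closedSubgroupUnits.1 (hu (toUnits_mem_closedSubgroupUnits.2 trivial))

lemma dimH_image_coe_le_finrank_tangentSpace (H : ClosedSubgroup (unitary A)) :
    dimH ((↑) '' (H : Set (unitary A)) : Set A) ≤
      finrank ℝ (tangentSpace (closedSubgroupUnits H)) := by
  have h := dimH_image_val_le_finrank_tangentSpace (closedSubgroupUnits H)
  have himage : Units.val '' (closedSubgroupUnits H : Set Aˣ) = (↑) '' (H : Set (unitary A)) :=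
    image_image ..
  rwa [himage] at h

end ClosedSubgroupOfUnitary

lemma so_apply_comm {R ι : Type*} [CommRing R] [Fintype ι] [DecidableEq ι] (X : so ι R)
    (i j : ι) : (X : Matrix ι ι R) i j = -(X : Matrix ι ι R) j i :=
  congrFun₂ ((mem_so ι R _).1 X.2) j i

lemma so_apply_self {K ι : Type*} [Field K] [NeZero (2 : K)] [Fintype ι] [DecidableEq ι]
    (X : so ι K) (i : ι) : (X : Matrix ι ι K) i i = 0 := by
  have h := so_apply_comm X i i
  rwa [eq_neg_iff_add_eq_zero, ← two_mul, mul_eq_zero, or_iff_right two_ne_zero] at h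

section SkewAdjoint

variable {K : Type*} [Field K] [NeZero (2 : K)]

-- A skew-symmetric matrix is determined by its entries below the diagonal.
lemma finrank_so_le_choose_two (k : ℕ) : finrank K (so (Fin k) K) ≤ k.choose 2 := by
  let lower : so (Fin k) K →ₗ[K] ((Σ i : Fin k, Fin i) → K) :=
    { toFun X p := (X : Matrix (Fin k) (Fin k) K) p.1 (p.2.castLE p.1.is_lt.le)
      map_add' _ _ := rfl
      map_smul' _ _ := rfl }
  have hlower_inj : Function.Injective lower := by
    refine (injective_iff_map_eq_zero lower).2 fun X hX => ?_
    have hlower (i j : Fin k) (hji : j < i) : (X : Matrix (Fin k) (Fin k) K) i j = 0 :=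
      congrFun hX ⟨i, j, hji⟩
    ext i j
    rcases lt_trichotomy i j with hij | rfl | hji
    · simp [so_apply_comm X i j, hlower j i hij]
    · exact so_apply_self X i
    · exact hlower i j hji
  calc finrank K (so (Fin k) K) ≤ finrank K ((Σ i : Fin k, Fin i) → K) :=
        LinearMap.finrank_le_finrank_of_injective hlower_inj
    _ = k.choose 2 := by
        simp [Fin.sum_univ_eq_sum_range (fun i => i), Finset.sum_range_id, Nat.choose_two_right]

lemma finrank_skewAdjointSubmodule_le_choose_two {M : Type*} [AddCommGroup M] [Module K M]
    [FiniteDimensional K M] {B : BilinForm K M} (hsymm : B.IsSymm) (hB : B.Nondegenerate) :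
    finrank K B.skewAdjointSubmodule ≤ (finrank K M).choose 2 := by
  let b := finBasis K M
  let gram : End K M →ₗ[K] Matrix (Fin (finrank K M)) (Fin (finrank K M)) K :=
    { toFun f := Matrix.of fun i j => B (b i) (f (b j))
      map_add' _ _ := by ext; simp
      map_smul' _ _ := by ext; simp }
  have hgram_skew (f : B.skewAdjointSubmodule) : gram f ∈ so (Fin (finrank K M)) K := by
    refine (mem_so _ _ _).2 (Matrix.ext fun i j => ?_)
    have hf := (B.mem_skewAdjointSubmodule _).1 f.2 (b i) (b j)
    simpa [gram, hsymm.eq (b j)] using hf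
  have hgram_inj : Function.Injective gram := by
    refine (injective_iff_map_eq_zero gram).2 fun f hf => b.ext fun j => hB.2 _ fun x => ?_
    have hb : B.flip (f (b j)) = 0 := b.ext fun i => congrFun₂ hf i j
    exact LinearMap.congr_fun hb x
  have hrestrict_inj : Function.Injective
      ((gram.comp B.skewAdjointSubmodule.subtype).codRestrict (so _ K).toSubmodule hgram_skew) :=
    fun f g hfg => Subtype.ext (hgram_inj (congrArg Subtype.val hfg))
  exact (LinearMap.finrank_le_finrank_of_injective hrestrict_inj).trans
    (finrank_so_le_choose_two _)

end SkewAdjoint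

-- As `L = h ⊕ m`, the kernel of the action of `h` on `m` is an ideal of `L`.
lemma isFaithful_of_isCompl {R L : Type*} [CommRing R] [LieRing L] [LieAlgebra R L]
    [LieModule.IsIrreducible R L L] {h : LieSubalgebra R L} (hh : h ≠ ⊤) {m : LieSubmodule R h L}
    (hm : IsCompl h.toSubmodule m.toSubmodule) : LieModule.IsFaithful R h m := by
  let I : LieIdeal R L :=
    { (LieModule.ker R h m).toSubmodule.map h.toSubmodule.subtype with
      lie_mem := by
        rintro z _ ⟨(x : h), hx, rfl⟩
        obtain ⟨(a : h), b, rfl⟩ :=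
          Submodule.mem_sup'.1 (hm.sup_eq_top.symm ▸ Submodule.mem_top (x := z))
        have hbx : ⁅(b : L), (x : L)⁆ = 0 := by
          rw [← lie_skew, neg_eq_zero]
          exact congrArg Subtype.val ((LieModule.mem_ker R h m x).1 hx b)
        refine ⟨⁅a, x⁆, lie_mem_right R h _ a x hx, ?_⟩
        change ⁅(a : L), (x : L)⁆ = ⁅(a : L) + b, (x : L)⁆
        rw [add_lie, hbx, add_zero] }
  have hI : I = ⊥ := (eq_bot_or_eq_top I).resolve_right fun hI => hh <| by
    rw [eq_top_iff]
    intro x _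
    obtain ⟨y, -, rfl⟩ := (hI ▸ LieSubmodule.mem_top x : x ∈ I)
    exact y.2
  refine (LieModule.isFaithful_iff_ker_eq_bot R h m).2 <|
    (LieSubmodule.eq_bot_iff _).2 fun x hx => ?_
  have hxI : (x : L) ∈ I := ⟨x, hx, rfl⟩
  rw [hI, LieSubmodule.mem_bot] at hxI
  exact Subtype.ext hxI

theorem finrank_le_choose_two_of_ne_top {K L : Type*} [Field K] [NeZero (2 : K)] [LieRing L]
    [LieAlgebra K L] [FiniteDimensional K L] [LieModule.IsIrreducible K L L] {B : BilinForm K L}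
    (hsymm : B.IsSymm) (hinv : B.lieInvariant L) (haniso : ∀ x, B x x = 0 → x = 0)
    {h : LieSubalgebra K L} (hh : h ≠ ⊤) :
    finrank K h ≤ (finrank K L - finrank K h).choose 2 := by
  let m : LieSubmodule K h L :=
    LieAlgebra.InvariantForm.orthogonal B (fun x => hinv (x : L)) h.toLieSubmodule
  have hcompl : IsCompl h.toSubmodule m.toSubmodule := by
    refine (BilinForm.isCompl_orthogonal_iff_disjoint hsymm.isRefl).2 ?_
    exact Submodule.disjoint_def.2 fun x hx hx' => haniso x (hx' x hx)
  have hfaithful : LieModule.IsFaithful K h m := isFaithful_of_isCompl hh hcompl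
  let Bm : BilinForm K m := B.restrict m.toSubmodule
  have hBm_symm : Bm.IsSymm := hsymm.restrict _
  have hBm_nondeg : Bm.Nondegenerate :=
    hBm_symm.isRefl.nondegenerate_iff_separatingLeft.2 fun x hx =>
      Subtype.ext (haniso x (hx x))
  have hskew (x : h) : LieModule.toEnd K h m x ∈ Bm.skewAdjointSubmodule := by
    refine (LinearMap.mem_skewAdjointSubmodule _).2 fun y z => ?_
    exact (hinv (x : L) y z).trans (map_neg (B y) _).symm
  have hinj : Function.Injective ((LieModule.toEnd K h m).toLinearMap.codRestrict _ hskew) :=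
    fun x y hxy => hfaithful.injective_toEnd (congrArg Subtype.val hxy)
  have hfinrank : finrank K m = finrank K L - finrank K h :=
    Nat.eq_sub_of_add_eq' (Submodule.finrank_add_eq_of_isCompl hcompl)
  rw [← hfinrank]
  exact (LinearMap.finrank_le_finrank_of_injective hinj).trans
    (finrank_skewAdjointSubmodule_le_choose_two hBm_symm hBm_nondeg)

section SkewSingle

variable {ι : Type*} [Fintype ι] [DecidableEq ι]

section

variable {R : Type*} [CommRing R]

variable (R) in
/-- The elementary skew-symmetric matrix with entry `1` at `(p, q)` and `-1` at `(q, p)`. -/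
def skewSingle (p q : ι) : so ι R :=
  ⟨Matrix.single p q 1 - Matrix.single q p 1, by simp [Matrix.transpose_single]⟩

lemma coe_skewSingle (p q : ι) :
    (skewSingle R p q : Matrix ι ι R) = Matrix.single p q 1 - Matrix.single q p 1 := rfl

lemma skewSingle_apply (p q a b : ι) : (skewSingle R p q : Matrix ι ι R) a b =
    (if p = a ∧ q = b then 1 else 0) - if q = a ∧ p = b then 1 else 0 := by
  simp [coe_skewSingle, Matrix.single_apply]

lemma skewSingle_self (p : ι) : skewSingle R p p = 0 := Subtype.ext (sub_self _)

lemma neg_skewSingle (p q : ι) : -skewSingle R p q = skewSingle R q p :=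
  Subtype.ext (neg_sub _ _)

lemma lie_skewSingle_skewSingle {p q r : ι} (hpq : p ≠ q) (hqr : q ≠ r) (hpr : p ≠ r) :
    ⁅skewSingle R p q, skewSingle R q r⁆ = skewSingle R p r := by
  ext1
  simp [coe_skewSingle, Ring.lie_def, sub_mul, mul_sub, hpq, hqr, hpr, hpq.symm, hqr.symm, hpr.symm]

lemma skewSingle_mul_apply (p r : ι) (X : Matrix ι ι R) (a b : ι) :
    ((skewSingle R p r : Matrix ι ι R) * X) a b =
      (if a = p then X r b else 0) - if a = r then X p b else 0 := by
  simp [coe_skewSingle, sub_mul, Matrix.mul_apply, Matrix.single_apply, ite_and, eq_comm]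

lemma mul_skewSingle_apply (p r : ι) (X : Matrix ι ι R) (a b : ι) :
    (X * (skewSingle R p r : Matrix ι ι R)) a b =
      (if b = r then X a p else 0) - if b = p then X a r else 0 := by
  simp [coe_skewSingle, mul_sub, Matrix.mul_apply, Matrix.single_apply, ite_and, eq_comm]

lemma skewSingle_mem_of_mem_left {I : LieIdeal R (so ι R)} {p q : ι} (hpq : p ≠ q)
    (h : skewSingle R p q ∈ I) (r : ι) : skewSingle R p r ∈ I := by
  rcases eq_or_ne p r with rfl | hpr
  · simp [skewSingle_self]
  rcases eq_or_ne q r with rfl | hqr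
  · exact h
  rw [← lie_skewSingle_skewSingle hpq hqr hpr]
  exact lie_mem_left R _ I _ _ h

lemma skewSingle_mem_of_mem {I : LieIdeal R (so ι R)} {p q : ι} (hpq : p ≠ q)
    (h : skewSingle R p q ∈ I) (a b : ι) : skewSingle R a b ∈ I := by
  have hp := skewSingle_mem_of_mem_left hpq h
  rcases eq_or_ne p a with rfl | hpa
  · exact hp b
  · refine skewSingle_mem_of_mem_left hpa.symm ?_ b
    exact neg_skewSingle (R := R) p a ▸ neg_mem (hp a)

lemma two_smul_eq_sum_smul_skewSingle (X : so ι R) :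
    (2 : R) • X = ∑ a, ∑ b, (X : Matrix ι ι R) a b • skewSingle R a b := by
  ext i j
  have hij := so_apply_comm X i j
  simp only [SetLike.val_smul, Matrix.smul_apply, smul_eq_mul, two_mul,
    AddSubmonoidClass.coe_finsetSum, Matrix.sum_apply, skewSingle_apply, ite_and, mul_sub, mul_ite,
    mul_one, mul_zero, Finset.sum_sub_distrib, Finset.sum_ite_irrel, Finset.sum_ite_eq',
    Finset.mem_univ, ↓reduceIte, Finset.sum_const_zero]
  linear_combination hij

end

variable {K : Type*} [Field K] [NeZero (2 : K)]

-- `ad (skewSingle p r) ^ 2` is minus the projection onto the entries of `X` whose row and column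
-- are separated by `{p, r}`.
lemma lie_skewSingle_lie_skewSingle_apply {p r : ι} (hpr : p ≠ r) (X : so ι K) (a b : ι) :
    ((⁅skewSingle K p r, ⁅skewSingle K p r, X⁆⁆ : so ι K) : Matrix ι ι K) a b =
      if (a = p ∨ a = r) ↔ (b = p ∨ b = r) then 0 else -(X : Matrix ι ι K) a b := by
  have hXpr := so_apply_comm X p r
  have hXp := so_apply_self X p
  have hXr := so_apply_self X r
  simp only [LieSubalgebra.coe_bracket, Ring.lie_def, Matrix.sub_apply, mul_sub, sub_mul,
    skewSingle_mul_apply, mul_skewSingle_apply]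
  grind

-- Applying `ad (skewSingle e) ^ 2` for all `e ∈ S` isolates the entries separated by every `e ∈ S`.
lemma exists_mem_apply_eq_ite (I : LieIdeal K (so ι K)) {X : so ι K} (hX : X ∈ I)
    (S : Finset (ι × ι)) (hS : ∀ e ∈ S, e.1 ≠ e.2) :
    ∃ Y ∈ I, ∀ a b, (Y : Matrix ι ι K) a b =
      if ∀ e ∈ S, ¬((a = e.1 ∨ a = e.2) ↔ (b = e.1 ∨ b = e.2)) then (X : Matrix ι ι K) a b
      else 0 := by
  induction S using Finset.induction_on with
  | empty => exact ⟨X, hX, by simp⟩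
  | insert e S _ ih =>
    obtain ⟨Y, hY, hYX⟩ := ih fun f hf => hS f (Finset.mem_insert_of_mem hf)
    refine ⟨-⁅skewSingle K e.1 e.2, ⁅skewSingle K e.1 e.2, Y⁆⁆,
      neg_mem (lie_mem_right K _ I _ _ (lie_mem_right K _ I _ _ hY)), fun a b => ?_⟩
    have hY_lie := lie_skewSingle_lie_skewSingle_apply (hS e (Finset.mem_insert_self e S)) Y a b
    simp only [NegMemClass.coe_neg, Matrix.neg_apply, hY_lie, hYX, Finset.forall_mem_insert]
    split_ifs <;> simp_all

-- A pair `{a, b}` disjoint from `{p, q}` is only left unseparated by some `{s, r}` because there is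
-- a fifth index `r`.
lemma forall_separates_iff {p q a b : ι} (hcard : Fintype.card ι ≠ 4) (hpq : p ≠ q) (hab : a ≠ b) :
    (∀ s ∈ ({p, q} : Finset ι), ∀ r ∉ ({p, q} : Finset ι),
      ¬((a = s ∨ a = r) ↔ (b = s ∨ b = r))) ↔ (p = a ∧ q = b) ∨ (q = a ∧ p = b) := by
  simp only [Finset.mem_insert, Finset.mem_singleton]
  refine ⟨fun h => ?_, by grind⟩
  by_cases ha : a = p ∨ a = q
  · by_cases hb : b = p ∨ b = q
    · grind
    · exact (h a ha b hb (by simp)).elim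
  · by_cases hb : b = p ∨ b = q
    · exact (h b hb a ha (by simp)).elim
    · have hcard_four : ({p, q, a, b} : Finset ι).card = 4 := by grind
      obtain ⟨r, hr⟩ : ∃ r, r ∉ ({p, q, a, b} : Finset ι) := by
        by_contra! hall
        rw [← Finset.eq_univ_iff_forall, ← Finset.card_eq_iff_eq_univ] at hall
        exact hcard (hall.symm.trans hcard_four)
      simp only [Finset.mem_insert, Finset.mem_singleton, not_or] at hr ha hb
      exact (h p (.inl rfl) r (by tauto)
        (by simp [ha, hb, Ne.symm hr.2.2.1, Ne.symm hr.2.2.2])).elim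

lemma skewSingle_mem_of_apply_ne_zero (hcard : Fintype.card ι ≠ 4) {I : LieIdeal K (so ι K)}
    {X : so ι K} (hX : X ∈ I) {p q : ι} (hpq : (X : Matrix ι ι K) p q ≠ 0) :
    skewSingle K p q ∈ I := by
  have hne : p ≠ q := by
    rintro rfl
    exact hpq (so_apply_self X p)
  obtain ⟨Y, hY, hYX⟩ := exists_mem_apply_eq_ite I hX ({p, q} ×ˢ {p, q}ᶜ)
    fun e he heq => Finset.mem_compl.1 (Finset.mem_product.1 he).2
      (heq ▸ (Finset.mem_product.1 he).1)
  simp only [Finset.mem_product, Finset.mem_compl, and_imp, Prod.forall,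
    forall_comm (β := _ ∈ _)] at hYX
  have hY_eq : Y = (X : Matrix ι ι K) p q • skewSingle K p q := by
    ext a b
    rcases eq_or_ne a b with rfl | hab
    · rw [so_apply_self, so_apply_self]
    have hXpq := so_apply_comm X p q
    simp only [hYX, forall_separates_iff hcard hne hab, SetLike.val_smul, Matrix.smul_apply,
      skewSingle_apply, smul_eq_mul]
    grind
  exact (I.smul_mem_iff hpq).1 (hY_eq ▸ hY)

theorem isIrreducible_so [Nontrivial ι] (hcard : Fintype.card ι ≠ 4) :
    LieModule.IsIrreducible K (so ι K) (so ι K) := by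
  obtain ⟨i, j, hij⟩ := exists_pair_ne ι
  have hij_ne : skewSingle K i j ≠ 0 := fun h => by
    simpa [skewSingle_apply, hij.symm] using congrFun₂ (congrArg Subtype.val h) i j
  have : Nontrivial (so ι K) := nontrivial_of_ne _ _ hij_ne
  refine .mk fun I hI => eq_top_iff.2 fun Y _ => ?_
  obtain ⟨X, hX, hX_ne⟩ : ∃ X ∈ I, X ≠ 0 := by
    simpa [LieSubmodule.eq_bot_iff] using hI
  obtain ⟨p, q, hpq⟩ : ∃ p q, (X : Matrix ι ι K) p q ≠ 0 := by
    by_contra! hzero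
    exact hX_ne (Subtype.ext (Matrix.ext hzero))
  have hne : p ≠ q := by
    rintro rfl
    exact hpq (so_apply_self X p)
  have hmem := skewSingle_mem_of_mem hne (skewSingle_mem_of_apply_ne_zero hcard hX hpq)
  refine (I.smul_mem_iff (two_ne_zero (α := K))).1 ?_
  rw [two_smul_eq_sum_smul_skewSingle]
  exact sum_mem fun a _ => sum_mem fun b _ => I.smul_mem _ (hmem a b)

end SkewSingle

section TraceForm

variable {ι : Type*} [Fintype ι] [DecidableEq ι] {R : Type*} [CommRing R]

variable (ι R) in
/-- The bilinear form `(X, Y) ↦ trace (X * Y)` on skew-symmetric matrices. -/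
def soTraceForm : BilinForm R (so ι R) :=
  BilinForm.restrict ((LinearMap.mul R (Matrix ι ι R)).compr₂ (Matrix.traceLinearMap ι R R))
    (so ι R).toSubmodule

lemma soTraceForm_apply (X Y : so ι R) :
    soTraceForm ι R X Y = ((X : Matrix ι ι R) * (Y : Matrix ι ι R)).trace := rfl

lemma isSymm_soTraceForm : (soTraceForm ι R).IsSymm :=
  ⟨fun X Y => Matrix.trace_mul_comm (X : Matrix ι ι R) Y⟩

lemma lieInvariant_soTraceForm : (soTraceForm ι R).lieInvariant (so ι R) := fun X Y Z => by
  simp only [soTraceForm_apply, LieSubalgebra.coe_bracket, Ring.lie_def, sub_mul, mul_sub,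
    Matrix.trace_sub, ← mul_assoc, neg_sub, Matrix.trace_mul_cycle (X : Matrix ι ι R)]
  exact congrArg (· - _) (Matrix.trace_mul_cycle _ _ _)

lemma eq_zero_of_soTraceForm_self_eq_zero {X : so ι ℝ} (hX : soTraceForm ι ℝ X X = 0) : X = 0 := by
  refine Subtype.ext (Matrix.trace_conjTranspose_mul_self_eq_zero_iff.1 ?_)
  rw [Matrix.conjTranspose_eq_transpose_of_trivial, (mem_so ι ℝ _).1 X.2, neg_mul, Matrix.trace_neg,
    ← soTraceForm_apply, hX, neg_zero]

end TraceForm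

theorem finrank_le_choose_two_of_ne_top_so {n : ℕ} (hn : n ≠ 4)
    {h : LieSubalgebra ℝ (so (Fin n) ℝ)} (hh : h ≠ ⊤) :
    finrank ℝ h ≤ (n - 1).choose 2 := by
  by_contra! hlt
  have hpascal : n.choose 2 = (n - 1) + (n - 1).choose 2 := by
    cases n <;> simp [Nat.choose_succ_succ' _ 1]
  have hso := finrank_so_le_choose_two (K := ℝ) n
  have hle : finrank ℝ h ≤ finrank ℝ (so (Fin n) ℝ) := Submodule.finrank_le h.toSubmodule
  have : Nontrivial (Fin n) := Fin.nontrivial_iff_two_le.2 (by omega)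
  have : LieModule.IsIrreducible ℝ (so (Fin n) ℝ) (so (Fin n) ℝ) :=
    isIrreducible_so (by simpa using hn)
  have hcodim := finrank_le_choose_two_of_ne_top (B := soTraceForm (Fin n) ℝ) isSymm_soTraceForm
    lieInvariant_soTraceForm (fun _ hX => eq_zero_of_soTraceForm_self_eq_zero hX) hh
  exact hlt.not_ge (hcodim.trans (Nat.choose_le_choose 2 (by omega)))

theorem eq_so_of_le {n : ℕ} (hn : n ≠ 4)
    {h : LieSubalgebra ℝ (Matrix (Fin n) (Fin n) ℝ)} (hle : h ≤ so (Fin n) ℝ)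
    (hfinrank : (n - 1).choose 2 < finrank ℝ h) : h = so (Fin n) ℝ := by
  let h' : LieSubalgebra ℝ (so (Fin n) ℝ) := h.comap (so (Fin n) ℝ).incl
  have hfinrank_comap : finrank ℝ h' = finrank ℝ h :=
    (Submodule.comapSubtypeEquivOfLe hle).finrank_eq
  have htop : h' = ⊤ := by
    by_contra hh'
    exact hfinrank.not_ge (hfinrank_comap ▸ finrank_le_choose_two_of_ne_top_so hn hh')
  refine le_antisymm hle fun X hX => ?_
  have hX' : (⟨X, hX⟩ : so (Fin n) ℝ) ∈ h' := htop ▸ LieSubalgebra.mem_top _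
  exact hX'

section OrthogonalGroup

variable {ι : Type*} [Fintype ι] [DecidableEq ι]

variable (ι) in
/-- Orthogonal matrices, identified with the linear isometries of Euclidean space. -/
noncomputable def orthogonalGroupEquivLinearIsometryEquiv :
    Matrix.orthogonalGroup ι ℝ ≃* (EuclideanSpace ℝ ι ≃ₗᵢ[ℝ] EuclideanSpace ℝ ι) :=
  (Unitary.mapEquiv ⟨Matrix.toEuclideanCLM (𝕜 := ℝ) (n := ι), map_star _⟩).toMulEquiv.trans
    Unitary.linearIsometryEquiv

lemma det_orthogonalGroupEquivLinearIsometryEquiv (A : Matrix.orthogonalGroup ι ℝ) :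
    LinearMap.det (orthogonalGroupEquivLinearIsometryEquiv ι A).toLinearMap =
      (A : Matrix ι ι ℝ).det :=
  (congrArg (fun e => LinearMap.det (e A.1)) Matrix.toEuclideanLin_eq_toLin_orthonormal).trans
    (LinearMap.det_toLin _ _)

/-- The Householder matrix of `v`, i.e. the matrix of the reflection in the hyperplane orthogonal
to `v`. It is the identity when `v = 0`. -/
noncomputable def householder (v : EuclideanSpace ℝ ι) : Matrix.orthogonalGroup ι ℝ :=
  (orthogonalGroupEquivLinearIsometryEquiv ι).symm (ℝ ∙ v)ᗮ.reflection

lemma householder_mul_self (v : EuclideanSpace ℝ ι) : householder v * householder v = 1 := by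
  rw [householder, ← map_mul, Submodule.reflection_mul_reflection, map_one]

lemma det_householder {v : EuclideanSpace ℝ ι} (hv : v ≠ 0) :
    (householder v : Matrix ι ι ℝ).det = -1 := by
  rw [← det_orthogonalGroupEquivLinearIsometryEquiv, householder, MulEquiv.apply_symm_apply,
    Submodule.det_reflection, Submodule.orthogonal_orthogonal, finrank_span_singleton hv, pow_one]

lemma closure_range_householder :
    Subgroup.closure (range (householder (ι := ι))) = ⊤ := by
  have h := congrArg (Subgroup.map (orthogonalGroupEquivLinearIsometryEquiv ι).symm.toMonoidHom)
    (LinearIsometryEquiv.reflections_generate (F := EuclideanSpace ℝ ι))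
  rw [MonoidHom.map_closure, ← range_comp, Subgroup.map_top_of_surjective _
    (orthogonalGroupEquivLinearIsometryEquiv ι).symm.surjective] at h
  exact h

lemma coe_householder (v : EuclideanSpace ℝ ι) :
    (householder v : Matrix ι ι ℝ) = 1 - (2 / ‖v‖ ^ 2) • Matrix.vecMulVec v v := by
  refine EquivLike.injective (Matrix.toEuclideanCLM (𝕜 := ℝ) (n := ι))
    (ContinuousLinearMap.ext fun x => ?_)
  have hreflection : Matrix.toEuclideanCLM (𝕜 := ℝ) (householder v : Matrix ι ι ℝ) x =
      (ℝ ∙ v)ᗮ.reflection x :=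
    congrArg (· x) ((orthogonalGroupEquivLinearIsometryEquiv ι).apply_symm_apply
      (ℝ ∙ v)ᗮ.reflection)
  have hinner : inner ℝ v x = v.ofLp ⬝ᵥ x.ofLp := by
    simp [EuclideanSpace.inner_eq_star_dotProduct, dotProduct_comm]
  rw [hreflection, Submodule.reflection_orthogonal_apply, Submodule.reflection_singleton_apply]
  ext i
  simp only [map_sub, map_one, map_smul, hinner, sub_apply, one_apply_eq_self, smul_apply,
    PiLp.sub_apply, PiLp.smul_apply, Pi.smul_apply, Real.ringHom_apply, Matrix.ofLp_toEuclideanCLM,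
    Matrix.vecMulVec_mulVec, smul_eq_mul, nsmul_eq_mul, Nat.cast_ofNat, neg_sub, sub_right_inj,
    MulOpposite.smul_eq_mul_unop, MulOpposite.unop_op]
  ring

lemma householder_zero : householder (0 : EuclideanSpace ℝ ι) = 1 :=
  Subtype.ext (by simp [coe_householder])

lemma continuousOn_householder : ContinuousOn (householder (ι := ι)) {0}ᶜ := by
  refine Topology.IsInducing.subtypeVal.continuousOn_iff.2 ?_
  simp only [Function.comp_def, coe_householder]
  have hscalar : ContinuousOn (fun v : EuclideanSpace ℝ ι => 2 / ‖v‖ ^ 2) {0}ᶜ :=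
    continuousOn_const.div (by fun_prop) fun v hv => by simpa using hv
  have hvecMulVec : Continuous fun v : EuclideanSpace ℝ ι => Matrix.vecMulVec v v :=
    .matrix_vecMulVec (by fun_prop) (by fun_prop)
  exact continuousOn_const.sub (hscalar.smul hvecMulVec.continuousOn)

lemma householder_mul_householder_mem_of_isOpen [Nontrivial ι]
    {U : Subgroup (Matrix.orthogonalGroup ι ℝ)} (hU : IsOpen (U : Set (Matrix.orthogonalGroup ι ℝ)))
    {u v : EuclideanSpace ℝ ι} (hu : u ≠ 0) (hv : v ≠ 0) : householder u * householder v ∈ U := by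
  have hrank : 1 < Module.rank ℝ (EuclideanSpace ℝ ι) := by
    rw [← finrank_eq_rank, finrank_euclideanSpace]
    exact_mod_cast Fintype.one_lt_card
  have hpreconn : IsPreconnected ((householder u * householder ·) '' {0}ᶜ) :=
    (isConnected_compl_singleton_of_one_lt_rank hrank 0).isPreconnected.image _
      (continuousOn_const.mul continuousOn_householder)
  refine hpreconn.subset_isClopen ⟨U.isClosed_of_isOpen hU, hU⟩ ⟨1, ⟨u, hu, ?_⟩, U.one_mem⟩
    ⟨v, hv, rfl⟩
  exact householder_mul_self u

lemma mem_of_isOpen_of_det_eq_one [Nontrivial ι] {U : Subgroup (Matrix.orthogonalGroup ι ℝ)}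
    (hU : IsOpen (U : Set (Matrix.orthogonalGroup ι ℝ))) {A : Matrix.orthogonalGroup ι ℝ}
    (hA : (A : Matrix ι ι ℝ).det = 1) : A ∈ U := by
  obtain ⟨e, he⟩ := exists_ne (0 : EuclideanSpace ℝ ι)
  let P (B : Matrix.orthogonalGroup ι ℝ) : Prop :=
    (B : Matrix ι ι ℝ).det = 1 ∧ B ∈ U ∨ (B : Matrix ι ι ℝ).det = -1 ∧ householder e * B ∈ U
  have hstep (v : EuclideanSpace ℝ ι) (B : Matrix.orthogonalGroup ι ℝ) (hB : P B) :
      P (householder v * B) := by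
    rcases eq_or_ne v 0 with rfl | hv
    · rwa [householder_zero, one_mul]
    have hdet : (householder v * B : Matrix ι ι ℝ).det = -(B : Matrix ι ι ℝ).det := by
      rw [Matrix.det_mul, det_householder hv, neg_one_mul]
    rcases hB with ⟨hB, hBU⟩ | ⟨hB, hBU⟩
    · refine .inr ⟨hdet.trans (by rw [hB]), ?_⟩
      rw [← mul_assoc]
      exact U.mul_mem (householder_mul_householder_mem_of_isOpen hU he hv) hBU
    · refine .inl ⟨hdet.trans (by rw [hB, neg_neg]), ?_⟩
      have h := U.mul_mem (householder_mul_householder_mem_of_isOpen hU hv he) hBU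
      rwa [mul_assoc, ← mul_assoc _ _ B, householder_mul_self, one_mul] at h
  have hP (B : Matrix.orthogonalGroup ι ℝ) : P B := by
    have hmem := Subgroup.mem_top B
    rw [← closure_range_householder] at hmem
    induction hmem using Subgroup.closure_induction_left with
    | one => exact .inl ⟨Matrix.det_one, U.one_mem⟩
    | mul_left _ hx B _ hB => obtain ⟨v, rfl⟩ := hx; exact hstep v B hB
    | inv_mul_cancel _ hx B _ hB =>
      obtain ⟨v, rfl⟩ := hx
      rw [inv_eq_of_mul_eq_one_left (householder_mul_self v)]
      exact hstep v B hB
  rcases hP A with ⟨-, hAU⟩ | ⟨hdet, -⟩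
  · exact hAU
  · norm_num [hA] at hdet

lemma det_eq_one_of_isPreconnected {H : Subgroup (Matrix.orthogonalGroup ι ℝ)}
    (hH : IsPreconnected (H : Set (Matrix.orthogonalGroup ι ℝ))) {A : Matrix.orthogonalGroup ι ℝ}
    (hA : A ∈ H) : (A : Matrix ι ι ℝ).det = 1 := by
  have hcont : Continuous fun B : Matrix.orthogonalGroup ι ℝ => (B : Matrix ι ι ℝ).det :=
    continuous_subtype_val.matrix_det
  have hdet (B : Matrix.orthogonalGroup ι ℝ) : (B : Matrix ι ι ℝ).det ∈ ({1, -1} : Set ℝ) :=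
    mul_self_eq_one_iff.1 (Unitary.coe_star_mul_self ⟨_, Matrix.det_of_mem_unitary B.2⟩)
  rw [← Matrix.det_one (n := ι) (R := ℝ)]
  exact (toFinite {1, -1}).countable.isTotallyDisconnected _ (image_subset_iff.2 fun B _ => hdet B)
    (hH.image _ hcont.continuousOn) (mem_image_of_mem _ hA) (mem_image_of_mem _ H.one_mem)

end OrthogonalGroup

section Dimension

open scoped Matrix.Norms.L2Operator

lemma orthSubgroupDim_eq_dimH_image_coe {n : ℕ} (H : Subgroup (Matrix.orthogonalGroup (Fin n) ℝ)) :
    orthSubgroupDim n H = dimH ((↑) '' (H : Set (Matrix.orthogonalGroup (Fin n) ℝ)) :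
      Set (Matrix (Fin n) (Fin n) ℝ)) := by
  rw [← (Matrix.ofLinearEquiv ℝ).symm.toContinuousLinearEquiv.dimH_image, image_image]
  rfl

lemma skewAdjoint_submodule_eq_so (ι : Type*) [Fintype ι] [DecidableEq ι] :
    skewAdjoint.submodule ℝ (Matrix ι ι ℝ) = (so ι ℝ).toSubmodule :=
  Submodule.ext fun X => (mem_so ι ℝ X).symm

theorem isOpen_of_choose_two_lt_orthSubgroupDim {n : ℕ} (hn : n ≠ 4)
    {H : Subgroup (Matrix.orthogonalGroup (Fin n) ℝ)}
    (hclosed : IsClosed (H : Set (Matrix.orthogonalGroup (Fin n) ℝ)))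
    (hdim : (n - 1).choose 2 < orthSubgroupDim n H) :
    IsOpen (H : Set (Matrix.orthogonalGroup (Fin n) ℝ)) := by
  let G : ClosedSubgroup (unitary (Matrix (Fin n) (Fin n) ℝ)) := ⟨H, hclosed⟩
  let 𝔤 := tangentLieAlgebra (closedSubgroupUnits G)
  have hle : 𝔤 ≤ so (Fin n) ℝ :=
    (tangentSpace_le_skewAdjoint G).trans (skewAdjoint_submodule_eq_so _).le
  have hfinrank : (n - 1).choose 2 < finrank ℝ 𝔤 := by
    rw [orthSubgroupDim_eq_dimH_image_coe] at hdim
    exact_mod_cast hdim.trans_le (dimH_image_coe_le_finrank_tangentSpace G)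
  exact isOpen_of_skewAdjoint_le_tangentSpace (H := G) <|
    (skewAdjoint_submodule_eq_so _).trans_le (eq_so_of_le hn hle hfinrank).ge

end Dimension

/-- For `n ≥ 2`, `n ≠ 4`, the only proper closed connected subgroup of `O(n, ℝ)` of
dimension at least `(n-1)(n-2)/2 + 1` is `SO(n, ℝ)`. -/
theorem stmt_11 {n : ℕ} (hn : 2 ≤ n) (hn4 : n ≠ 4)
    (H : Subgroup ↥(Matrix.orthogonalGroup (Fin n) ℝ))
    (hne : H ≠ ⊤)
    (hclosed : IsClosed (H : Set ↥(Matrix.orthogonalGroup (Fin n) ℝ)))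
    (hconn : IsConnected (H : Set ↥(Matrix.orthogonalGroup (Fin n) ℝ)))
    (hdim : (((n - 1) * (n - 2) / 2 + 1 : ℕ) : ℝ≥0∞) ≤ orthSubgroupDim n H) :
    (H : Set ↥(Matrix.orthogonalGroup (Fin n) ℝ)) =
      {A : ↥(Matrix.orthogonalGroup (Fin n) ℝ) | (A : Matrix (Fin n) (Fin n) ℝ) ∈ Matrix.specialOrthogonalGroup (Fin n) ℝ} := by
  have : Nontrivial (Fin n) := Fin.nontrivial_iff_two_le.2 hn
  have hchoose : ((n - 1).choose 2 : ℝ≥0∞) < orthSubgroupDim n H := by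
    rw [Nat.choose_two_right]
    exact (Nat.cast_lt.2 (Nat.lt_succ_self _)).trans_le hdim
  have hopen := isOpen_of_choose_two_lt_orthSubgroupDim hn4 hclosed hchoose
  ext A
  exact ⟨fun hA => ⟨A.2, det_eq_one_of_isPreconnected hconn.isPreconnected hA⟩,
    fun hA => mem_of_isOpen_of_det_eq_one hopen hA.2⟩
end

section
/- Let H be a connected closed subgroup of the unitary group U(N) with N ≥ 2 and dim H ≥ N² - 2N + 2. Then H = U(N), or H = SU(N), or H is conjugate in U(N) to the block-diagonal subgroup U(N-1) × U(1), or N = 4 and H is conjugate in U(4) to Sp(2) or to e^{iℝ}·Sp(2). -/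
open scoped ENNReal

/-- The dimension of a subgroup of the unitary group `U(N)`, measured as the Hausdorff
dimension of its underlying set of matrices. -/
noncomputable def unitarySubgroupDim (N : ℕ) (H : Subgroup ↥(Matrix.unitaryGroup (Fin N) ℂ)) :
    ℝ≥0∞ :=
  dimH ((fun A : ↥(Matrix.unitaryGroup (Fin N) ℂ) =>
    fun i j : Fin N => (A : Matrix (Fin N) (Fin N) ℂ) i j) ''
      (H : Set ↥(Matrix.unitaryGroup (Fin N) ℂ)))

/-- The block-diagonal subgroup `U(N-1) × U(1)` of `U(N)` (with respect to splitting off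
the last coordinate), as a set. -/
def blockDiagSet (N : ℕ) : Set ↥(Matrix.unitaryGroup (Fin N) ℂ) :=
  {A : ↥(Matrix.unitaryGroup (Fin N) ℂ) | ∀ i j : Fin N,
    ¬(((i : ℕ) = N - 1) ↔ ((j : ℕ) = N - 1)) → (A : Matrix (Fin N) (Fin N) ℂ) i j = 0}

/-- The standard symplectic form on `ℂ^N` (for `N = 4` this is the form defining
`Sp(2) ⊂ U(4)`). -/
def symplJ (N : ℕ) : Matrix (Fin N) (Fin N) ℂ :=
  Matrix.of fun i j : Fin N =>
    if (j : ℕ) = (i : ℕ) + N / 2 then 1 else if (i : ℕ) = (j : ℕ) + N / 2 then -1 else 0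

/-- The compact symplectic group `Sp(2) ⊂ U(4)` (matrices preserving the symplectic form),
as a set; for general `N` this is the set of unitary matrices `A` with `Aᵀ J A = J`. -/
def spSet (N : ℕ) : Set ↥(Matrix.unitaryGroup (Fin N) ℂ) :=
  {A : ↥(Matrix.unitaryGroup (Fin N) ℂ) |
    Matrix.transpose (A : Matrix (Fin N) (Fin N) ℂ) * symplJ N * (A : Matrix (Fin N) (Fin N) ℂ) = symplJ N}

/-- The set `e^{iℝ}·Sp(2)` of unit-scalar multiples of elements of `Sp(2)`. -/
def eSpSet (N : ℕ) : Set ↥(Matrix.unitaryGroup (Fin N) ℂ) :=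
  {B : ↥(Matrix.unitaryGroup (Fin N) ℂ) | ∃ t : ℝ, ∃ A ∈ spSet N,
    (B : Matrix (Fin N) (Fin N) ℂ) =
      Complex.exp (t * Complex.I) • (A : Matrix (Fin N) (Fin N) ℂ)}

/-!
The complexified Lie algebra `g` of `H` is closed under conjugate transpose and has complex
codimension at most `2N - 2` in the `N × N` matrices.

If `g` preserves a proper nonzero subspace, it also preserves the orthogonal complement, and the
dimension forces one of the two to be a line and `g` to be the commutant of the projection onto it.

If `g` is irreducible, Krull's height theorem on the Segre cone of matrices of rank at most one,
whose dimension `2N - 1` exceeds the codimension of `g`, provides a nonzero `u v*` in `g`. If it is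
not nilpotent, `g` contains everything. If all such elements are nilpotent, either `g` contains the
traceless matrices, or every `y v*` has an essentially unique completion `y v* + u r(y)` in `g`. In
the latter case `r` defines a symplectic form `J` with `sp(J) ≤ g ≤ sp(J) + ℂ`, and comparing
dimensions gives `N = 4`.

Each possible `g` determines `H`, as a connected closed subgroup of a unitary group is generated by
any neighbourhood of the identity.
-/

namespace UnitaryClassification

open Module NormedSpace

attribute [local instance] LieRing.ofAssociativeRing

/-! ### Lie algebras of closed unitary subgroups -/

section TangentCone

lemma mem_tangentConeAt_of_hasDerivAt {E : Type*} [NormedAddCommGroup E] [NormedSpace ℝ E]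
    {γ : ℝ → E} {v : E} {t : ℝ} {s : Set E} (hγ : HasDerivAt γ v t) (hs : ∀ u, γ u ∈ s) :
    v ∈ tangentConeAt ℝ s (γ t) := by
  have hmaps := hγ.hasFDerivAt.hasFDerivWithinAt (s := Set.univ) |>.mapsTo_tangent_cone
  have hv := hmaps (x := 1) (by simp [tangentConeAt_univ])
  rw [ContinuousLinearMap.toSpanSingleton_apply, one_smul] at hv
  exact tangentConeAt_mono (Set.image_subset_iff.2 fun u _ ↦ hs u) hv

lemma tangentConeAt_submodule_subset {E : Type*} [NormedAddCommGroup E] [NormedSpace ℝ E]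
    {W : Submodule ℝ E} (hW : IsClosed (W : Set E)) {x : E} (hx : x ∈ W) :
    tangentConeAt ℝ (W : Set E) x ⊆ W := by
  intro y hy
  obtain ⟨_, l, _, c, d, -, hd, hcd⟩ := exists_fun_of_mem_tangentConeAt hy
  refine hW.mem_of_tendsto hcd (hd.mono fun n hn ↦ ?_)
  exact W.smul_mem _ ((W.add_mem_iff_right hx).1 hn)

lemma smul_mem_tangentConeAt {E : Type*} [NormedAddCommGroup E] [NormedSpace ℝ E]
    {s : Set E} {x y : E} (hy : y ∈ tangentConeAt ℝ s x) (t : ℝ) :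
    t • y ∈ tangentConeAt ℝ s x := by
  obtain ⟨_, l, _, c, d, hd₀, hd, hcd⟩ := exists_fun_of_mem_tangentConeAt hy
  refine mem_tangentConeAt_of_seq l (fun n ↦ t * c n) d hd₀ hd ?_
  simpa only [mul_smul] using hcd.const_smul t

end TangentCone

section BanachAlgebra

open Topology

variable {A : Type*} [NormedRing A] [NormedAlgebra ℝ A] [CompleteSpace A]

lemma exp_mul_exp_neg (x : A) : exp x * exp (-x) = 1 := by
  let _ : NormedAlgebra ℚ A := NormedAlgebra.restrictScalars ℚ ℝ A
  rw [← exp_add_of_commute (Commute.refl x).neg_right, add_neg_cancel, exp_zero]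

lemma exp_neg_mul_exp (x : A) : exp (-x) * exp x = 1 := by
  simpa only [neg_neg] using exp_mul_exp_neg (-x)

lemma hasDerivAt_exp_smul_zero (x : A) : HasDerivAt (fun t : ℝ ↦ exp (t • x)) x 0 := by
  simpa using hasDerivAt_exp_smul_const (𝕂 := ℝ) x 0

/- The inverse function theorem provides a local logarithm `L` with derivative `1` at `1`, and `L`
carries tangent vectors of `K` at `1` to tangent vectors of `exp ⁻¹' K` at `0`. -/
lemma tangentConeAt_one_subset_tangentConeAt_preimage_exp (K : Set A) :
    tangentConeAt ℝ K 1 ⊆ tangentConeAt ℝ (exp ⁻¹' K) 0 := by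
  have hexp : HasStrictFDerivAt exp ((ContinuousLinearEquiv.refl ℝ A : A ≃L[ℝ] A) : A →L[ℝ] A) 0 :=
    hasStrictFDerivAt_exp_zero
  set L := hexp.localInverse
  have hL : HasFDerivAt L (ContinuousLinearMap.id ℝ A) 1 := by
    simpa only [exp_zero] using! hexp.to_localInverse.hasFDerivAt
  have hL1 : L 1 = 0 := by simpa only [exp_zero] using hexp.localInverse_apply_image
  have hinv : {a | exp (L a) = a} ∈ 𝓝 (1 : A) := by
    simpa only [exp_zero] using! hexp.eventually_right_inverse
  intro X hX
  rw [← tangentConeAt_inter_nhds hinv] at hX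
  have hLX := hL.hasFDerivWithinAt.mapsTo_tangent_cone hX
  rw [hL1] at hLX
  refine tangentConeAt_mono ?_ hLX
  rintro _ ⟨a, ⟨haK, ha⟩, rfl⟩
  rwa [Set.mem_preimage, ha]

lemma hasStrictFDerivAt_exp_mul_exp_sub (p : A →L[ℝ] A) :
    HasStrictFDerivAt (fun z ↦ exp (p z) * exp (z - p z)) (ContinuousLinearMap.id ℝ A) 0 := by
  have hcomp (q : A →L[ℝ] A) : HasStrictFDerivAt (fun z ↦ exp (q z)) q 0 := by
    have hexp : HasStrictFDerivAt exp (1 : A →L[ℝ] A) (q 0) := by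
      rw [map_zero]
      exact hasStrictFDerivAt_exp_zero
    exact hexp.comp (0 : A) q.hasStrictFDerivAt
  convert! (hcomp p).mul' (hcomp (ContinuousLinearMap.id ℝ A - p)) using 1
  ext z
  simp

end BanachAlgebra

section ClosedSubgroup

open Filter Topology

variable {A : Type*} [CStarAlgebra A]

/-- `K` is a closed subgroup of the unitary group of a C⋆-algebra, encoded as a submonoid of the
algebra consisting of unitary elements and stable under `star`, which is the inverse there. -/
structure IsClosedUnitarySubgroup (K : Submonoid A) : Prop where
  le_unitary : K ≤ unitary A
  star_mem : ∀ {a}, a ∈ K → star a ∈ K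
  isClosed : IsClosed (K : Set A)

namespace IsClosedUnitarySubgroup

variable {K : Submonoid A}

lemma exp_zsmul_mem (hK : IsClosedUnitarySubgroup K) {X : A} (hX : exp X ∈ K) (m : ℤ) :
    exp (m • X) ∈ K := by
  let _ : NormedAlgebra ℚ A := NormedAlgebra.restrictScalars ℚ ℝ A
  have hneg : exp (-X) ∈ K := by
    rw [← left_inv_eq_right_inv (Unitary.star_mul_self_of_mem (hK.le_unitary hX))
      (exp_mul_exp_neg X)]
    exact hK.star_mem hX
  obtain ⟨k, rfl | rfl⟩ := m.eq_nat_or_neg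
  · rw [natCast_zsmul, exp_nsmul]
    exact pow_mem hX k
  · rw [neg_smul, ← smul_neg, natCast_zsmul, exp_nsmul]
    exact pow_mem hneg k

/- If `c • d → X` with `d → 0` and `exp d ∈ K`, then `⌊c⌋ • d → X` as well, and
`exp (⌊c⌋ • d) = (exp d) ^ ⌊c⌋ ∈ K`. -/
lemma exp_mem_of_mem_tangentConeAt (hK : IsClosedUnitarySubgroup K) {X : A}
    (hX : X ∈ tangentConeAt ℝ (K : Set A) 1) : exp X ∈ K := by
  let _ : NormedAlgebra ℚ A := NormedAlgebra.restrictScalars ℚ ℝ A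
  obtain ⟨_, l, _, c, d, hd₀, hd, hcd⟩ := exists_fun_of_mem_tangentConeAt
    (tangentConeAt_one_subset_tangentConeAt_preimage_exp (K : Set A) hX)
  have hfract : Tendsto (fun n ↦ Int.fract (c n) • d n) l (𝓝 0) := by
    refine squeeze_zero_norm (fun n ↦ ?_) (tendsto_zero_iff_norm_tendsto_zero.1 hd₀)
    rw [norm_smul, Real.norm_of_nonneg (Int.fract_nonneg _)]
    exact mul_le_of_le_one_left (norm_nonneg _) (Int.fract_lt_one _).le
  have hfloor : Tendsto (fun n ↦ ⌊c n⌋ • d n) l (𝓝 X) := by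
    rw [← sub_zero X]
    refine (hcd.sub hfract).congr fun n ↦ ?_
    rw [← sub_smul, Int.self_sub_fract, Int.cast_smul_eq_zsmul]
  refine hK.isClosed.mem_of_tendsto ((exp_continuous.tendsto X).comp hfloor) ?_
  filter_upwards [hd] with n hn
  rw [zero_add] at hn
  exact hK.exp_zsmul_mem hn _

lemma mem_tangentConeAt_iff (hK : IsClosedUnitarySubgroup K) {X : A} :
    X ∈ tangentConeAt ℝ (K : Set A) 1 ↔ ∀ t : ℝ, exp (t • X) ∈ K := by
  refine ⟨fun hX t ↦ hK.exp_mem_of_mem_tangentConeAt (smul_mem_tangentConeAt hX t), fun hX ↦ ?_⟩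
  simpa using mem_tangentConeAt_of_hasDerivAt (hasDerivAt_exp_smul_zero X) hX

/-- The Lie algebra of `K`, as the tangent space of `K` at the identity. -/
def tangentSpace (hK : IsClosedUnitarySubgroup K) : Submodule ℝ A where
  carrier := tangentConeAt ℝ (K : Set A) 1
  zero_mem' := zero_mem_tangentConeAt (subset_closure K.one_mem)
  smul_mem' t _ hX := smul_mem_tangentConeAt hX t
  add_mem' {X Y} hX hY := by
    rw [hK.mem_tangentConeAt_iff] at hX hY
    have hderiv := (hasDerivAt_exp_smul_zero X).mul (hasDerivAt_exp_smul_zero Y)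
    simpa using mem_tangentConeAt_of_hasDerivAt hderiv fun t ↦ K.mul_mem (hX t) (hY t)

lemma mem_tangentSpace (hK : IsClosedUnitarySubgroup K) {X : A} :
    X ∈ hK.tangentSpace ↔ ∀ t : ℝ, exp (t • X) ∈ K :=
  hK.mem_tangentConeAt_iff

lemma isClosed_tangentSpace (hK : IsClosedUnitarySubgroup K) :
    IsClosed (hK.tangentSpace : Set A) := by
  let _ : NormedAlgebra ℚ A := NormedAlgebra.restrictScalars ℚ ℝ A
  have hinter : (hK.tangentSpace : Set A) = ⋂ t : ℝ, (fun X : A ↦ exp (t • X)) ⁻¹' K := by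
    ext X
    simp only [SetLike.mem_coe, mem_tangentSpace, Set.mem_iInter, Set.mem_preimage]
  rw [hinter]
  exact isClosed_iInter fun t ↦
    hK.isClosed.preimage (exp_continuous.comp (continuous_const_smul t))

lemma exp_mem (hK : IsClosedUnitarySubgroup K) {X : A} (hX : X ∈ hK.tangentSpace) : exp X ∈ K :=
  hK.exp_mem_of_mem_tangentConeAt hX

lemma star_eq_neg (hK : IsClosedUnitarySubgroup K) {X : A} (hX : X ∈ hK.tangentSpace) :
    star X = -X := by
  rw [mem_tangentSpace] at hX
  have hderiv := (hasDerivAt_exp_smul_zero X).star.mul (hasDerivAt_exp_smul_zero X)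
  have hconst : (fun t : ℝ ↦ star (exp (t • X)) * exp (t • X)) = fun _ ↦ 1 :=
    funext fun t ↦ Unitary.star_mul_self_of_mem (hK.le_unitary (hX t))
  have hzero := (hderiv.congr_of_eventuallyEq (.of_eq hconst.symm)).unique (hasDerivAt_const 0 1)
  simp only [zero_smul, exp_zero, star_one, mul_one, one_mul] at hzero
  exact eq_neg_of_add_eq_zero_left hzero

lemma mul_mul_star_mem (hK : IsClosedUnitarySubgroup K) {X a : A} (hX : X ∈ hK.tangentSpace)
    (ha : a ∈ K) : a * X * star a ∈ hK.tangentSpace := by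
  rw [mem_tangentSpace] at hX ⊢
  intro t
  let _ : NormedAlgebra ℚ A := NormedAlgebra.restrictScalars ℚ ℝ A
  let u : Aˣ := Unitary.toUnits ⟨a, hK.le_unitary ha⟩
  have hconj : exp (t • (a * X * star a)) = a * exp (t • X) * star a := by
    rw [← smul_mul_assoc, ← mul_smul_comm]
    exact exp_units_conj u (t • X)
  rw [hconj]
  exact K.mul_mem (K.mul_mem ha (hX t)) (hK.star_mem ha)

/- `⁅X, Y⁆` is the velocity at `0` of the curve `exp (t • X) * Y * exp (-(t • X))` in the tangent
space, which is closed. -/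
lemma lie_mem_tangentSpace (hK : IsClosedUnitarySubgroup K) {X Y : A} (hX : X ∈ hK.tangentSpace)
    (hY : Y ∈ hK.tangentSpace) : ⁅X, Y⁆ ∈ hK.tangentSpace := by
  have hexp := hasDerivAt_exp_smul_zero X
  have hderiv := (hexp.mul_const Y).mul hexp.star
  have hcurve (t : ℝ) : exp (t • X) * Y * star (exp (t • X)) ∈ hK.tangentSpace :=
    hK.mul_mul_star_mem hY (hK.mem_tangentSpace.1 hX t)
  have hmem := tangentConeAt_submodule_subset hK.isClosed_tangentSpace (hcurve 0)
    (mem_tangentConeAt_of_hasDerivAt hderiv hcurve)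
  simpa [hK.star_eq_neg hX, Ring.lie_def, sub_eq_add_neg] using hmem

/-- The tangent space of `K` at the identity, with the commutator bracket. -/
def lieAlgebra (hK : IsClosedUnitarySubgroup K) : LieSubalgebra ℝ A where
  __ := hK.tangentSpace
  lie_mem' := hK.lie_mem_tangentSpace

variable [FiniteDimensional ℝ A]

/- Otherwise `S = {w ∈ W | exp w ∈ K}` accumulates at `0`, and then has a nonzero tangent vector
there; it lies both in `W` and in the tangent space of `K`. -/
lemma eventually_eq_zero_of_isCompl (hK : IsClosedUnitarySubgroup K) {W : Submodule ℝ A}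
    (hW : IsCompl hK.tangentSpace W) : ∀ᶠ w in 𝓝 (0 : A), w ∈ W → exp w ∈ K → w = 0 := by
  have : ProperSpace A := FiniteDimensional.proper ℝ A
  have hacc : ¬ AccPt (0 : A) (𝓟 {w | w ∈ W ∧ exp w ∈ K}) := by
    intro hacc
    obtain ⟨y, hy, hy0⟩ := tangentConeAt_nonempty_of_properSpace (𝕜 := ℝ) hacc
    refine hy0 (Submodule.disjoint_def.1 hW.disjoint y ?_ ?_)
    · have hexp : HasFDerivAt exp (1 : A →L[ℝ] A) 0 := hasFDerivAt_exp_zero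
      have hmaps := hexp.hasFDerivWithinAt.mapsTo_tangent_cone hy
      rw [exp_zero] at hmaps
      exact tangentConeAt_mono (Set.image_subset_iff.2 fun w hw ↦ hw.2) hmaps
    · exact tangentConeAt_submodule_subset W.closed_of_finiteDimensional W.zero_mem
        (tangentConeAt_mono (fun w hw ↦ hw.1) hy)
  rw [accPt_iff_frequently, not_frequently] at hacc
  filter_upwards [hacc] with w hw hwW hwK
  by_contra hw0
  exact hw ⟨hw0, hwW, hwK⟩

lemma eventually_exists_eq_exp (hK : IsClosedUnitarySubgroup K) :
    ∀ᶠ a in 𝓝 (1 : A), a ∈ K → ∃ X ∈ hK.tangentSpace, exp X = a := by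
  obtain ⟨W, hW⟩ := hK.tangentSpace.exists_isCompl
  let p : A →L[ℝ] A := LinearMap.toContinuousLinearMap (hK.tangentSpace.projection W hW)
  have hp (z : A) : p z ∈ hK.tangentSpace := Submodule.projection_apply_mem hW z
  have hpW (z : A) : z - p z ∈ W := Submodule.sub_projection_mem hW z
  have hderiv : HasStrictFDerivAt (fun z ↦ exp (p z) * exp (z - p z))
      ((ContinuousLinearEquiv.refl ℝ A : A ≃L[ℝ] A) : A →L[ℝ] A) 0 :=
    hasStrictFDerivAt_exp_mul_exp_sub p
  have hmap := hderiv.map_nhds_eq_of_equiv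
  simp only [map_zero, sub_zero, exp_zero, mul_one] at hmap
  rw [← hmap, eventually_map]
  have htendsto : Tendsto (fun z ↦ z - p z) (𝓝 0) (𝓝 0) := by
    have hcont : Continuous fun z ↦ z - p z := by fun_prop
    simpa using hcont.tendsto 0
  filter_upwards [htendsto.eventually (hK.eventually_eq_zero_of_isCompl hW)] with z hz hmem
  have hexp : exp (z - p z) ∈ K := by
    have hneg := hK.exp_mem (hK.tangentSpace.neg_mem (hp z))
    simpa only [← mul_assoc, exp_neg_mul_exp, one_mul] using K.mul_mem hneg hmem
  exact ⟨p z, hp z, by rw [hz (hpW z) hexp, exp_zero, mul_one]⟩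

lemma eventually_exists_eq_mul_exp (hK : IsClosedUnitarySubgroup K) {a : A} (ha : a ∈ K) :
    ∀ᶠ b in 𝓝[K] a, ∃ X ∈ hK.tangentSpace, b = a * exp X := by
  have htendsto : Tendsto (star a * ·) (𝓝 a) (𝓝 1) := by
    rw [← Unitary.star_mul_self_of_mem (hK.le_unitary ha)]
    exact (continuous_const_mul (star a)).tendsto a
  rw [eventually_nhdsWithin_iff]
  filter_upwards [htendsto.eventually hK.eventually_exists_eq_exp] with b hexp hb
  obtain ⟨X, hX, hXb⟩ := hexp (K.mul_mem (hK.star_mem ha) hb)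
  refine ⟨X, hX, ?_⟩
  rw [hXb, ← mul_assoc, Unitary.mul_star_self_of_mem (hK.le_unitary ha), one_mul]

lemma le_of_forall_exp_mem (hK : IsClosedUnitarySubgroup K) (hconn : IsPreconnected (K : Set A))
    {M : Submonoid A} (hM : ∀ X ∈ hK.tangentSpace, exp X ∈ M) : K ≤ M := by
  intro b hb
  refine (hconn.induction₂ (fun a b ↦ a ∈ M ↔ b ∈ M) (fun a ha ↦ ?_)
    (fun _ _ _ _ _ _ hab hbc ↦ hab.trans hbc) (fun _ _ _ _ hab ↦ hab.symm) K.one_mem hb).1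
    M.one_mem
  filter_upwards [hK.eventually_exists_eq_mul_exp ha]
  rintro _ ⟨X, hX, rfl⟩
  refine ⟨fun h ↦ M.mul_mem h (hM X hX), fun h ↦ ?_⟩
  simpa only [mul_assoc, exp_mul_exp_neg, mul_one] using
    M.mul_mem h (hM (-X) (hK.tangentSpace.neg_mem hX))

lemma dimH_image_le (hK : IsClosedUnitarySubgroup K) {F : Type*} [NormedAddCommGroup F]
    [NormedSpace ℝ F] (f : A →L[ℝ] F) : dimH (f '' K) ≤ finrank ℝ hK.lieAlgebra := by
  have : ProperSpace A := FiniteDimensional.proper ℝ A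
  obtain ⟨t, -, htc, hcover⟩ := TopologicalSpace.countable_cover_nhdsWithin
    fun a (ha : a ∈ (K : Set A)) ↦ hK.eventually_exists_eq_mul_exp ha
  have hsub : f '' K ⊆ ⋃ a ∈ t, Set.range fun X : hK.tangentSpace ↦ f (a * exp (X : A)) := by
    rintro _ ⟨b, hb, rfl⟩
    obtain ⟨a, ha, X, hX, rfl⟩ := Set.mem_iUnion₂.1 (hcover hb)
    exact Set.mem_biUnion ha ⟨⟨X, hX⟩, rfl⟩
  refine (dimH_mono hsub).trans ?_
  rw [dimH_bUnion htc]
  refine iSup₂_le fun a _ ↦ ContDiff.dimH_range_le ?_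
  have hcontDiff : ContDiff ℝ 1 (exp : A → A) :=
    contDiff_iff_contDiffAt.2 fun x ↦ (exp_analytic (𝕂 := ℝ) x).contDiffAt
  exact f.contDiff.comp (contDiff_const.mul (hcontDiff.comp hK.tangentSpace.subtypeL.contDiff))

end IsClosedUnitarySubgroup

end ClosedSubgroup

section Complexification

variable {A : Type*} [Ring A] [Algebra ℂ A] {h : LieSubalgebra ℝ A} {X Z : A}

/-- The complex Lie subalgebra `h + i h` generated by a real Lie subalgebra `h` of a complex
associative algebra; the sum need not be direct. -/
def complexification (h : LieSubalgebra ℝ A) : LieSubalgebra ℂ A where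
  carrier := {Z | ∃ X ∈ h, ∃ Y ∈ h, Z = X + Complex.I • Y}
  zero_mem' := ⟨0, h.zero_mem, 0, h.zero_mem, by rw [smul_zero, add_zero]⟩
  add_mem' := by
    rintro _ _ ⟨X, hX, Y, hY, rfl⟩ ⟨X', hX', Y', hY', rfl⟩
    exact ⟨X + X', h.add_mem hX hX', Y + Y', h.add_mem hY hY', by module⟩
  smul_mem' := by
    rintro c _ ⟨X, hX, Y, hY, rfl⟩
    refine ⟨c.re • X - c.im • Y, h.sub_mem (h.smul_mem _ hX) (h.smul_mem _ hY),
      c.im • X + c.re • Y, h.add_mem (h.smul_mem _ hX) (h.smul_mem _ hY), ?_⟩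
    simp only [← Complex.coe_smul]
    match_scalars
    · linear_combination -Complex.re_add_im c
    · linear_combination -Complex.I * Complex.re_add_im c + c.im * Complex.I_sq
  lie_mem' := by
    rintro _ _ ⟨X, hX, Y, hY, rfl⟩ ⟨X', hX', Y', hY', rfl⟩
    refine ⟨⁅X, X'⁆ - ⁅Y, Y'⁆, h.sub_mem (h.lie_mem hX hX') (h.lie_mem hY hY'),
      ⁅X, Y'⁆ + ⁅Y, X'⁆, h.add_mem (h.lie_mem hX hY') (h.lie_mem hY hX'), ?_⟩
    simp only [add_lie, lie_add, smul_lie, lie_smul]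
    match_scalars <;> simp

lemma mem_complexification_of_mem (hX : X ∈ h) : X ∈ complexification h :=
  ⟨X, hX, 0, h.zero_mem, by rw [smul_zero, add_zero]⟩

variable [StarRing A] [StarModule ℂ A]

lemma star_mem_complexification (hh : ∀ X ∈ h, star X = -X) (hZ : Z ∈ complexification h) :
    star Z ∈ complexification h := by
  obtain ⟨X, hX, Y, hY, rfl⟩ := hZ
  refine ⟨-X, h.neg_mem hX, Y, hY, ?_⟩
  rw [star_add, star_smul, hh X hX, hh Y hY, Complex.star_def, Complex.conj_I, neg_smul_neg]

lemma eq_zero_of_star_smul_I_eq_neg {Y : A} (hY : star Y = -Y)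
    (hIY : star (Complex.I • Y) = -(Complex.I • Y)) : Y = 0 := by
  rw [star_smul, hY, Complex.star_def, Complex.conj_I, neg_smul_neg, eq_neg_iff_add_eq_zero,
    ← two_smul ℂ, smul_smul] at hIY
  exact (smul_eq_zero.1 hIY).resolve_left (by simp)

lemma mem_of_mem_complexification (hh : ∀ X ∈ h, star X = -X) (hZ : Z ∈ complexification h)
    (hZs : star Z = -Z) : Z ∈ h := by
  obtain ⟨X, hX, Y, hY, rfl⟩ := hZ
  have hY0 : Y = 0 := by
    refine eq_zero_of_star_smul_I_eq_neg (hh Y hY) ?_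
    rwa [star_add, hh X hX, neg_add, add_right_inj] at hZs
  rwa [hY0, smul_zero, add_zero]

lemma finrank_le_finrank_complexification [FiniteDimensional ℂ A] (hh : ∀ X ∈ h, star X = -X) :
    finrank ℝ h ≤ finrank ℂ (complexification h) := by
  let f : (h × h) →ₗ[ℝ] A :=
    h.toSubmodule.subtype.coprod (Complex.I • h.toSubmodule.subtype)
  let W : Submodule ℝ A := (complexification h).toSubmodule.restrictScalars ℝ
  have hf (p : h × h) : f p ∈ W := ⟨p.1, p.1.2, p.2, p.2.2, rfl⟩
  have hinj : Function.Injective (f.codRestrict W hf) := by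
    rw [LinearMap.injective_codRestrict_iff, injective_iff_map_eq_zero]
    rintro ⟨⟨X, hX⟩, ⟨Y, hY⟩⟩ (hXY : X + Complex.I • Y = 0)
    have hY0 : Y = 0 := by
      refine eq_zero_of_star_smul_I_eq_neg (hh Y hY) ?_
      rw [← neg_eq_of_add_eq_zero_right hXY, star_neg, hh X hX]
    obtain rfl := hY0
    obtain rfl : X = 0 := by simpa using hXY
    rfl
  have : FiniteDimensional ℝ A := FiniteDimensional.complexToReal A
  have hle := LinearMap.finrank_le_finrank_of_injective hinj
  rw [finrank_prod, show finrank ℝ W = _ from finrank_real_of_complex (complexification h)] at hle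
  lia

end Complexification

open Matrix LieAlgebra.SpecialLinear

/-! ### Rank-one matrices in large subspaces -/

section RankOne

variable {K m n σ : Type*} [Field K]

variable (K m n) in
/-- The comorphism `x_{ij} ↦ x_i * y_j` of the Segre map `(a, b) ↦ vecMulVec a b`. Its range is
the coordinate ring of the cone of matrices of rank at most one. -/
noncomputable def segre : MvPolynomial (m × n) K →ₐ[K] MvPolynomial (m ⊕ n) K :=
  MvPolynomial.aeval fun p ↦ MvPolynomial.X (Sum.inl p.1) * MvPolynomial.X (Sum.inr p.2)

open Classical in
variable (K) in
/-- The endomorphism of a polynomial ring that keeps the variables in `S` and sets all others to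
zero. -/
noncomputable def keepVars (S : Set σ) : MvPolynomial σ K →ₐ[K] MvPolynomial σ K :=
  MvPolynomial.aeval fun s ↦ if s ∈ S then MvPolynomial.X s else 0

lemma keepVars_comp_of_subset {S T : Set σ} (hST : S ⊆ T) :
    (keepVars K S).comp (keepVars K T) = keepVars K S := by
  refine MvPolynomial.algHom_ext fun s ↦ ?_
  have := @hST s
  by_cases hT : s ∈ T <;> simp_all [keepVars]

variable (K) in
/-- The prime of the coordinate ring of the Segre cone given by the vanishing of all variables
outside `S`. -/
noncomputable def segrePrime (S : Set (m ⊕ n)) : Ideal (segre K m n).range :=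
  RingHom.ker ((keepVars K S).comp (segre K m n).range.val)

instance (S : Set (m ⊕ n)) : (segrePrime K S).IsPrime :=
  RingHom.ker_isPrime ((keepVars K S).comp (segre K m n).range.val).toRingHom

lemma segrePrime_le_of_subset {S T : Set (m ⊕ n)} (hST : S ⊆ T) :
    segrePrime K T ≤ segrePrime K S := fun f hf ↦ by
  have hf' : keepVars K T (f : MvPolynomial (m ⊕ n) K) = 0 := hf
  change keepVars K S (f : MvPolynomial (m ⊕ n) K) = 0
  rw [← keepVars_comp_of_subset hST, AlgHom.comp_apply, hf', map_zero]

lemma segre_X_mem_segrePrime_iff {S : Set (m ⊕ n)} {i : m} {j : n} :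
    (segre K m n).rangeRestrict (MvPolynomial.X (i, j)) ∈ segrePrime K S ↔
      ¬(Sum.inl i ∈ S ∧ Sum.inr j ∈ S) := by
  change keepVars K S (segre K m n (MvPolynomial.X (i, j))) = 0 ↔ _
  by_cases hi : Sum.inl i ∈ S <;> by_cases hj : Sum.inr j ∈ S <;>
    simp [segre, keepVars, hi, hj, MvPolynomial.X_ne_zero]

lemma segrePrime_lt_of_subset {S T : Set (m ⊕ n)} (hST : S ⊆ T) {i : m} {j : n}
    (hT : Sum.inl i ∈ T ∧ Sum.inr j ∈ T) (hS : ¬(Sum.inl i ∈ S ∧ Sum.inr j ∈ S)) :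
    segrePrime K T < segrePrime K S :=
  lt_of_le_of_ne (segrePrime_le_of_subset hST) fun h ↦
    segre_X_mem_segrePrime_iff.mp (h ▸ segre_X_mem_segrePrime_iff.mpr hS) hT

lemma mul_eq_mul_of_mem_zeroLocus {P : Ideal (segre K m n).range} {z : m × n → K}
    (hz : z ∈ MvPolynomial.zeroLocus K (P.comap (segre K m n).rangeRestrict)) (i k : m) (j l : n) :
    z (i, j) * z (k, l) = z (i, l) * z (k, j) := by
  have hmem : (MvPolynomial.X (i, j) * MvPolynomial.X (k, l) -
      MvPolynomial.X (i, l) * MvPolynomial.X (k, j) : MvPolynomial (m × n) K) ∈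
      P.comap (segre K m n).rangeRestrict := by
    have h0 : (segre K m n).rangeRestrict (MvPolynomial.X (i, j) * MvPolynomial.X (k, l) -
        MvPolynomial.X (i, l) * MvPolynomial.X (k, j)) = 0 :=
      Subtype.ext <| show segre K m n _ = 0 by simp [segre]; ring
    rw [Ideal.mem_comap]
    exact h0 ▸ P.zero_mem
  simpa [sub_eq_zero] using MvPolynomial.mem_zeroLocus_iff.mp hz _ hmem

lemma exists_eq_vecMulVec {z : m × n → K} (hz : z ≠ 0)
    (h : ∀ i k j l, z (i, j) * z (k, l) = z (i, l) * z (k, j)) :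
    ∃ a b, a ≠ 0 ∧ b ≠ 0 ∧ (Matrix.of fun i j ↦ z (i, j)) = vecMulVec a b := by
  obtain ⟨⟨i, j⟩, hij : z (i, j) ≠ 0⟩ := Function.ne_iff.mp hz
  refine ⟨fun k ↦ z (k, j), fun l ↦ z (i, l) / z (i, j), fun h ↦ hij (congrFun h i),
    fun h ↦ by simpa [hij] using congrFun h j, ?_⟩
  ext k l
  rw [of_apply, vecMulVec_apply, mul_div_assoc', eq_div_iff hij]
  exact h k i l j

variable [Fintype m] [Fintype n]

variable (m n) in
/-- The `k`-th term of a decreasing chain of sets of variables: the `x`-variables are removed one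
at a time until a single one is left, then the `y`-variables are removed one at a time. -/
def keptVars (k : ℕ) : Set (m ⊕ n) :=
  {s | Sum.elim (fun i ↦ (Fintype.equivFin m i : ℕ) < max 1 (Fintype.card m - k))
    (fun j ↦ (Fintype.equivFin n j : ℕ) < Fintype.card m + Fintype.card n - 1 - k) s}

lemma inl_mem_keptVars {k : ℕ} {i : m} : Sum.inl i ∈ keptVars m n k ↔
    (Fintype.equivFin m i : ℕ) < max 1 (Fintype.card m - k) := Iff.rfl

lemma inr_mem_keptVars {k : ℕ} {j : n} : Sum.inr j ∈ keptVars m n k ↔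
    (Fintype.equivFin n j : ℕ) < Fintype.card m + Fintype.card n - 1 - k := Iff.rfl

lemma segrePrime_keptVars_lt [Nonempty m] [Nonempty n] {k : ℕ}
    (hk : k + 1 < Fintype.card m + Fintype.card n) :
    segrePrime K (keptVars m n k) < segrePrime K (keptVars m n (k + 1)) := by
  have hm := Fintype.card_pos (α := m)
  have hn := Fintype.card_pos (α := n)
  have hanti : keptVars m n (k + 1) ⊆ keptVars m n k := by
    rintro (i | j) h <;> simp only [inl_mem_keptVars, inr_mem_keptVars] at h ⊢ <;> omega
  obtain ⟨p, hp, q, hq, hpk, hqk, hnot⟩ : ∃ p < Fintype.card m, ∃ q < Fintype.card n,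
      p < max 1 (Fintype.card m - k) ∧ q < Fintype.card m + Fintype.card n - 1 - k ∧
      ¬(p < max 1 (Fintype.card m - (k + 1)) ∧
        q < Fintype.card m + Fintype.card n - 1 - (k + 1)) := by
    by_cases h : k + 1 < Fintype.card m
    · exact ⟨Fintype.card m - 1 - k, by omega, 0, by omega, by omega⟩
    · exact ⟨0, by omega, Fintype.card m + Fintype.card n - 2 - k, by omega, by omega⟩
  refine segrePrime_lt_of_subset hanti (i := (Fintype.equivFin m).symm ⟨p, hp⟩)
    (j := (Fintype.equivFin n).symm ⟨q, hq⟩) ?_ ?_ <;>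
  simpa [inl_mem_keptVars, inr_mem_keptVars] using by omega

lemma le_height_segrePrime_keptVars [Nonempty m] [Nonempty n] {k : ℕ}
    (hk : k < Fintype.card m + Fintype.card n) :
    (k : ℕ∞) ≤ (segrePrime K (keptVars m n k)).height := by
  induction k with
  | zero => simp
  | succ k ih =>
    push_cast
    exact (add_le_add_left (ih (by omega)) 1).trans
      (Ideal.height_add_one_le_of_lt_of_isPrime (segrePrime_keptVars_lt hk))

lemma rangeRestrict_mem_segrePrime_keptVars_last [Nonempty m] {f : MvPolynomial (m × n) K} :
    (segre K m n).rangeRestrict f ∈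
        segrePrime K (keptVars m n (Fintype.card m + Fintype.card n - 1)) ↔
      MvPolynomial.aeval (0 : m × n → K) f = 0 := by
  have hcomp : (keepVars K (keptVars m n (Fintype.card m + Fintype.card n - 1))).comp
      (segre K m n) = (Algebra.ofId K _).comp (MvPolynomial.aeval (0 : m × n → K)) :=
    MvPolynomial.algHom_ext fun p ↦ by simp [keepVars, segre, inr_mem_keptVars]
  change keepVars K _ (segre K m n f) = 0 ↔ _
  rw [← AlgHom.comp_apply, hcomp]
  simp [Algebra.ofId_apply]

/-- A linear functional on matrices, as a homogeneous polynomial in the matrix entries. -/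
noncomputable def linearForm [DecidableEq m] [DecidableEq n] (ℓ : Dual K (Matrix m n K)) :
    MvPolynomial (m × n) K :=
  ∑ p : m × n, MvPolynomial.C (ℓ (Matrix.single p.1 p.2 1)) * MvPolynomial.X p

lemma aeval_linearForm [DecidableEq m] [DecidableEq n] (ℓ : Dual K (Matrix m n K))
    (z : m × n → K) :
    MvPolynomial.aeval z (linearForm ℓ) = ℓ (Matrix.of fun i j ↦ z (i, j)) := by
  conv_rhs => rw [matrix_eq_sum_single (of fun i j ↦ z (i, j))]
  simp only [linearForm, map_sum, map_mul, MvPolynomial.aeval_C, MvPolynomial.aeval_X,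
    Algebra.algebraMap_self, RingHom.id_apply, Fintype.sum_prod_type, of_apply]
  refine Finset.sum_congr rfl fun i _ ↦ Finset.sum_congr rfl fun j _ ↦ ?_
  rw [← mul_one (z (i, j)), ← smul_eq_mul (z (i, j)), ← smul_single, map_smul, smul_eq_mul,
    smul_eq_mul, mul_one, mul_comm]

lemma segrePrime_keptVars_mem_minimalPrimes [IsAlgClosed K] [Nonempty m] [DecidableEq m]
    [DecidableEq n] {ι : Type*} {ℓ : ι → Dual K (Matrix m n K)}
    (hℓ : ∀ a b, (∀ i, ℓ i (vecMulVec a b) = 0) → a = 0 ∨ b = 0) :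
    segrePrime K (keptVars m n (Fintype.card m + Fintype.card n - 1)) ∈
      (Ideal.span (Set.range fun i ↦
        (segre K m n).rangeRestrict (linearForm (ℓ i)))).minimalPrimes := by
  refine ⟨⟨inferInstance, Ideal.span_le.mpr ?_⟩, ?_⟩
  · rintro _ ⟨i, rfl⟩
    rw [SetLike.mem_coe, rangeRestrict_mem_segrePrime_keptVars_last, aeval_linearForm]
    exact map_zero (ℓ i)
  · rintro P ⟨hP, hle⟩ - f hf
    obtain ⟨f, rfl⟩ := (segre K m n).rangeRestrict_surjective f
    have hlocus : ∀ z ∈ MvPolynomial.zeroLocus K (P.comap (segre K m n).rangeRestrict),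
        z = 0 := by
      intro z hz
      by_contra hne
      obtain ⟨a, b, ha, hb, hab⟩ := exists_eq_vecMulVec hne fun i k j l ↦
        mul_eq_mul_of_mem_zeroLocus hz i k j l
      refine (hℓ a b fun i ↦ ?_).elim ha hb
      rw [← hab, ← aeval_linearForm]
      exact MvPolynomial.mem_zeroLocus_iff.mp hz _ (hle (Ideal.subset_span ⟨i, rfl⟩))
    have : (P.comap (segre K m n).rangeRestrict).IsPrime := Ideal.IsPrime.comap _
    change f ∈ P.comap (segre K m n).rangeRestrict
    rw [← MvPolynomial.IsPrime.vanishingIdeal_zeroLocus (K := K)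
      (P.comap (segre K m n).rangeRestrict), MvPolynomial.mem_vanishingIdeal_iff]
    exact fun z hz ↦ hlocus z hz ▸ rangeRestrict_mem_segrePrime_keptVars_last.mp hf

theorem exists_vecMulVec_mem_of_lt_finrank [IsAlgClosed K] [Nonempty m] [Nonempty n]
    (g : Submodule K (Matrix m n K))
    (hg : Fintype.card m * Fintype.card n + 1 < finrank K g + Fintype.card m + Fintype.card n) :
    ∃ a b, a ≠ 0 ∧ b ≠ 0 ∧ vecMulVec a b ∈ g := by
  classical
  by_contra! hcon
  let B := Module.finBasis K (Matrix m n K ⧸ g)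
  let ℓ (i : Fin (finrank K (Matrix m n K ⧸ g))) : Dual K (Matrix m n K) := B.coord i ∘ₗ g.mkQ
  have hℓ (a b) (h : ∀ i, ℓ i (vecMulVec a b) = 0) : a = 0 ∨ b = 0 := by
    by_contra! hab
    exact hcon a b hab.1 hab.2 <|
      (Submodule.Quotient.mk_eq_zero g).mp (B.forall_coord_eq_zero_iff.mp h)
  have : IsNoetherianRing (segre K m n).range :=
    isNoetherianRing_of_surjective _ _ _ (segre K m n).rangeRestrict_surjective
  have hkrull := Ideal.height_le_card_of_mem_minimalPrimes_span (Set.finite_range _)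
    (segrePrime_keptVars_mem_minimalPrimes hℓ)
  have hcard : (Set.range fun i ↦ (segre K m n).rangeRestrict (linearForm (ℓ i))).ncard ≤
      finrank K (Matrix m n K ⧸ g) := by
    rw [← Set.image_univ]
    exact (Set.ncard_image_le Set.finite_univ).trans (by simp)
  have hheight := (le_height_segrePrime_keptVars (K := K) (m := m) (n := n)
    (Nat.sub_one_lt (Nat.add_pos_left Fintype.card_pos _).ne')).trans hkrull
  have hcodim := g.finrank_quotient_add_finrank
  rw [Module.finrank_matrix, finrank_self, mul_one] at hcodim
  norm_cast at hheight
  omega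

end RankOne

/-! ### Star-closed matrix Lie algebras of small codimension -/

section Irreducible

lemma mul_mem_of_mul_self_eq_smul {K A : Type*} [Field K] [NeZero (2 : K)] [Ring A] [Algebra K A]
    {g : LieSubalgebra K A} {P X : A} {c : K} (hP : P ∈ g) (hX : X ∈ g) (hc : c ≠ 0)
    (hsq : P * P = c • P) (hPXP : P * X * P ∈ g) : P * X ∈ g := by
  have hmem := g.smul_mem (2 * c)⁻¹ (g.add_mem (g.add_mem (g.lie_mem hP (g.lie_mem hP hX))
    (g.smul_mem c (g.lie_mem hP hX))) (g.smul_mem 2 hPXP))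
  convert hmem
  simp only [Ring.lie_def, mul_sub, sub_mul, ← mul_assoc, hsq, smul_mul_assoc]
  simp only [mul_assoc, hsq, mul_smul_comm]
  match_scalars <;> field_simp <;> ring

variable {n : Type*} [Fintype n]

lemma vecMulVec_lie_vecMulVec {R : Type*} [CommRing R] (a b c d : n → R) :
    ⁅vecMulVec a b, vecMulVec c d⁆ = (b ⬝ᵥ c) • vecMulVec a d - (d ⬝ᵥ a) • vecMulVec c b := by
  simp [Ring.lie_def, vecMulVec_mul_vecMulVec, vecMulVec_smul]

lemma lie_vecMulVec {R : Type*} [CommRing R] (X : Matrix n n R) (a b : n → R) :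
    ⁅X, vecMulVec a b⁆ = vecMulVec (X *ᵥ a) b - vecMulVec a (b ᵥ* X) := by
  simp [Ring.lie_def, mul_vecMulVec, vecMulVec_mul]

lemma star_dotProduct_eq_zero_comm {R : Type*} [CommSemiring R] [StarRing R] {a b : n → R} :
    star a ⬝ᵥ b = 0 ↔ star b ⬝ᵥ a = 0 := by
  rw [star_dotProduct, star_eq_zero]

open ComplexOrder in
lemma exists_smul_star_dotProduct_eq_one {a : n → ℂ} (ha : a ≠ 0) :
    ∃ c : ℂ, c ≠ 0 ∧ star (c • a) ⬝ᵥ (c • a) = 1 := by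
  have hpos : 0 < star a ⬝ᵥ a := dotProduct_star_self_pos_iff.mpr ha
  obtain ⟨r, hr⟩ : ∃ r : ℝ, star a ⬝ᵥ a = r := ⟨_, (Complex.eq_re_of_ofReal_le hpos.le)⟩
  have hr0 : 0 < r := by simpa [hr] using hpos
  refine ⟨((Real.sqrt r)⁻¹ : ℝ), by simpa using (Real.sqrt_pos.mpr hr0).ne', ?_⟩
  have hsq : (√r)⁻¹ * ((√r)⁻¹ * r) = 1 := by
    have := Real.mul_self_sqrt hr0.le
    field_simp
    linarith
  simp only [star_smul, smul_dotProduct, dotProduct_smul, hr, smul_eq_mul, Complex.star_def,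
    Complex.conj_ofReal]
  exact_mod_cast hsq

/-- The vectors `y` such that `u y*` lies in a given space of matrices. -/
def rowSpace (W : Submodule ℂ (Matrix n n ℂ)) (u : n → ℂ) : Submodule ℂ (n → ℂ) where
  carrier := {y | vecMulVec u (star y) ∈ W}
  add_mem' ha hb := by
    rw [Set.mem_ofPred_eq, star_add, vecMulVec_add]; exact W.add_mem ha hb
  zero_mem' := by simp
  smul_mem' c y hy := by
    rw [Set.mem_ofPred_eq, star_smul, vecMulVec_smul]; exact W.smul_mem _ hy

lemma mem_rowSpace {W : Submodule ℂ (Matrix n n ℂ)} {u y : n → ℂ} :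
    y ∈ rowSpace W u ↔ vecMulVec u (star y) ∈ W := Iff.rfl

variable [DecidableEq n]

/-- A star-closed Lie algebra of complex matrices acting irreducibly on column vectors. -/
structure IsStarIrreducible (g : LieSubalgebra ℂ (Matrix n n ℂ)) : Prop where
  conjTranspose_mem : ∀ {X}, X ∈ g → Xᴴ ∈ g
  eq_bot_or_eq_top : ∀ V : Submodule ℂ (n → ℂ), (∀ X ∈ g, ∀ v ∈ V, X *ᵥ v ∈ V) → V = ⊥ ∨ V = ⊤

variable {g : LieSubalgebra ℂ (Matrix n n ℂ)}

lemma IsStarIrreducible.vecMulVec_star_mem_comm (hg : IsStarIrreducible g) {a b : n → ℂ} :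
    vecMulVec a (star b) ∈ g ↔ vecMulVec b (star a) ∈ g := by
  constructor <;> intro h <;> simpa using hg.conjTranspose_mem h

lemma IsStarIrreducible.eq_top_of_forall_mem (hg : IsStarIrreducible g) {u : n → ℂ} (hu : u ≠ 0)
    (h : ∀ y, vecMulVec u (star y) ∈ g) : g = ⊤ := by
  have hmem (y r : n → ℂ) : vecMulVec y r ∈ g := by
    have hlie := g.lie_mem (hg.vecMulVec_star_mem_comm.mp (h y)) (h (star r))
    have huu : star u ⬝ᵥ u ≠ 0 := by
      open ComplexOrder in exact dotProduct_star_self_eq_zero.not.mpr hu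
    rw [vecMulVec_lie_vecMulVec, star_star] at hlie
    refine (g.toSubmodule.smul_mem_iff huu).mp ?_
    exact (g.toSubmodule.sub_mem_iff_left (g.smul_mem _ (h u))).mp hlie
  refine eq_top_iff.mpr fun X _ ↦ ?_
  induction X using Matrix.induction_on' with
  | h_zero => exact g.zero_mem
  | h_add X Y hX hY => exact g.add_mem (hX trivial) (hY trivial)
  | h_std_basis i j x =>
    rw [← mul_one x, ← smul_eq_mul, ← smul_single, single_eq_single_vecMulVec_single]
    exact g.smul_mem _ (hmem _ _)

theorem IsStarIrreducible.eq_top_of_dotProduct_ne_zero (hg : IsStarIrreducible g) {u v : n → ℂ}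
    (hmem : vecMulVec u (star v) ∈ g) (hvu : star v ⬝ᵥ u ≠ 0) : g = ⊤ := by
  set A := rowSpace g.toSubmodule u
  have hv : v ∈ A := hmem
  have hmul {y : n → ℂ} (hy : y ∈ A) (hyu : star y ⬝ᵥ u ≠ 0) {X} (hX : X ∈ g) : X *ᵥ y ∈ A := by
    have := mul_mem_of_mul_self_eq_smul (P := vecMulVec u (star y)) (X := Xᴴ) (c := star y ⬝ᵥ u) hy
      (hg.conjTranspose_mem hX) hyu (by simp [vecMulVec_mul_vecMulVec, vecMulVec_smul]) <| by
        rw [vecMulVec_mul, vecMulVec_mul_vecMulVec, vecMulVec_smul]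
        exact g.smul_mem _ hy
    rwa [vecMulVec_mul, ← star_mulVec] at this
  have hinv : ∀ X ∈ g, ∀ y ∈ A, X *ᵥ y ∈ A := by
    intro X hX y hy
    by_cases hyu : star y ⬝ᵥ u = 0
    · have := hmul (A.add_mem hy hv) (by simpa [hyu] using hvu) hX
      rw [mulVec_add] at this
      exact (A.add_mem_iff_left (hmul hv hvu hX)).mp this
    · exact hmul hy hyu hX
  rcases hg.eq_bot_or_eq_top A hinv with hbot | htop
  · rw [hbot, Submodule.mem_bot] at hv
    simp [hv] at hvu
  · refine hg.eq_top_of_forall_mem (u := u) (fun hu ↦ hvu (by simp [hu])) fun y ↦ ?_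
    exact mem_rowSpace.mp (htop ▸ Submodule.mem_top : y ∈ A)

theorem IsStarIrreducible.sl_le_of_forall_mem (hg : IsStarIrreducible g) {u : n → ℂ}
    (hu : star u ⬝ᵥ u = 1) (h : ∀ y, star y ⬝ᵥ u = 0 → vecMulVec u (star y) ∈ g) :
    sl n ℂ ≤ g := by
  have hpair (y z : n → ℂ) :
      vecMulVec y (star z) - (star z ⬝ᵥ y) • vecMulVec u (star u) ∈ g := by
    have hperp (x : n → ℂ) : star (x - (star u ⬝ᵥ x) • u) ⬝ᵥ u = 0 := by
      simp [sub_dotProduct, ← star_dotProduct, hu]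
    have hz := h _ (hperp z)
    have hy := hg.vecMulVec_star_mem_comm.mp (h _ (hperp y))
    have := g.add_mem (g.add_mem (g.lie_mem hy hz) (g.smul_mem (star z ⬝ᵥ u) hy))
      (g.smul_mem (star u ⬝ᵥ y) hz)
    convert this using 1
    rw [vecMulVec_lie_vecMulVec, hu]
    simp only [star_sub, star_smul, sub_vecMulVec, vecMulVec_sub, smul_vecMulVec, vecMulVec_smul,
      dotProduct_sub, sub_dotProduct, dotProduct_smul, smul_dotProduct, hu, smul_eq_mul,
      ← star_dotProduct]
    module
  have hall (X : Matrix n n ℂ) : X - X.trace • vecMulVec u (star u) ∈ g := by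
    induction X using Matrix.induction_on' with
    | h_zero => simp
    | h_add X Y hX hY =>
      convert g.add_mem hX hY using 1
      rw [trace_add]; module
    | h_std_basis i j x =>
      have := g.smul_mem x (hpair (Pi.single i 1) (Pi.single j 1))
      rwa [← Pi.single_star, star_one, ← single_eq_single_vecMulVec_single, smul_sub, smul_single,
        smul_smul, smul_eq_mul, mul_one, single_dotProduct, one_mul, ← smul_eq_mul,
        show x • (Pi.single i 1 : n → ℂ) j = trace (single i j x) by
          rcases eq_or_ne i j with rfl | hij <;> simp [*, trace_single_eq_of_ne]] at this
  intro X hX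
  simpa [show X.trace = 0 from hX] using hall X

end Irreducible

section RootPair

variable {n : Type*} [Fintype n] [DecidableEq n] {g : LieSubalgebra ℂ (Matrix n n ℂ)}
  {u v : n → ℂ}

/-- The vectors `y` for which `y v*` can be completed to an element `y v* + u r` of `g`. -/
def completable (g : LieSubalgebra ℂ (Matrix n n ℂ)) (u v : n → ℂ) : Submodule ℂ (n → ℂ) where
  carrier := {y | ∃ r, vecMulVec y (star v) + vecMulVec u r ∈ g}
  zero_mem' := ⟨0, by simp⟩
  add_mem' := by
    rintro y z ⟨r, hr⟩ ⟨s, hs⟩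
    refine ⟨r + s, ?_⟩
    convert g.add_mem hr hs using 1
    rw [add_vecMulVec, vecMulVec_add]; abel
  smul_mem' := by
    rintro c y ⟨r, hr⟩
    refine ⟨c • r, ?_⟩
    convert g.smul_mem c hr using 1
    rw [smul_vecMulVec, vecMulVec_smul, smul_add]

/-- Orthonormal vectors `u`, `v` such that the nilpotent matrix `u v*` lies in `g`. If `g` is
star-closed, it then contains the `sl₂`-triple `u v*`, `v u*`, `u u* - v v*`. -/
structure IsRootPair (g : LieSubalgebra ℂ (Matrix n n ℂ)) (u v : n → ℂ) : Prop where
  norm_left : star u ⬝ᵥ u = 1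
  norm_right : star v ⬝ᵥ v = 1
  ortho : star u ⬝ᵥ v = 0
  mem : vecMulVec u (star v) ∈ g

namespace IsRootPair

lemma ortho' (hp : IsRootPair g u v) : star v ⬝ᵥ u = 0 :=
  star_dotProduct_eq_zero_comm.mp hp.ortho

lemma symm (hp : IsRootPair g u v) (hg : IsStarIrreducible g) : IsRootPair g v u :=
  ⟨hp.norm_right, hp.norm_left, hp.ortho', hg.vecMulVec_star_mem_comm.mp hp.mem⟩

lemma vecMulVec_sub_mem (hp : IsRootPair g u v) (hg : IsStarIrreducible g) :
    vecMulVec u (star u) - vecMulVec v (star v) ∈ g := by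
  simpa [vecMulVec_lie_vecMulVec, hp.norm_left, hp.norm_right] using
    g.lie_mem hp.mem (hp.symm hg).mem

lemma left_mem_completable (hp : IsRootPair g u v) : u ∈ completable g u v :=
  ⟨0, by simpa using hp.mem⟩

lemma right_mem_completable (hp : IsRootPair g u v) (hg : IsStarIrreducible g) :
    v ∈ completable g u v :=
  ⟨-star u, by simpa [vecMulVec_neg, ← sub_eq_add_neg] using (hp.symm hg).vecMulVec_sub_mem hg⟩

lemma mulVec_left_mem_completable (hp : IsRootPair g u v) {X : Matrix n n ℂ} (hX : X ∈ g) :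
    X *ᵥ u ∈ completable g u v := by
  refine ⟨-(star v ᵥ* X), ?_⟩
  simpa only [lie_vecMulVec, vecMulVec_neg, sub_eq_add_neg] using g.lie_mem hX hp.mem

lemma mulVec_right_mem_completable (hp : IsRootPair g u v) (hg : IsStarIrreducible g)
    {X : Matrix n n ℂ} (hX : X ∈ g) : X *ᵥ v ∈ completable g u v := by
  suffices X *ᵥ v - (star u ⬝ᵥ X *ᵥ u) • v ∈ completable g u v from
    (Submodule.sub_mem_iff_left _ (Submodule.smul_mem _ _ (hp.right_mem_completable hg))).mp this
  refine ⟨star u ᵥ* X - (star v ⬝ᵥ X *ᵥ v) • star u, ?_⟩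
  convert g.lie_mem (g.lie_mem hX (hp.symm hg).mem) hp.mem using 1
  rw [lie_vecMulVec X, sub_lie, vecMulVec_lie_vecMulVec, vecMulVec_lie_vecMulVec]
  simp only [← dotProduct_mulVec, hp.norm_left, hp.norm_right, sub_vecMulVec, vecMulVec_sub,
    smul_vecMulVec, vecMulVec_smul]
  module

theorem exists_add_mem (hp : IsRootPair g u v) (hg : IsStarIrreducible g) (y : n → ℂ) :
    ∃ r, vecMulVec y (star v) + vecMulVec u r ∈ g := by
  set V := completable g u v
  have hu : u ∈ V := hp.left_mem_completable
  have hinv : ∀ X ∈ g, ∀ y ∈ V, X *ᵥ y ∈ V := by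
    rintro X hX y ⟨r, hr⟩
    have hy : y ∈ V := ⟨r, hr⟩
    -- For `Z = y v* + u r` the vector `[X, Z] v` is `X y` up to elements of `V`.
    have := V.add_mem (V.sub_mem (V.add_mem
      (hp.mulVec_right_mem_completable hg (g.lie_mem hX hr)) (V.smul_mem (star v ⬝ᵥ X *ᵥ v) hy))
      (V.smul_mem (r ⬝ᵥ v) (hp.mulVec_left_mem_completable hX))) (V.smul_mem (r ⬝ᵥ X *ᵥ v) hu)
    convert this using 1
    simp only [lie_add, lie_vecMulVec, add_mulVec, sub_mulVec, vecMulVec_mulVec, op_smul_eq_smul,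
      ← dotProduct_mulVec, hp.norm_right]
    module
  rcases hg.eq_bot_or_eq_top V hinv with hbot | htop
  · have : u = 0 := (Submodule.mem_bot ℂ).mp (hbot ▸ hu)
    simpa [this] using hp.norm_left
  · exact (htop ▸ Submodule.mem_top : y ∈ V)

lemma exists_add_mem' (hp : IsRootPair g u v) (hg : IsStarIrreducible g) (r : n → ℂ) :
    ∃ y, vecMulVec y (star v) + vecMulVec u r ∈ g := by
  obtain ⟨s, hs⟩ := (hp.symm hg).exists_add_mem hg (star r)
  refine ⟨star s, ?_⟩
  simpa [add_comm] using hg.conjTranspose_mem hs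

theorem sl_le_of_vecMulVec_mem (hp : IsRootPair g u v) (hg : IsStarIrreducible g) {z : n → ℂ}
    (hz : vecMulVec u (star z) ∈ g) (hzu : star z ⬝ᵥ u = 0) (hzv : star z ⬝ᵥ v = 0)
    (hz0 : z ≠ 0) : sl n ℂ ≤ g := by
  refine hg.sl_le_of_forall_mem hp.norm_left fun p hpu ↦ ?_
  obtain ⟨y, hy⟩ := hp.exists_add_mem' hg (star p)
  have hlie := g.lie_mem hz (g.lie_mem hy (hg.vecMulVec_star_mem_comm.mp hz))
  have hzz : star z ⬝ᵥ z ≠ 0 := by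
    open ComplexOrder in exact dotProduct_star_self_eq_zero.not.mpr hz0
  have hvz := star_dotProduct_eq_zero_comm.mp hzv
  refine (g.toSubmodule.smul_mem_iff hzz).mp ?_
  have := g.add_mem (g.add_mem hlie (g.smul_mem ((star u ⬝ᵥ y) * (star z ⬝ᵥ z)) hp.mem))
    (g.smul_mem (star p ⬝ᵥ z) hz)
  convert g.toSubmodule.neg_mem this using 1
  simp only [add_lie, lie_add, lie_sub, lie_smul, vecMulVec_lie_vecMulVec, hp.norm_left,
    hp.ortho', hzu, hvz, hpu]
  module

lemma eq_smul_of_vecMulVec_mem (hp : IsRootPair g u v) (hg : IsStarIrreducible g)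
    (hsl : ¬ sl n ℂ ≤ g) {r : n → ℂ} (hr : vecMulVec u r ∈ g) : r = (r ⬝ᵥ v) • star v := by
  have hru : r ⬝ᵥ u = 0 := by
    by_contra h
    exact hsl <| (hg.eq_top_of_dotProduct_ne_zero (v := star r) (by simpa using hr)
      (by simpa using h)) ▸ le_top
  by_contra hne
  refine hsl <| hp.sl_le_of_vecMulVec_mem hg (z := star (r - (r ⬝ᵥ v) • star v)) ?_ ?_ ?_ ?_
  · rw [star_star, vecMulVec_sub, vecMulVec_smul]
    exact g.sub_mem hr (g.smul_mem _ hp.mem)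
  · simp [sub_dotProduct, hru, hp.ortho']
  · simp [sub_dotProduct, hp.norm_right]
  · exact star_ne_zero.mpr (sub_ne_zero.mpr hne)

lemma vecMulVec_star_self_notMem (hp : IsRootPair g u v) (hg : IsStarIrreducible g)
    (hsl : ¬ sl n ℂ ≤ g) : vecMulVec u (star u) ∉ g := fun h ↦ by
  have := congrArg (· ⬝ᵥ u) (hp.eq_smul_of_vecMulVec_mem hg hsl h)
  simp [hp.norm_left, hp.ortho] at this

theorem exists_ne_zero_perp (hp : IsRootPair g u v) (hg : IsStarIrreducible g)
    (hsl : ¬ sl n ℂ ≤ g) : ∃ w ≠ 0, star u ⬝ᵥ w = 0 ∧ star v ⬝ᵥ w = 0 := by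
  by_contra! h
  refine hsl <| hg.sl_le_of_forall_mem hp.norm_left fun p hpu ↦ ?_
  have hperp : p - (star v ⬝ᵥ p) • v = 0 := by
    by_contra hne
    exact h _ hne (by simp [dotProduct_sub, hp.ortho, star_dotProduct_eq_zero_comm.mp hpu])
      (by simp [dotProduct_sub, hp.norm_right])
  rw [sub_eq_zero.mp hperp, star_smul, vecMulVec_smul]
  exact g.smul_mem _ hp.mem

end IsRootPair

end RootPair

section SymplecticForm

/-- An antisymmetric unitary matrix `J`. The bilinear form `(x, y) ↦ x ᵥ* J ⬝ᵥ y` is symplectic,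
and `x ↦ star (x ᵥ* J)` is the corresponding quaternionic structure. -/
structure IsSymplecticForm {n : Type*} [Fintype n] [DecidableEq n] (J : Matrix n n ℂ) : Prop where
  transpose_eq_neg : Jᵀ = -J
  conjTranspose_mul_self : Jᴴ * J = 1

/-- The relation between a root pair `(u, v)` and the form `J` that it determines: the matrices
`y v* + u (y ᵥ* J)` lie in `g`, and the second condition makes the row `y ᵥ* J` unique. -/
structure IsRootForm {n : Type*} [Fintype n] [DecidableEq n] (g : LieSubalgebra ℂ (Matrix n n ℂ))
    (u v : n → ℂ) (J : Matrix n n ℂ) : Prop where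
  add_mem : ∀ y, vecMulVec y (star v) + vecMulVec u (y ᵥ* J) ∈ g
  vecMul_dotProduct_right : ∀ y, y ᵥ* J ⬝ᵥ v = star u ⬝ᵥ y

variable {n : Type*} [Fintype n] [DecidableEq n] {g : LieSubalgebra ℂ (Matrix n n ℂ)}
  {u v : n → ℂ} {J : Matrix n n ℂ}

theorem IsRootPair.exists_isRootForm (hp : IsRootPair g u v) (hg : IsStarIrreducible g) :
    ∃ J, IsRootForm g u v J := by
  have hrow (y : n → ℂ) :
      ∃ r, vecMulVec y (star v) + vecMulVec u r ∈ g ∧ r ⬝ᵥ v = star u ⬝ᵥ y := by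
    obtain ⟨r, hr⟩ := hp.exists_add_mem hg y
    refine ⟨r + (star u ⬝ᵥ y - r ⬝ᵥ v) • star v, ?_, ?_⟩
    · rw [vecMulVec_add, vecMulVec_smul, ← add_assoc]
      exact g.add_mem hr (g.smul_mem _ hp.mem)
    · simp [add_dotProduct, hp.norm_right]
  choose r hmem hdot using fun i ↦ hrow (Pi.single i 1)
  refine ⟨of r, fun y ↦ ?_, fun y ↦ ?_⟩
  · have : ∑ i, y i • (vecMulVec (Pi.single i 1) (star v) + vecMulVec u (r i)) ∈ g :=
      g.toSubmodule.sum_mem fun i _ ↦ g.smul_mem (y i) (hmem i)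
    convert this using 1
    ext a b
    simp [vecMul_eq_sum, Matrix.sum_apply, vecMulVec_apply, Finset.sum_add_distrib, Finset.mul_sum,
      Pi.single_apply, mul_left_comm]
  · have : of r *ᵥ v = star u := funext fun i ↦ by simpa using! hdot i
    rw [← dotProduct_mulVec, this, dotProduct_comm]

namespace IsRootForm

lemma eq_vecMul (hJ : IsRootForm g u v J) (hp : IsRootPair g u v) (hg : IsStarIrreducible g)
    (hsl : ¬ sl n ℂ ≤ g) {y r : n → ℂ} (hmem : vecMulVec y (star v) + vecMulVec u r ∈ g)
    (hdot : r ⬝ᵥ v = star u ⬝ᵥ y) : r = y ᵥ* J := by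
  have hdiff : vecMulVec u (r - y ᵥ* J) ∈ g := by
    convert g.sub_mem hmem (hJ.add_mem y) using 1
    rw [vecMulVec_sub]; abel
  have := hp.eq_smul_of_vecMulVec_mem hg hsl hdiff
  rwa [sub_dotProduct, hdot, hJ.vecMul_dotProduct_right, sub_self, zero_smul, sub_eq_zero] at this

lemma left_vecMul (hJ : IsRootForm g u v J) (hp : IsRootPair g u v) (hg : IsStarIrreducible g)
    (hsl : ¬ sl n ℂ ≤ g) : u ᵥ* J = star v :=
  (hJ.eq_vecMul hp hg hsl (g.add_mem hp.mem hp.mem) (by simp [hp.norm_left, hp.norm_right])).symm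

lemma right_vecMul (hJ : IsRootForm g u v J) (hp : IsRootPair g u v) (hg : IsStarIrreducible g)
    (hsl : ¬ sl n ℂ ≤ g) : v ᵥ* J = -star u := by
  refine (hJ.eq_vecMul hp hg hsl ?_ (by simp [hp.ortho])).symm
  simpa [vecMulVec_neg, ← sub_eq_add_neg] using (hp.symm hg).vecMulVec_sub_mem hg

lemma vecMul_dotProduct_left (hJ : IsRootForm g u v J) (hp : IsRootPair g u v)
    (hg : IsStarIrreducible g) (hsl : ¬ sl n ℂ ≤ g) (y : n → ℂ) :
    y ᵥ* J ⬝ᵥ u = -(star v ⬝ᵥ y) := by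
  set r := y ᵥ* J
  have hZ := hJ.add_mem y
  have hscalar : (star v ⬝ᵥ y + r ⬝ᵥ u) • vecMulVec u (star u) ∈ g := by
    have := g.add_mem (g.sub_mem hZ (g.lie_mem (hp.vecMulVec_sub_mem hg) hZ))
      (g.add_mem (g.smul_mem (star u ⬝ᵥ y + r ⬝ᵥ v) hp.mem)
        (g.smul_mem (star v ⬝ᵥ y) (hp.vecMulVec_sub_mem hg)))
    convert this using 1
    simp only [sub_lie, lie_add, vecMulVec_lie_vecMulVec, hp.norm_left, hp.norm_right,
      hp.ortho']
    module
  by_contra hne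
  refine hp.vecMulVec_star_self_notMem hg hsl ((g.toSubmodule.smul_mem_iff ?_).mp hscalar)
  exact fun h ↦ hne (eq_neg_of_add_eq_zero_right h)

lemma vecMulVec_vecMul_sub_mem (hJ : IsRootForm g u v J) (hp : IsRootPair g u v)
    (hg : IsStarIrreducible g) (y : n → ℂ) :
    vecMulVec v (y ᵥ* J) - vecMulVec y (star u) ∈ g := by
  convert g.sub_mem (g.smul_mem (star u ⬝ᵥ y) (hp.vecMulVec_sub_mem hg))
    (g.lie_mem (hJ.add_mem y) (hp.symm hg).mem) using 1
  simp only [add_lie, vecMulVec_lie_vecMulVec, hp.norm_left, hp.norm_right,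
    hJ.vecMul_dotProduct_right]
  module

lemma star_vecMul_vecMul (hJ : IsRootForm g u v J) (hp : IsRootPair g u v)
    (hg : IsStarIrreducible g) (hsl : ¬ sl n ℂ ≤ g) (y : n → ℂ) :
    star (y ᵥ* J) ᵥ* J = -star y := by
  refine (hJ.eq_vecMul hp hg hsl ?_ ?_).symm
  · simpa [vecMulVec_neg, ← sub_eq_add_neg] using
      hg.conjTranspose_mem (hJ.vecMulVec_vecMul_sub_mem hp hg y)
  · rw [neg_dotProduct, star_dotProduct_star, hJ.vecMul_dotProduct_left hp hg hsl, star_neg,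
      ← star_dotProduct]

lemma sub_smul_vecMul_of_perp (hJ : IsRootForm g u v J) (hp : IsRootPair g u v)
    (hg : IsStarIrreducible g) (hsl : ¬ sl n ℂ ≤ g) {w : n → ℂ} (hwu : star u ⬝ᵥ w = 0)
    (hwv : star v ⬝ᵥ w = 0) :
    (w ᵥ* J ⬝ᵥ star (w ᵥ* J) - star w ⬝ᵥ w) • (w ᵥ* J) = (w ᵥ* J ⬝ᵥ w) • star w := by
  have hru : w ᵥ* J ⬝ᵥ u = 0 := by rw [hJ.vecMul_dotProduct_left hp hg hsl, hwv, neg_zero]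
  have hrv : w ᵥ* J ⬝ᵥ v = 0 := by rw [hJ.vecMul_dotProduct_right, hwu]
  have hZ := hJ.add_mem w
  have hK := hg.conjTranspose_mem (hJ.vecMulVec_vecMul_sub_mem hp hg w)
  set r := w ᵥ* J
  have hwu' := star_dotProduct_eq_zero_comm.mp hwu
  have hwv' := star_dotProduct_eq_zero_comm.mp hwv
  have hvr : star v ⬝ᵥ star r = 0 := by rw [star_dotProduct_star, hrv, star_zero]
  have hmem : vecMulVec u ((r ⬝ᵥ star r - star w ⬝ᵥ w) • r - (r ⬝ᵥ w) • star w) ∈ g := by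
    have := g.smul_mem (2⁻¹ : ℂ) (g.add_mem (g.sub_mem
      (g.lie_mem (g.lie_mem hZ (hg.conjTranspose_mem hZ)) hZ) (g.smul_mem (2 * star w ⬝ᵥ w) hZ))
      (g.smul_mem (r ⬝ᵥ w) hK))
    convert this using 1
    simp only [conjTranspose_add, conjTranspose_sub, conjTranspose_vecMulVec, star_star, add_lie,
      lie_add, sub_lie, smul_lie, vecMulVec_lie_vecMulVec, hp.norm_left, hp.norm_right,
      hp.ortho', hwu, hwv, hwu', hru, hrv, hvr, vecMulVec_sub, vecMulVec_smul]
    module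
  have := hp.eq_smul_of_vecMulVec_mem hg hsl hmem
  simpa [sub_dotProduct, hrv, hwv', sub_eq_zero] using this

theorem vecMul_dotProduct_self_of_perp (hJ : IsRootForm g u v J) (hp : IsRootPair g u v)
    (hg : IsStarIrreducible g) (hsl : ¬ sl n ℂ ≤ g) {w : n → ℂ} (hwu : star u ⬝ᵥ w = 0)
    (hwv : star v ⬝ᵥ w = 0) : w ᵥ* J ⬝ᵥ w = 0 := by
  have hsub := hJ.sub_smul_vecMul_of_perp hp hg hsl hwu hwv
  have hsub' := congrArg (star · ᵥ* J) hsub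
  simp only [star_smul, star_star, smul_vecMul, hJ.star_vecMul_vecMul hp hg hsl] at hsub'
  replace hsub := congrArg (· ⬝ᵥ w) hsub
  replace hsub' := congrArg (· ⬝ᵥ w) hsub'
  simp only [smul_dotProduct, neg_dotProduct, smul_eq_mul] at hsub hsub'
  set a := star w ⬝ᵥ w
  set c := w ᵥ* J ⬝ᵥ w
  by_contra hc
  rw [mul_comm c, mul_left_inj' hc] at hsub
  rw [hsub, mul_neg] at hsub'
  have hpos : 0 < Complex.normSq c := Complex.normSq_pos.mpr hc
  have hnonneg := Complex.normSq_nonneg a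
  simp only [Complex.star_def, ← Complex.normSq_eq_conj_mul_self] at hsub'
  norm_cast at hsub'
  linarith

theorem vecMul_dotProduct_self (hJ : IsRootForm g u v J) (hp : IsRootPair g u v)
    (hg : IsStarIrreducible g) (hsl : ¬ sl n ℂ ≤ g) (y : n → ℂ) : y ᵥ* J ⬝ᵥ y = 0 := by
  obtain ⟨w, hw⟩ : ∃ w, w = y - (star u ⬝ᵥ y) • u - (star v ⬝ᵥ y) • v := ⟨_, rfl⟩
  have hwu : star u ⬝ᵥ w = 0 := by simp [hw, dotProduct_sub, hp.norm_left, hp.ortho]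
  have hwv : star v ⬝ᵥ w = 0 := by simp [hw, dotProduct_sub, hp.norm_right, hp.ortho']
  have hy : y = w + (star u ⬝ᵥ y) • u + (star v ⬝ᵥ y) • v := by rw [hw]; abel
  rw [hy]
  simp only [add_vecMul, smul_vecMul, hJ.left_vecMul hp hg hsl, hJ.right_vecMul hp hg hsl,
    add_dotProduct, dotProduct_add, smul_dotProduct, dotProduct_smul, neg_dotProduct, hwu, hwv,
    hJ.vecMul_dotProduct_self_of_perp hp hg hsl hwu hwv, hJ.vecMul_dotProduct_right,
    hJ.vecMul_dotProduct_left hp hg hsl, hp.norm_left, hp.norm_right, hp.ortho, hp.ortho',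
    smul_eq_mul]
  ring

theorem isSymplecticForm (hJ : IsRootForm g u v J) (hp : IsRootPair g u v)
    (hg : IsStarIrreducible g) (hsl : ¬ sl n ℂ ≤ g) : IsSymplecticForm J := by
  have hneg : Jᵀ = -J := by
    ext i j
    have hi := hJ.vecMul_dotProduct_self hp hg hsl (Pi.single i 1)
    have hj := hJ.vecMul_dotProduct_self hp hg hsl (Pi.single j 1)
    have hij := hJ.vecMul_dotProduct_self hp hg hsl (Pi.single i 1 + Pi.single j 1)
    simp only [add_vecMul, single_one_vecMul, dotProduct_add, dotProduct_single_one, Pi.add_apply,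
      row_apply] at hi hj hij
    rw [transpose_apply, neg_apply]
    linear_combination hij - hi - hj
  have hright (z : n → ℂ) : J *ᵥ (Jᴴ *ᵥ z) = z := by
    have := hJ.star_vecMul_vecMul hp hg hsl (star z)
    rwa [star_vecMul, star_star, ← mulVec_transpose, hneg, neg_mulVec, neg_inj] at this
  refine ⟨hneg, mul_eq_one_comm.mp <| ext_of_mulVec_single fun i ↦ ?_⟩
  rw [← mulVec_mulVec, hright, one_mulVec]

end IsRootForm

end SymplecticForm

section SymplecticAlgebra

lemma finrank_le_finrank_add_one {K V : Type*} [Field K] [AddCommGroup V] [Module K V]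
    [FiniteDimensional K V] {s t : Submodule K V} (e : V) (h : ∀ x ∈ s, ∃ c : K, x - c • e ∈ t) :
    finrank K s ≤ finrank K t + 1 := by
  have hle : s ≤ t ⊔ K ∙ e := fun x hx ↦ by
    obtain ⟨c, hc⟩ := h x hx
    exact Submodule.mem_sup.mpr
      ⟨_, hc, c • e, Submodule.smul_mem _ _ (Submodule.mem_span_singleton_self _), by abel⟩
  calc finrank K s ≤ finrank K ↥(t ⊔ K ∙ e) := Submodule.finrank_mono hle
    _ ≤ finrank K t + finrank K (K ∙ e) := Submodule.finrank_add_le_finrank_add_finrank _ _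
    _ ≤ finrank K t + 1 := by gcongr; simpa using finrank_span_le_card (R := K) {e}

variable {R n : Type*} [CommRing R] [Fintype n]

/-- The image of the symmetric product `x · y` under the isomorphism of the symmetric square of the
standard representation with the symplectic Lie algebra of the form `J`. -/
def symProduct (J : Matrix n n R) (x y : n → R) : Matrix n n R :=
  vecMulVec x (y ᵥ* J) + vecMulVec y (x ᵥ* J)

variable [DecidableEq n] {A J : Matrix n n R}

lemma mem_skewAdjointMatricesLieSubalgebra_iff :
    A ∈ skewAdjointMatricesLieSubalgebra J ↔ Aᵀ * J = -(J * A) := by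
  rw [mem_skewAdjointMatricesLieSubalgebra, mem_skewAdjointMatricesSubmodule, Matrix.IsSkewAdjoint,
    Matrix.IsAdjointPair, mul_neg]

lemma mulVec_vecMul_of_mem (hA : A ∈ skewAdjointMatricesLieSubalgebra J) (x : n → R) :
    (A *ᵥ x) ᵥ* J = -(x ᵥ* J ᵥ* A) := by
  rw [← vecMul_transpose, vecMul_vecMul, mem_skewAdjointMatricesLieSubalgebra_iff.mp hA, vecMul_neg,
    vecMul_vecMul]

lemma lie_symProduct (hA : A ∈ skewAdjointMatricesLieSubalgebra J) (x y : n → R) :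
    ⁅A, symProduct J x y⁆ = symProduct J (A *ᵥ x) y + symProduct J x (A *ᵥ y) := by
  simp only [symProduct, lie_add, lie_vecMulVec, mulVec_vecMul_of_mem hA, vecMulVec_neg]
  abel

lemma symProduct_mem (hJ : Jᵀ = -J) (x y : n → R) :
    symProduct J x y ∈ skewAdjointMatricesLieSubalgebra J := by
  have hJ' (z : n → R) : J *ᵥ z = -(z ᵥ* J) := by
    rw [← mulVec_transpose, hJ, neg_mulVec, neg_neg]
  rw [mem_skewAdjointMatricesLieSubalgebra_iff, symProduct, transpose_add, transpose_vecMulVec,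
    transpose_vecMulVec, add_mul, mul_add, vecMulVec_mul, vecMulVec_mul, mul_vecMulVec,
    mul_vecMulVec, hJ', hJ', neg_vecMulVec, neg_vecMulVec]
  abel

lemma exists_eq_smul_one_of_forall_vecMul {K : Type*} [Field K] (M : Matrix n n K)
    (h : ∀ x, ∃ c : K, x ᵥ* M = c • x) : ∃ c : K, M = c • 1 := by
  obtain ⟨c, hc⟩ := LinearMap.exists_eq_smul_id_of_forall_notLinearIndependent (f := M.vecMulLinear)
    fun x hx ↦ by
      obtain ⟨c, hc⟩ := h x
      simpa using (LinearIndependent.pair_iff.mp hx c (-1) (by simp [hc])).2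
  refine ⟨c, ext_of_single_vecMul fun i ↦ ?_⟩
  rw [vecMul_smul, vecMul_one]
  exact LinearMap.congr_fun hc (Pi.single i 1)

namespace IsSymplecticForm

variable {J A : Matrix n n ℂ} {g : LieSubalgebra ℂ (Matrix n n ℂ)}

lemma mul_conjTranspose_self (hJ : IsSymplecticForm J) : J * Jᴴ = 1 :=
  mul_eq_one_comm.mp hJ.conjTranspose_mul_self

lemma vecMul_dotProduct_comm (hJ : IsSymplecticForm J) (x y : n → ℂ) :
    x ᵥ* J ⬝ᵥ y = -(y ᵥ* J ⬝ᵥ x) := by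
  rw [← dotProduct_mulVec, ← vecMul_transpose, hJ.transpose_eq_neg, vecMul_neg, dotProduct_neg,
    dotProduct_comm]

lemma vecMul_dotProduct_self (hJ : IsSymplecticForm J) (x : n → ℂ) : x ᵥ* J ⬝ᵥ x = 0 :=
  self_eq_neg.1 (hJ.vecMul_dotProduct_comm x x)

lemma vecMul_dotProduct_star_vecMul (hJ : IsSymplecticForm J) (x y : n → ℂ) :
    x ᵥ* J ⬝ᵥ star (y ᵥ* J) = star y ⬝ᵥ x := by
  rw [star_vecMul, dotProduct_mulVec, vecMul_vecMul, hJ.mul_conjTranspose_self, vecMul_one,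
    dotProduct_comm]

theorem le_of_forall_symProduct_mem (hJ : IsSymplecticForm J) (h : ∀ x y, symProduct J x y ∈ g) :
    skewAdjointMatricesLieSubalgebra J ≤ g := by
  have hsymm (M : Matrix n n ℂ) : (M + Mᵀ) * J ∈ g := by
    induction M using Matrix.induction_on' with
    | h_zero => simp
    | h_add M M' hM hM' =>
      convert g.add_mem hM hM' using 1
      rw [transpose_add]; noncomm_ring
    | h_std_basis i j c =>
      convert g.smul_mem c (h (Pi.single i 1) (Pi.single j 1)) using 1
      rw [symProduct, ← vecMulVec_mul, ← vecMulVec_mul, ← add_mul, ← smul_mul_assoc,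
        transpose_single,
        ← single_eq_single_vecMulVec_single, ← single_eq_single_vecMulVec_single, smul_add,
        smul_single, smul_single, smul_eq_mul, mul_one]
  intro A hA
  rw [mem_skewAdjointMatricesLieSubalgebra_iff] at hA
  have hJJ : (Jᴴ)ᵀ * J = -1 := by
    rw [show (Jᴴ)ᵀ = (Jᵀ)ᴴ from rfl, hJ.transpose_eq_neg, conjTranspose_neg, neg_mul,
      hJ.conjTranspose_mul_self]
  have htwo : (A * Jᴴ + (A * Jᴴ)ᵀ) * J = (2 : ℂ) • A := by
    rw [add_mul, mul_assoc, hJ.conjTranspose_mul_self, transpose_mul, mul_assoc, hA, mul_neg,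
      ← mul_assoc, hJJ]
    simp [two_smul]
  exact (g.toSubmodule.smul_mem_iff two_ne_zero).mp (htwo ▸ hsymm (A * Jᴴ))

lemma isRootPair (hJ : IsSymplecticForm J) (hle : skewAdjointMatricesLieSubalgebra J ≤ g)
    {x : n → ℂ} (hx : star x ⬝ᵥ x = 1) : IsRootPair g x (star (x ᵥ* J)) where
  norm_left := hx
  norm_right := by
    rw [star_star, hJ.vecMul_dotProduct_star_vecMul, hx]
  ortho := by rw [star_dotProduct_star, hJ.vecMul_dotProduct_self, star_zero]
  mem := by
    have : symProduct J x x ∈ g := hle (symProduct_mem hJ.transpose_eq_neg x x)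
    rw [symProduct, ← two_smul ℂ] at this
    simpa using (g.toSubmodule.smul_mem_iff (two_ne_zero (α := ℂ))).mp this

lemma exists_vecMul_eq_smul (hJ : IsSymplecticForm J) (hg : IsStarIrreducible g)
    (hsl : ¬ sl n ℂ ≤ g) (hle : skewAdjointMatricesLieSubalgebra J ≤ g) {X : Matrix n n ℂ}
    (hX : X ∈ g) (x : n → ℂ) : ∃ c : ℂ, x ᵥ* (J * X + Xᵀ * J) = c • (x ᵥ* J) := by
  rcases eq_or_ne x 0 with rfl | hx
  · exact ⟨0, by simp⟩
  obtain ⟨t, ht, hunit⟩ := exists_smul_star_dotProduct_eq_one hx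
  set y := t • x with hy
  have hp := hJ.isRootPair hle hunit
  have hmem : vecMulVec y (y ᵥ* (J * X + Xᵀ * J)) ∈ g := by
    have hσ : symProduct J y (X *ᵥ y) ∈ g := hle (symProduct_mem hJ.transpose_eq_neg _ _)
    convert g.sub_mem hσ (g.lie_mem hX hp.mem) using 1
    rw [symProduct, star_star, lie_vecMulVec, vecMul_add, ← vecMul_vecMul, ← vecMul_vecMul,
      vecMul_transpose, vecMulVec_add]
    abel
  have := hp.eq_smul_of_vecMulVec_mem hg hsl hmem
  rw [star_star, hy, smul_vecMul, smul_vecMul t x J, smul_comm] at this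
  exact ⟨_, smul_right_injective _ ht this⟩

theorem exists_sub_smul_mem (hJ : IsSymplecticForm J) (hg : IsStarIrreducible g)
    (hsl : ¬ sl n ℂ ≤ g) (hle : skewAdjointMatricesLieSubalgebra J ≤ g) {X : Matrix n n ℂ}
    (hX : X ∈ g) : ∃ c : ℂ, X - c • 1 ∈ skewAdjointMatricesLieSubalgebra J := by
  obtain ⟨c, hc⟩ := exists_eq_smul_one_of_forall_vecMul ((J * X + Xᵀ * J) * Jᴴ) fun x ↦ by
    obtain ⟨c, hc⟩ := hJ.exists_vecMul_eq_smul hg hsl hle hX x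
    exact ⟨c, by rw [← vecMul_vecMul, hc, smul_vecMul, vecMul_vecMul, hJ.mul_conjTranspose_self,
      vecMul_one]⟩
  have hXJ : J * X + Xᵀ * J = c • J := by
    simpa [mul_assoc, hJ.conjTranspose_mul_self] using congrArg (· * J) hc
  refine ⟨c / 2, ?_⟩
  rw [mem_skewAdjointMatricesLieSubalgebra_iff, transpose_sub, transpose_smul, transpose_one,
    sub_mul, mul_sub, smul_mul_assoc, one_mul, mul_smul_comm, mul_one, eq_sub_of_add_eq' hXJ]
  module

lemma finrank_le (hJ : IsSymplecticForm J) :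
    finrank ℂ (skewAdjointMatricesLieSubalgebra J) ≤ (Fintype.card n + 1).choose 2 := by
  let L : Matrix n n ℂ →ₗ[ℂ] Sym2 n → ℂ :=
    { toFun A s := s.lift ⟨fun i j ↦ (J * A) i j + (J * A) j i, fun _ _ ↦ add_comm _ _⟩
      map_add' A B := by
        ext ⟨i, j⟩
        simp [mul_add]
        ring
      map_smul' c A := by
        ext ⟨i, j⟩
        simp [mul_add] }
  have hsymm {A} (hA : A ∈ skewAdjointMatricesLieSubalgebra J) : (J * A)ᵀ = J * A := by
    rw [transpose_mul, hJ.transpose_eq_neg, mul_neg, mem_skewAdjointMatricesLieSubalgebra_iff.mp hA,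
      neg_neg]
  have hinj : Function.Injective
      (L.domRestrict (skewAdjointMatricesLieSubalgebra J).toSubmodule) := by
    refine (injective_iff_map_eq_zero _).mpr fun A hA ↦ Subtype.ext ?_
    have hJA : J * A.1 = 0 := by
      ext i j
      have hij : (J * A.1) i j + (J * A.1) j i = 0 := congrFun hA s(i, j)
      rw [← transpose_apply (J * A.1) i j, hsymm A.2] at hij
      simpa using hij
    simpa [← mul_assoc, hJ.conjTranspose_mul_self] using congrArg (Jᴴ * ·) hJA
  exact (LinearMap.finrank_le_finrank_of_injective hinj).trans_eq (by simp [Sym2.card])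

lemma even_card (hJ : IsSymplecticForm J) : Even (Fintype.card n) := by
  by_contra hodd
  have hdet := congrArg det hJ.transpose_eq_neg
  rw [det_transpose, det_neg, (Nat.not_even_iff_odd.mp hodd).neg_one_pow, neg_one_mul,
    self_eq_neg] at hdet
  simpa [hdet] using congrArg det hJ.conjTranspose_mul_self

end IsSymplecticForm

variable {u v : n → ℂ} {J : Matrix n n ℂ} {g : LieSubalgebra ℂ (Matrix n n ℂ)}

theorem IsRootForm.skewAdjoint_le (hJ : IsRootForm g u v J) (hp : IsRootPair g u v)
    (hg : IsStarIrreducible g) (hsl : ¬ sl n ℂ ≤ g) : skewAdjointMatricesLieSubalgebra J ≤ g := by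
  have huJ := hJ.left_vecMul hp hg hsl
  have hsympl := hJ.isSymplecticForm hp hg hsl
  have hu (y : n → ℂ) : symProduct J u y ∈ g := by
    simpa only [symProduct, huJ, add_comm] using hJ.add_mem y
  have hv (y : n → ℂ) : symProduct J v y ∈ g := by
    simpa only [symProduct, hJ.right_vecMul hp hg hsl, vecMulVec_neg, ← sub_eq_add_neg] using
      hJ.vecMulVec_vecMul_sub_mem hp hg y
  refine hsympl.le_of_forall_symProduct_mem fun x y ↦ ?_
  have huv : symProduct J u x *ᵥ v = (star u ⬝ᵥ x) • u + x := by
    simp [symProduct, add_mulVec, vecMulVec_mulVec, huJ, hp.norm_right, hJ.vecMul_dotProduct_right]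
  have := g.sub_mem (g.sub_mem (g.lie_mem (hu x) (hv y)) (g.smul_mem (star u ⬝ᵥ x) (hu y)))
    (hv (symProduct J u x *ᵥ y))
  convert this using 1
  rw [lie_symProduct (symProduct_mem hsympl.transpose_eq_neg u x), huv]
  simp only [symProduct, add_vecMul, smul_vecMul, add_vecMulVec, vecMulVec_add, smul_vecMulVec,
    vecMulVec_smul]
  module

lemma IsRootPair.two_lt_card (hp : IsRootPair g u v) (hg : IsStarIrreducible g)
    (hsl : ¬ sl n ℂ ≤ g) : 2 < Fintype.card n := by
  obtain ⟨w, hw, huw, hvw⟩ := hp.exists_ne_zero_perp hg hsl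
  have hind : LinearIndependent ℂ ![w, u, v] := by
    refine Fintype.linearIndependent_iff.mpr fun c hc ↦ ?_
    simp only [Fin.sum_univ_three, cons_val] at hc
    have hu : c 1 = 0 := by simpa [huw, hp.norm_left, hp.ortho] using congrArg (star u ⬝ᵥ ·) hc
    have hv : c 2 = 0 := by simpa [hvw, hp.norm_right, hp.ortho'] using congrArg (star v ⬝ᵥ ·) hc
    have hw : c 0 = 0 := by simpa [hu, hv, hw] using hc
    exact Fin.forall_fin_succ.mpr ⟨hw, Fin.forall_fin_two.mpr ⟨hu, hv⟩⟩
  have : Fintype.card (Fin 3) ≤ finrank ℂ (n → ℂ) := hind.fintype_card_le_finrank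
  rwa [Fintype.card_fin, finrank_fintype_fun_eq_card] at this

lemma IsStarIrreducible.exists_isRootPair (hg : IsStarIrreducible g) (hsl : ¬ sl n ℂ ≤ g)
    (hdim : Fintype.card n ^ 2 + 2 ≤ finrank ℂ g + 2 * Fintype.card n) :
    ∃ u v, IsRootPair g u v := by
  have : Nonempty n := by
    by_contra! hempty
    have : finrank ℂ g = 0 := finrank_zero_of_subsingleton
    simp [this] at hdim
  obtain ⟨a, b, ha, hb, hab⟩ := exists_vecMulVec_mem_of_lt_finrank g.toSubmodule <| by
    rw [← pow_two]
    exact (show _ < finrank ℂ g + _ + _ by lia)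
  obtain ⟨s, _, hsa⟩ := exists_smul_star_dotProduct_eq_one ha
  obtain ⟨t, _, htb⟩ := exists_smul_star_dotProduct_eq_one (star_ne_zero.mpr hb)
  have hmem : vecMulVec (s • a) (star (t • star b)) ∈ g := by
    rw [star_smul, star_star, smul_vecMulVec, vecMulVec_smul]
    exact g.smul_mem _ (g.smul_mem _ hab)
  refine ⟨s • a, t • star b, hsa, htb, ?_, hmem⟩
  by_contra hne
  exact hsl <| le_top.trans_eq
    (hg.eq_top_of_dotProduct_ne_zero hmem (star_dotProduct_eq_zero_comm.not.mp hne)).symm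

theorem IsStarIrreducible.sl_le_or_exists_isSymplecticForm (hg : IsStarIrreducible g)
    (hdim : Fintype.card n ^ 2 + 2 ≤ finrank ℂ g + 2 * Fintype.card n) :
    sl n ℂ ≤ g ∨ Fintype.card n = 4 ∧ ∃ J : Matrix n n ℂ, IsSymplecticForm J ∧
      skewAdjointMatricesLieSubalgebra J ≤ g ∧
      ∀ X ∈ g, ∃ c : ℂ, X - c • 1 ∈ skewAdjointMatricesLieSubalgebra J := by
  refine or_iff_not_imp_left.mpr fun hsl ↦ ?_
  obtain ⟨u, v, hp⟩ := hg.exists_isRootPair hsl hdim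
  obtain ⟨J, hJ⟩ := hp.exists_isRootForm hg
  have hsympl := hJ.isSymplecticForm hp hg hsl
  have hle := hJ.skewAdjoint_le hp hg hsl
  have hscalar (X) (hX : X ∈ g) := hsympl.exists_sub_smul_mem hg hsl hle hX
  refine ⟨?_, J, hsympl, hle, hscalar⟩
  have hupper : finrank ℂ g ≤ (Fintype.card n + 1).choose 2 + 1 :=
    (finrank_le_finrank_add_one 1 hscalar).trans (Nat.add_le_add_right hsympl.finrank_le 1)
  have hlower := hp.two_lt_card hg hsl
  have heven := hsympl.even_card
  rw [Nat.choose_two_right, Nat.add_sub_cancel] at hupper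
  have : Fintype.card n < 5 := by
    by_contra! h
    have : (Fintype.card n + 1) * Fintype.card n / 2 * 2 ≤ _ := Nat.div_mul_le_self _ _
    nlinarith
  interval_cases Fintype.card n
  · exact absurd heven (by decide)
  · rfl

end SymplecticAlgebra

section Reducible

lemma finrank_le_sq_add_sq_of_isCompl {K E M : Type*} [Field K] [AddCommGroup E] [Module K E]
    [FiniteDimensional K E] [AddCommGroup M] [Module K M] {φ : M →ₗ[K] End K E}
    (hφ : Function.Injective φ) {V W : Submodule K E} (hVW : IsCompl V W)
    (hV : ∀ X, ∀ v ∈ V, φ X v ∈ V) (hW : ∀ X, ∀ w ∈ W, φ X w ∈ W) :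
    finrank K M ≤ finrank K V ^ 2 + finrank K W ^ 2 := by
  let L : M →ₗ[K] End K V × End K W :=
    { toFun X := ((φ X).restrict (hV X), (φ X).restrict (hW X))
      map_add' X Y := by ext <;> simp
      map_smul' c X := by ext <;> simp }
  have hL : Function.Injective L := by
    refine (injective_iff_map_eq_zero L).mpr fun X hX ↦ (map_eq_zero_iff φ hφ).mp ?_
    rw [Prod.ext_iff] at hX
    ext x
    obtain ⟨v, w, hvV, hwW, rfl⟩ := Submodule.codisjoint_iff_exists_add_eq.mp hVW.codisjoint x
    have hv : φ X v = 0 := congrArg Subtype.val (LinearMap.congr_fun hX.1 ⟨v, hvV⟩)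
    have hw : φ X w = 0 := congrArg Subtype.val (LinearMap.congr_fun hX.2 ⟨w, hwW⟩)
    simp [hv, hw]
  simpa [finrank_linearMap, pow_two] using LinearMap.finrank_le_finrank_of_injective hL

variable {n : Type*} [Fintype n]

/-- The orthogonal complement of a subspace for the standard Hermitian form on column vectors. -/
def conjPerp (V : Submodule ℂ (n → ℂ)) : Submodule ℂ (n → ℂ) where
  carrier := {w | ∀ v ∈ V, star v ⬝ᵥ w = 0}
  add_mem' ha hb v hv := by rw [dotProduct_add, ha v hv, hb v hv, add_zero]
  zero_mem' v _ := dotProduct_zero _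
  smul_mem' c w hw v hv := by rw [dotProduct_smul, hw v hv, smul_zero]

lemma isCompl_conjPerp (V : Submodule ℂ (n → ℂ)) : IsCompl V (conjPerp V) := by
  let e := WithLp.linearEquiv 2 ℂ (n → ℂ)
  have hperp : conjPerp V = (V.map e.symm.toLinearMap)ᗮ.map e.toLinearMap := by
    ext w
    simp [conjPerp, Submodule.mem_orthogonal, e, EuclideanSpace.inner_eq_star_dotProduct,
      dotProduct_comm, (WithLp.linearEquiv 2 ℂ (n → ℂ)).forall_congr_left]
  have := (Submodule.orderIsoMapComap e).isCompl
    (Submodule.isCompl_orthogonal (K := V.map e.symm.toLinearMap))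
  rw [hperp]
  simpa [← Submodule.map_comp] using this

lemma finrank_le_of_invariant {g : Submodule ℂ (Matrix n n ℂ)} {V : Submodule ℂ (n → ℂ)}
    (hV : ∀ X ∈ g, ∀ v ∈ V, X *ᵥ v ∈ V) (hV' : ∀ X ∈ g, ∀ w ∈ conjPerp V, X *ᵥ w ∈ conjPerp V) :
    finrank ℂ g ≤ finrank ℂ V ^ 2 + finrank ℂ (conjPerp V) ^ 2 := by
  classical
  exact finrank_le_sq_add_sq_of_isCompl (φ := toLin'.toLinearMap ∘ₗ g.subtype)
    (toLin'.injective.comp g.injective_subtype) (isCompl_conjPerp V) (fun X ↦ hV X X.2)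
    (fun X ↦ hV' X X.2)

lemma mulVec_mem_conjPerp {X : Matrix n n ℂ} {V : Submodule ℂ (n → ℂ)}
    (hV : ∀ v ∈ V, Xᴴ *ᵥ v ∈ V) {w : n → ℂ} (hw : w ∈ conjPerp V) : X *ᵥ w ∈ conjPerp V :=
  fun v hv ↦ by
    rw [dotProduct_mulVec, ← conjTranspose_conjTranspose X, ← star_mulVec]
    exact hw _ (hV v hv)

lemma exists_eq_span_of_finrank_eq_one {V : Submodule ℂ (n → ℂ)} (hV : finrank ℂ V = 1) :
    ∃ v, star v ⬝ᵥ v = 1 ∧ V = ℂ ∙ v := by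
  obtain ⟨x, hx, hspan⟩ := finrank_eq_one_iff'.mp hV
  obtain ⟨t, ht, hunit⟩ := exists_smul_star_dotProduct_eq_one (a := (x : n → ℂ)) (by simpa)
  refine ⟨t • x, hunit, ?_⟩
  rw [Submodule.span_singleton_smul_eq ht.isUnit]
  refine le_antisymm (fun y hy ↦ ?_) ((Submodule.span_singleton_le_iff_mem _ _).mpr x.2)
  obtain ⟨c, hc⟩ := hspan ⟨y, hy⟩
  exact Submodule.mem_span_singleton.mpr ⟨c, congrArg Subtype.val hc⟩

lemma commute_vecMulVec_star_iff {v : n → ℂ} (hv : star v ⬝ᵥ v = 1) {X : Matrix n n ℂ} :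
    Commute X (vecMulVec v (star v)) ↔ X *ᵥ v ∈ ℂ ∙ v ∧ Xᴴ *ᵥ v ∈ ℂ ∙ v := by
  have himp {Y : Matrix n n ℂ} (hY : Commute Y (vecMulVec v (star v))) : Y *ᵥ v ∈ ℂ ∙ v := by
    refine Submodule.mem_span_singleton.mpr ⟨star v ⬝ᵥ Y *ᵥ v, ?_⟩
    rw [Commute, SemiconjBy, mul_vecMulVec, vecMulVec_mul] at hY
    simpa [vecMulVec_mulVec, hv, ← dotProduct_mulVec] using congrArg (· *ᵥ v) hY.symm
  constructor
  · intro h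
    have hstar : Commute Xᴴ (vecMulVec v (star v)) := by
      simpa [star_eq_conjTranspose] using h.star_star
    exact ⟨himp h, himp hstar⟩
  · simp only [Submodule.mem_span_singleton]
    rintro ⟨⟨c, hc⟩, d, hd⟩
    have hdc : star (Xᴴ *ᵥ v) ⬝ᵥ v = star v ⬝ᵥ X *ᵥ v := by
      rw [star_mulVec, conjTranspose_conjTranspose, dotProduct_mulVec]
    rw [← hc, ← hd, star_smul, smul_dotProduct, dotProduct_smul, hv, smul_eq_mul, smul_eq_mul,
      mul_one, mul_one] at hdc
    rw [Commute, SemiconjBy, mul_vecMulVec, vecMulVec_mul, ← hc,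
      ← conjTranspose_conjTranspose X, ← star_mulVec, ← hd, star_smul, hdc,
      smul_vecMulVec, vecMulVec_smul]

variable [DecidableEq n] {g : LieSubalgebra ℂ (Matrix n n ℂ)}

lemma mem_iff_commute_of_mulVec_mem_span (hstar : ∀ X ∈ g, Xᴴ ∈ g)
    (hdim : Fintype.card n ^ 2 + 2 ≤ finrank ℂ g + 2 * Fintype.card n) {v : n → ℂ}
    (hunit : star v ⬝ᵥ v = 1) (hv : ∀ X ∈ g, X *ᵥ v ∈ ℂ ∙ v) (X : Matrix n n ℂ) :
    X ∈ g ↔ Commute X (vecMulVec v (star v)) := by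
  let C := (Subalgebra.centralizer ℂ {vecMulVec v (star v)}).toSubmodule
  have hmemC {X} : X ∈ C ↔ Commute X (vecMulVec v (star v)) := by
    simp [C, Subalgebra.mem_centralizer_iff, Commute, SemiconjBy, eq_comm]
  have hle : g.toSubmodule ≤ C := fun X hX ↦
    hmemC.mpr <| (commute_vecMulVec_star_iff hunit).mpr ⟨hv X hX, hv _ (hstar X hX)⟩
  have hspan {Y : Matrix n n ℂ} (hY : Y *ᵥ v ∈ ℂ ∙ v) : ∀ w ∈ ℂ ∙ v, Y *ᵥ w ∈ ℂ ∙ v := by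
    intro w hw
    obtain ⟨c, rfl⟩ := Submodule.mem_span_singleton.mp hw
    rw [mulVec_smul]
    exact Submodule.smul_mem _ _ hY
  have hC := finrank_le_of_invariant (g := C) (V := ℂ ∙ v)
    (fun X hX ↦ hspan ((commute_vecMulVec_star_iff hunit).mp (hmemC.mp hX)).1)
    (fun X hX _ ↦ mulVec_mem_conjPerp <|
      hspan ((commute_vecMulVec_star_iff hunit).mp (hmemC.mp hX)).2)
  have hsum := Submodule.finrank_add_eq_of_isCompl (isCompl_conjPerp (ℂ ∙ v))
  rw [finrank_fintype_fun_eq_card] at hsum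
  rw [finrank_span_singleton (by rintro rfl; simp at hunit)] at hC hsum
  have heq : g.toSubmodule = C := Submodule.eq_of_le_of_finrank_le hle <| hC.trans <| by
    change _ ≤ finrank ℂ g
    rw [← hsum] at hdim
    lia
  rw [← hmemC, ← heq, LieSubalgebra.mem_toSubmodule]

lemma exists_forall_mem_iff_commute_of_finrank_eq_one (hstar : ∀ X ∈ g, Xᴴ ∈ g)
    (hdim : Fintype.card n ^ 2 + 2 ≤ finrank ℂ g + 2 * Fintype.card n) {V : Submodule ℂ (n → ℂ)}
    (hV : ∀ X ∈ g, ∀ v ∈ V, X *ᵥ v ∈ V) (hline : finrank ℂ V = 1) :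
    ∃ v, star v ⬝ᵥ v = 1 ∧ ∀ X, X ∈ g ↔ Commute X (vecMulVec v (star v)) := by
  obtain ⟨v, hv, rfl⟩ := exists_eq_span_of_finrank_eq_one hline
  exact ⟨v, hv, mem_iff_commute_of_mulVec_mem_span hstar hdim hv
    fun X hX ↦ hV X hX v (Submodule.mem_span_singleton_self v)⟩

theorem exists_forall_mem_iff_commute_of_invariant (hstar : ∀ X ∈ g, Xᴴ ∈ g)
    (hdim : Fintype.card n ^ 2 + 2 ≤ finrank ℂ g + 2 * Fintype.card n) {V : Submodule ℂ (n → ℂ)}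
    (hV : ∀ X ∈ g, ∀ v ∈ V, X *ᵥ v ∈ V) (hbot : V ≠ ⊥) (htop : V ≠ ⊤) :
    ∃ v, star v ⬝ᵥ v = 1 ∧ ∀ X, X ∈ g ↔ Commute X (vecMulVec v (star v)) := by
  have hV' : ∀ X ∈ g, ∀ w ∈ conjPerp V, X *ᵥ w ∈ conjPerp V :=
    fun X hX _ ↦ mulVec_mem_conjPerp (hV _ (hstar X hX))
  suffices finrank ℂ V = 1 ∨ finrank ℂ (conjPerp V) = 1 from
    this.elim (exists_forall_mem_iff_commute_of_finrank_eq_one hstar hdim hV)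
      (exists_forall_mem_iff_commute_of_finrank_eq_one hstar hdim hV')
  have hsum := Submodule.finrank_add_eq_of_isCompl (isCompl_conjPerp V)
  rw [finrank_fintype_fun_eq_card] at hsum
  have hle : finrank ℂ g ≤ _ := finrank_le_of_invariant (g := g.toSubmodule) hV hV'
  have hpos : 0 < finrank ℂ V := Submodule.one_le_finrank_iff.mpr hbot
  have hlt : finrank ℂ V < Fintype.card n := by
    simpa using Submodule.finrank_lt htop
  by_contra! h
  rw [← hsum] at hdim
  nlinarith [show 2 ≤ finrank ℂ V by lia, show 2 ≤ finrank ℂ (conjPerp V) by lia]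

end Reducible

/-! ### From Lie algebras back to groups -/

section UnitaryLog

variable {A : Type*} [CStarAlgebra A] {a : A}

lemma exists_exp_eq_of_mem_unitary (ha : a ∈ unitary A) (hfin : (spectrum ℂ a).Finite) :
    ∃ X, star X = -X ∧ exp X = a ∧ ∀ b, Commute a b → Commute (star a) b → Commute X b := by
  have hnormal : IsStarNormal a := ⟨by
    rw [commute_iff_eq, Unitary.star_mul_self_of_mem ha, Unitary.mul_star_self_of_mem ha]⟩
  let f (z : ℂ) : ℂ := Complex.I * z.arg
  refine ⟨cfc f a, ?_, ?_, fun b hab hab' ↦ hab.cfc hab' f⟩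
  · rw [← cfc_star, ← cfc_neg]
    exact cfc_congr fun z _ ↦ by simp [f]
  · rw [← CFC.complex_exp_eq_normedSpace_exp (cfc_predicate f a),
      ← cfc_comp Complex.exp f a hnormal Complex.continuous_exp.continuousOn (hfin.continuousOn f)]
    conv_rhs => rw [← cfc_id ℂ a]
    refine cfc_congr fun z hz ↦ ?_
    have hz1 : ‖z‖ = 1 := by simpa using spectrum.subset_circle_of_unitary ha hz
    simpa [f, hz1, mul_comm] using Complex.norm_mul_exp_arg_mul_I z

lemma exists_mem_spectrum_ne_one (ha : a ∈ unitary A) (ha1 : a ≠ 1) :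
    ∃ z ∈ spectrum ℂ a, ‖z‖ = 1 ∧ z ≠ 1 := by
  have hnormal : IsStarNormal a := ⟨by
    rw [commute_iff_eq, Unitary.star_mul_self_of_mem ha, Unitary.mul_star_self_of_mem ha]⟩
  by_contra! hspec
  refine ha1 ?_
  rw [← cfc_id ℂ a, ← cfc_one ℂ a]
  exact cfc_congr fun z hz ↦
    hspec z hz (by simpa using spectrum.subset_circle_of_unitary ha hz)

end UnitaryLog

section MatrixExp

open scoped Matrix.Norms.L2Operator

variable {n : Type*} [Fintype n] [DecidableEq n] {X : Matrix n n ℂ}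

lemma exp_mulVec_of_mulVec_eq_smul {y : n → ℂ} {m : ℂ} (h : X *ᵥ y = m • y) :
    exp X *ᵥ y = Complex.exp m • y := by
  have hpow (k : ℕ) : X ^ k *ᵥ y = m ^ k • y := by
    induction k with
    | zero => rw [pow_zero, pow_zero, one_mulVec, one_smul]
    | succ k ih => rw [pow_succ, ← mulVec_mulVec, h, mulVec_smul, ih, smul_smul, pow_succ']
  have hleft := (exp_series_hasSum_exp' (𝕂 := ℂ) X).map ((mulVecBilin ℂ ℂ).flip y)
    ((mulVecBilin ℂ ℂ).flip y).continuous_of_finiteDimensional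
  have hright := (exp_series_hasSum_exp' (𝕂 := ℂ) m).smul_const y
  rw [← Complex.exp_eq_exp_ℂ] at hright
  refine hleft.unique (hright.congr_fun ?_)
  intro k
  simp [hpow, smul_smul]

lemma exp_smul_one (c : ℂ) : exp (c • (1 : Matrix n n ℂ)) = Complex.exp c • 1 := by
  rw [← Algebra.algebraMap_eq_smul_one, ← algebraMap_exp_comm, ← Complex.exp_eq_exp_ℂ,
    Algebra.algebraMap_eq_smul_one]

lemma exp_add_smul_one (X : Matrix n n ℂ) (c : ℂ) :
    exp (X + c • 1) = Complex.exp c • exp X := by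
  rw [Matrix.exp_add_of_commute _ _ ((Commute.one_right X).smul_right c), exp_smul_one,
    mul_smul_comm, mul_one]

lemma det_exp_smul_of_isHermitian (hX : X.IsHermitian) (c : ℂ) :
    (exp (c • X)).det = Complex.exp (c * X.trace) := by
  set U := Unitary.toUnits hX.eigenvectorUnitary
  have hdiag : c • X = U * diagonal (fun i ↦ c * (hX.eigenvalues i : ℂ)) * (U⁻¹ : Units _) := by
    conv_lhs => rw [hX.spectral_theorem, ← map_smul, ← diagonal_smul]
    rfl
  rw [hdiag, Matrix.exp_units_conj, det_units_conj, Matrix.exp_diagonal, det_diagonal,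
    hX.trace_eq_sum_eigenvalues, Finset.mul_sum, Complex.exp_sum]
  exact Finset.prod_congr rfl fun i _ ↦ by rw [Pi.coe_exp, Complex.exp_eq_exp_ℂ]; rfl

lemma det_exp_of_star_eq_neg (hX : star X = -X) : (exp X).det = Complex.exp X.trace := by
  have hherm : (Complex.I • X).IsHermitian := by
    change star (Complex.I • X) = Complex.I • X
    rw [star_smul, hX, Complex.star_def, Complex.conj_I, neg_smul_neg]
  simpa [smul_smul, ← mul_assoc] using det_exp_smul_of_isHermitian hherm (-Complex.I)

end MatrixExp

namespace IsClosedUnitarySubgroup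

section ComplexLieAlgebra

variable {A : Type*} [CStarAlgebra A] {K : Submonoid A} {X : A}

/-- The complexified Lie algebra of `K`. -/
def complexLieAlgebra (hK : IsClosedUnitarySubgroup K) : LieSubalgebra ℂ A :=
  complexification hK.lieAlgebra

lemma mem_complexLieAlgebra_of_mem (hK : IsClosedUnitarySubgroup K) (hX : X ∈ hK.tangentSpace) :
    X ∈ hK.complexLieAlgebra :=
  mem_complexification_of_mem hX

lemma star_mem_complexLieAlgebra (hK : IsClosedUnitarySubgroup K) (hX : X ∈ hK.complexLieAlgebra) :
    star X ∈ hK.complexLieAlgebra :=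
  star_mem_complexification (fun _ hY ↦ hK.star_eq_neg hY) hX

lemma exp_mem_of_mem_complexLieAlgebra (hK : IsClosedUnitarySubgroup K)
    (hX : X ∈ hK.complexLieAlgebra) (hstar : star X = -X) : exp X ∈ K :=
  hK.exp_mem (mem_of_mem_complexification (fun _ hY ↦ hK.star_eq_neg hY) hX hstar)

lemma finrank_lieAlgebra_le [FiniteDimensional ℂ A] (hK : IsClosedUnitarySubgroup K) :
    finrank ℝ hK.lieAlgebra ≤ finrank ℂ hK.complexLieAlgebra :=
  finrank_le_finrank_complexification fun _ hX ↦ hK.star_eq_neg hX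

end ComplexLieAlgebra

open scoped Matrix.Norms.L2Operator

variable {n : Type*} [Fintype n] [DecidableEq n] {K : Submonoid (Matrix n n ℂ)}

section Centralizer

lemma eq_unitaryGroup_inf_centralizer (hK : IsClosedUnitarySubgroup K)
    (hconn : IsPreconnected (K : Set (Matrix n n ℂ))) {P : Matrix n n ℂ} (hP : IsSelfAdjoint P)
    (hg : ∀ X, X ∈ hK.complexLieAlgebra ↔ Commute X P) :
    K = unitaryGroup n ℂ ⊓ Submonoid.centralizer {P} := by
  refine le_antisymm (le_inf hK.le_unitary (hK.le_of_forall_exp_mem hconn fun X hX ↦ ?_)) ?_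
  · rintro _ rfl
    exact ((hg X).1 (hK.mem_complexLieAlgebra_of_mem hX)).symm.exp_right
  · rintro A ⟨hA, hAP⟩
    replace hAP : Commute A P := (hAP P rfl).symm
    obtain ⟨X, hXs, rfl, hXc⟩ := exists_exp_eq_of_mem_unitary hA A.finite_spectrum
    have hAP' : Commute (star (exp X)) P := hP.star_eq ▸ hAP.star_star
    exact hK.exp_mem_of_mem_complexLieAlgebra ((hg X).2 (hXc P hAP hAP')) hXs

end Centralizer

section SpecialLinear

lemma eq_unitaryGroup_of_sl_le (hK : IsClosedUnitarySubgroup K)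
    (hsl : sl n ℂ ≤ hK.complexLieAlgebra) {X : Matrix n n ℂ} (hX : X ∈ hK.tangentSpace)
    (htrace : X.trace ≠ 0) : K = unitaryGroup n ℂ := by
  refine le_antisymm hK.le_unitary fun A hA ↦ ?_
  obtain ⟨Y, hYs, rfl, -⟩ := exists_exp_eq_of_mem_unitary hA A.finite_spectrum
  refine hK.exp_mem_of_mem_complexLieAlgebra ?_ hYs
  have htraceless : Y - (Y.trace / X.trace) • X ∈ hK.complexLieAlgebra := by
    refine hsl ?_
    change trace _ = 0
    rw [trace_sub, trace_smul, smul_eq_mul, div_mul_cancel₀ _ htrace, sub_self]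
  simpa using add_mem htraceless
    (hK.complexLieAlgebra.smul_mem (Y.trace / X.trace) (hK.mem_complexLieAlgebra_of_mem hX))

end SpecialLinear

end IsClosedUnitarySubgroup

section SpecialUnitary

open scoped Matrix.Norms.L2Operator

variable {n : Type*} [Fintype n] [DecidableEq n] {K : Submonoid (Matrix n n ℂ)}

lemma exp_single_same {z : ℂ} (hz : Complex.exp z = 1) (i : n) :
    exp (Matrix.single i i z) = 1 := by
  rw [← diagonal_single, Matrix.exp_diagonal, ← diagonal_one]
  congr 1
  funext j
  rw [Pi.coe_exp, ← Complex.exp_eq_exp_ℂ]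
  obtain rfl | hji := eq_or_ne j i
  · rw [Pi.single_eq_same, hz]
  · rw [Pi.single_eq_of_ne hji, Complex.exp_zero]

/- The trace of a skew-adjoint logarithm `Z` of `A` is a multiple of `2πi`. Moving it into a single
diagonal entry splits `Z` into a traceless part and a diagonal part with trivial exponential. -/
lemma exists_eq_exp_mul_exp_of_mem_specialUnitaryGroup [Nonempty n] {A : Matrix n n ℂ}
    (hA : A ∈ specialUnitaryGroup n ℂ) :
    ∃ X Y : Matrix n n ℂ, (star X = -X ∧ X.trace = 0) ∧ (star Y = -Y ∧ Y.trace = 0) ∧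
      A = exp X * exp Y := by
  obtain ⟨hAu, hAdet⟩ := mem_specialUnitaryGroup_iff.1 hA
  obtain ⟨Z, hZs, rfl, -⟩ := exists_exp_eq_of_mem_unitary hAu A.finite_spectrum
  have hexp : Complex.exp Z.trace = 1 := (det_exp_of_star_eq_neg hZs).symm.trans hAdet
  have htrace : star Z.trace = -Z.trace := by
    obtain ⟨k, hk⟩ := Complex.exp_eq_one_iff.1 hexp
    rw [hk]
    simp
  obtain ⟨i⟩ := ‹Nonempty n›
  set c : ℂ := Z.trace / Fintype.card n
  have hc : c * Fintype.card n = Z.trace :=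
    div_mul_cancel₀ _ (Nat.cast_ne_zero.2 (Fintype.card_pos_iff.2 ⟨i⟩).ne')
  have hcs : star (c • 1 : Matrix n n ℂ) = -(c • 1) := by
    rw [star_smul, star_one, ← neg_smul]
    congr 1
    simpa [c, neg_div] using congrArg (· / (Fintype.card n : ℂ)) htrace
  have hEs : star (Matrix.single i i (-Z.trace)) = -Matrix.single i i (-Z.trace) := by
    rw [star_eq_conjTranspose, conjTranspose_single, star_neg, htrace, single_neg]
  refine ⟨Matrix.single i i (-Z.trace) + c • 1, Z + (-c) • 1, ⟨?_, ?_⟩, ⟨?_, ?_⟩, ?_⟩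
  · rw [star_add, hcs, hEs, neg_add]
  · rw [trace_add, trace_smul, trace_one, smul_eq_mul, hc, trace_single_eq_same, neg_add_cancel]
  · rw [neg_smul, star_add, star_neg, hZs, hcs, neg_add]
  · rw [trace_add, trace_smul, trace_one, smul_eq_mul, neg_mul, hc, add_neg_cancel]
  · have hexp' : Complex.exp (-Z.trace) = 1 := by rw [Complex.exp_neg, hexp, inv_one]
    rw [exp_add_smul_one, exp_add_smul_one, exp_single_same hexp',
      smul_mul_assoc, one_mul, smul_smul, ← Complex.exp_add, add_neg_cancel, Complex.exp_zero,
      one_smul]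

namespace IsClosedUnitarySubgroup

lemma eq_specialUnitaryGroup_of_sl_le [Nonempty n] (hK : IsClosedUnitarySubgroup K)
    (hconn : IsPreconnected (K : Set (Matrix n n ℂ))) (hsl : sl n ℂ ≤ hK.complexLieAlgebra)
    (htrace : ∀ X ∈ hK.tangentSpace, X.trace = 0) : K = specialUnitaryGroup n ℂ := by
  refine le_antisymm (hK.le_of_forall_exp_mem hconn fun X hX ↦ ?_) fun A hA ↦ ?_
  · rw [mem_specialUnitaryGroup_iff, det_exp_of_star_eq_neg (hK.star_eq_neg hX), htrace X hX,
      Complex.exp_zero]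
    exact ⟨hK.le_unitary (hK.exp_mem hX), rfl⟩
  · obtain ⟨X, Y, ⟨hXs, hX⟩, ⟨hYs, hY⟩, rfl⟩ :=
      exists_eq_exp_mul_exp_of_mem_specialUnitaryGroup hA
    exact K.mul_mem (hK.exp_mem_of_mem_complexLieAlgebra (hsl hX) hXs)
      (hK.exp_mem_of_mem_complexLieAlgebra (hsl hY) hYs)

end IsClosedUnitarySubgroup

end SpecialUnitary

section UnitaryEigenvector

open scoped Matrix.Norms.L2Operator

variable {n : Type*} [Fintype n] [DecidableEq n] {A : Matrix n n ℂ}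

lemma exists_unit_eigenvector_of_ne_one (hA : A ∈ unitaryGroup n ℂ) (hA1 : A ≠ 1) :
    ∃ (z : ℂ) (v : n → ℂ), ‖z‖ = 1 ∧ z ≠ 1 ∧ star v ⬝ᵥ v = 1 ∧ A *ᵥ v = z • v := by
  obtain ⟨z, hz, hznorm, hz1⟩ := exists_mem_spectrum_ne_one hA hA1
  rw [← spectrum_toLin', ← Module.End.hasEigenvalue_iff_mem_spectrum] at hz
  obtain ⟨v, hv⟩ := hz.exists_hasEigenvector
  obtain ⟨c, -, hc⟩ := exists_smul_star_dotProduct_eq_one hv.2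
  refine ⟨z, c • v, hznorm, hz1, hc, ?_⟩
  have hAv : A *ᵥ v = z • v := hv.apply_eq_smul
  rw [mulVec_smul, hAv, smul_comm]

lemma star_dotProduct_eq_zero_of_mulVec_eq_smul (hA : A ∈ unitaryGroup n ℂ) {z : ℂ}
    {v y : n → ℂ} (hz : z ≠ 1) (hv : A *ᵥ v = z • v) (hy : A *ᵥ y = y) : star v ⬝ᵥ y = 0 := by
  have hinner : star v ⬝ᵥ y = star z * (star v ⬝ᵥ y) := by
    calc star v ⬝ᵥ y = star (A *ᵥ v) ⬝ᵥ (A *ᵥ y) := by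
          rw [star_mulVec, dotProduct_mulVec, vecMul_vecMul, ← star_eq_conjTranspose,
            Unitary.star_mul_self_of_mem hA, vecMul_one]
      _ = star z * (star v ⬝ᵥ y) := by rw [hv, hy, star_smul, smul_dotProduct, smul_eq_mul]
  by_contra h0
  have hz1 : star z = 1 := (mul_eq_right₀ h0).1 hinner.symm
  exact hz (by rw [← star_star z, hz1, star_one])

/- The exponential fixes the fixed vectors of `A`, which are orthogonal to `v` and `w`, and rotates
`A *ᵥ v = z • v` back to `v`. -/
lemma eigenspace_one_lt_eigenspace_exp_mul (hA : A ∈ unitaryGroup n ℂ) {z t : ℂ} {v w : n → ℂ}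
    (hz : z ≠ 1) (ht : Complex.exp t * z = 1) (hv : star v ⬝ᵥ v = 1) (hwv : star w ⬝ᵥ v = 0)
    (hAv : A *ᵥ v = z • v) (hAw : A *ᵥ w = star z • w) :
    End.eigenspace (toLin' A) 1 <
      End.eigenspace (toLin' (exp (t • (vecMulVec v (star v) - vecMulVec w (star w))) * A)) 1 := by
  have happly (y : n → ℂ) : (t • (vecMulVec v (star v) - vecMulVec w (star w))) *ᵥ y =
      t • ((star v ⬝ᵥ y) • v - (star w ⬝ᵥ y) • w) := by
    simp [smul_mulVec, sub_mulVec, vecMulVec_mulVec]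
  have hz' : star z ≠ 1 := fun h ↦ hz (by rw [← star_star z, h, star_one])
  refine lt_of_le_of_ne (fun y hy ↦ ?_) fun heq ↦ hz ?_
  · rw [End.mem_eigenspace_iff, toLin'_apply, one_smul] at hy ⊢
    have hZy := happly y
    rw [star_dotProduct_eq_zero_of_mulVec_eq_smul hA hz hAv hy,
      star_dotProduct_eq_zero_of_mulVec_eq_smul hA hz' hAw hy, zero_smul, zero_smul, sub_zero,
      smul_zero, ← zero_smul ℂ y] at hZy
    rw [← mulVec_mulVec, hy, exp_mulVec_of_mulVec_eq_smul hZy, Complex.exp_zero, one_smul]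
  · have hZv := happly v
    rw [hv, hwv, one_smul, zero_smul, sub_zero] at hZv
    have hmem : v ∈ End.eigenspace (toLin' A) 1 := by
      rw [heq, End.mem_eigenspace_iff, toLin'_apply, one_smul, ← mulVec_mulVec, hAv, mulVec_smul,
        exp_mulVec_of_mulVec_eq_smul hZv, smul_smul, mul_comm, ht, one_smul]
    rw [End.mem_eigenspace_iff, toLin'_apply, hAv] at hmem
    refine smul_left_injective ℂ ?_ hmem
    rintro rfl
    simp at hv

end UnitaryEigenvector

section UnitarySymplectic

open scoped Matrix.Norms.L2Operator

variable {n : Type*} [Fintype n] [DecidableEq n] {J A : Matrix n n ℂ}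

/-- The unitary matrices preserving the bilinear form `J`; for an `IsSymplecticForm` this is a
compact symplectic group. -/
def unitarySymplectic (J : Matrix n n ℂ) : Submonoid (Matrix n n ℂ) where
  carrier := {A | A ∈ unitaryGroup n ℂ ∧ Aᵀ * J * A = J}
  one_mem' := ⟨one_mem _, by simp⟩
  mul_mem' := by
    rintro A B ⟨hA, hAJ⟩ ⟨hB, hBJ⟩
    refine ⟨mul_mem hA hB, ?_⟩
    calc (A * B)ᵀ * J * (A * B) = Bᵀ * (Aᵀ * J * A) * B := by
          simp only [transpose_mul, Matrix.mul_assoc]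
      _ = J := by rw [hAJ, hBJ]

lemma exp_mem_unitarySymplectic {X : Matrix n n ℂ} (hX : X ∈ skewAdjointMatricesLieSubalgebra J)
    (hXs : star X = -X) : exp X ∈ unitarySymplectic J := by
  let _ : NormedAlgebra ℚ (Matrix n n ℂ) := NormedAlgebra.restrictScalars ℚ ℝ _
  rw [mem_skewAdjointMatricesLieSubalgebra_iff] at hX
  refine ⟨exp_mem_unitary_of_mem_skewAdjoint hXs, ?_⟩
  have hsemi : SemiconjBy J X (-Xᵀ) := by
    rw [SemiconjBy, neg_mul, hX, neg_neg]
  simpa [Matrix.exp_transpose] using hsemi.exp_neg_mul_mul_exp_eq_self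

lemma mulVec_star_vecMul (hA : A ∈ unitarySymplectic J) {z : ℂ} {v : n → ℂ}
    (hv : A *ᵥ v = z • v) : A *ᵥ star (v ᵥ* J) = star z • star (v ᵥ* J) := by
  obtain ⟨hAu, hAJ⟩ := hA
  have hcomm : J * Aᴴ = Aᵀ * J := by
    conv_lhs => rw [← hAJ]
    rw [Matrix.mul_assoc, ← star_eq_conjTranspose, Unitary.mul_star_self_of_mem hAu, Matrix.mul_one]
  rw [← star_smul, ← smul_vecMul, ← hv, ← vecMul_transpose A v, vecMul_vecMul, ← hcomm,
    ← vecMul_vecMul, star_vecMul Aᴴ, conjTranspose_conjTranspose]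

namespace IsSymplecticForm

lemma star_vecMul_vecMul (hJ : IsSymplecticForm J) (x : n → ℂ) :
    star (x ᵥ* J) ᵥ* J = -star x := by
  have hconj : Jᴴᵀ = -Jᴴ := by
    change Jᵀᴴ = -Jᴴ
    rw [hJ.transpose_eq_neg, conjTranspose_neg]
  rw [star_vecMul, ← vecMul_transpose, hconj, vecMul_neg, neg_vecMul, vecMul_vecMul,
    hJ.conjTranspose_mul_self, vecMul_one]

/- With `w = star (v ᵥ* J)`, the eigenvector of `A` conjugate to `v`, the matrix is a multiple of
`v v* - w w*`. -/
lemma exists_eigenspace_one_lt (hJ : IsSymplecticForm J) (hA : A ∈ unitarySymplectic J)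
    (hA1 : A ≠ 1) : ∃ Z ∈ skewAdjointMatricesLieSubalgebra J, star Z = -Z ∧
      End.eigenspace (toLin' A) 1 < End.eigenspace (toLin' (exp Z * A)) 1 := by
  obtain ⟨z, v, hznorm, hz1, hv1, hAv⟩ := exists_unit_eigenvector_of_ne_one hA.1 hA1
  have hAw := mulVec_star_vecMul hA hAv
  have hwv : star (star (v ᵥ* J)) ⬝ᵥ v = 0 := by rw [star_star, hJ.vecMul_dotProduct_self]
  set w := star (v ᵥ* J) with hw
  set t : ℂ := -(z.arg * Complex.I)
  have htz : Complex.exp t * z = 1 := by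
    conv_lhs => rw [← Complex.norm_mul_exp_arg_mul_I z]
    rw [hznorm, Complex.ofReal_one, one_mul, ← Complex.exp_add, neg_add_cancel, Complex.exp_zero]
  have ht : star t = -t := by simp [t]
  have hZJ : t • (vecMulVec v (star v) - vecMulVec w (star w)) = -t • symProduct J v w := by
    rw [symProduct, hJ.star_vecMul_vecMul, vecMulVec_neg, hw, star_star]
    module
  refine ⟨t • (vecMulVec v (star v) - vecMulVec w (star w)), ?_, ?_,
    eigenspace_one_lt_eigenspace_exp_mul hA.1 hz1 htz hv1 hwv hAv hAw⟩
  · rw [hZJ]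
    exact LieSubalgebra.smul_mem _ _ (symProduct_mem hJ.transpose_eq_neg v w)
  · simp only [star_smul, ht, star_sub, star_eq_conjTranspose, conjTranspose_vecMulVec, star_star,
      neg_smul]

theorem unitarySymplectic_le (hJ : IsSymplecticForm J) {M : Submonoid (Matrix n n ℂ)}
    (hM : ∀ Z ∈ skewAdjointMatricesLieSubalgebra J, star Z = -Z → exp Z ∈ M) :
    unitarySymplectic J ≤ M := by
  intro A hA
  induction hF : End.eigenspace (toLin' A) 1 using WellFoundedGT.induction generalizing A with
  | ind F ih =>
    obtain rfl | hA1 := eq_or_ne A 1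
    · exact M.one_mem
    obtain ⟨Z, hZ, hZs, hlt⟩ := hJ.exists_eigenspace_one_lt hA hA1
    have hmem := ih _ (hF ▸ hlt) (mul_mem (exp_mem_unitarySymplectic hZ hZs) hA) rfl
    have hinv := hM (-Z) (neg_mem hZ) (by rw [star_neg, hZs])
    simpa only [← mul_assoc, exp_neg_mul_exp, one_mul] using M.mul_mem hinv hmem

end IsSymplecticForm

end UnitarySymplectic

section UnitScalarMul

/-- The group `e^{iℝ}·M` of unit-scalar multiples of elements of `M`. -/
def unitScalarMul {A : Type*} [Ring A] [Algebra ℂ A] (M : Submonoid A) : Submonoid A where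
  carrier := {a | ∃ t : ℝ, ∃ b ∈ M, a = Complex.exp (t * Complex.I) • b}
  one_mem' := ⟨0, 1, M.one_mem, by simp⟩
  mul_mem' := by
    rintro _ _ ⟨s, a, ha, rfl⟩ ⟨t, b, hb, rfl⟩
    refine ⟨s + t, a * b, M.mul_mem ha hb, ?_⟩
    rw [smul_mul_smul_comm, ← Complex.exp_add, Complex.ofReal_add, add_mul]

end UnitScalarMul

section Classification

variable {n : Type*} [Fintype n] [DecidableEq n] {J : Matrix n n ℂ}
  {K : Submonoid (Matrix n n ℂ)}

lemma IsSymplecticForm.trace_eq_zero (hJ : IsSymplecticForm J) {X : Matrix n n ℂ}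
    (hX : X ∈ skewAdjointMatricesLieSubalgebra J) : X.trace = 0 := by
  rw [mem_skewAdjointMatricesLieSubalgebra_iff] at hX
  have htranspose : Xᵀ = -(J * X * Jᴴ) := by
    rw [← Matrix.neg_mul, ← hX, Matrix.mul_assoc, hJ.mul_conjTranspose_self, Matrix.mul_one]
  have htrace : X.trace = -X.trace := by
    conv_lhs => rw [← trace_transpose, htranspose, trace_neg, trace_mul_comm, ← Matrix.mul_assoc,
      hJ.conjTranspose_mul_self, Matrix.one_mul]
  exact self_eq_neg.1 htrace

open scoped Matrix.Norms.L2Operator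

lemma IsSymplecticForm.exp_mem_unitScalarMul [Nonempty n] (hJ : IsSymplecticForm J)
    {X : Matrix n n ℂ} {c : ℂ} (hX : X - c • 1 ∈ skewAdjointMatricesLieSubalgebra J)
    (hXs : star X = -X) : exp X ∈ unitScalarMul (unitarySymplectic J) := by
  have htrace : X.trace = c * Fintype.card n := by
    simpa [trace_sub, trace_smul, sub_eq_zero] using hJ.trace_eq_zero hX
  have hcs : star c = -c := by
    have := congrArg trace hXs
    rw [star_eq_conjTranspose, trace_conjTranspose, trace_neg, htrace, star_mul', star_natCast,
      ← neg_mul] at this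
    exact mul_right_cancel₀ (Nat.cast_ne_zero.2 Fintype.card_ne_zero) this
  have hc : (c.im : ℂ) * Complex.I = c := by
    rw [Complex.star_def, Complex.ext_iff] at hcs
    have hre : c.re = 0 := by simpa [self_eq_neg] using hcs.1
    simpa [hre] using Complex.re_add_im c
  refine ⟨c.im, exp (X - c • 1), exp_mem_unitarySymplectic hX ?_, ?_⟩
  · rw [star_sub, star_smul, star_one, hXs, hcs, neg_smul]
    abel
  · rw [hc, ← exp_add_smul_one, sub_add_cancel]

namespace IsClosedUnitarySubgroup

lemma unitarySymplectic_le (hK : IsClosedUnitarySubgroup K) (hJ : IsSymplecticForm J)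
    (hle : skewAdjointMatricesLieSubalgebra J ≤ hK.complexLieAlgebra) : unitarySymplectic J ≤ K :=
  hJ.unitarySymplectic_le fun _ hZ hZs ↦ hK.exp_mem_of_mem_complexLieAlgebra (hle hZ) hZs

lemma eq_unitarySymplectic (hK : IsClosedUnitarySubgroup K)
    (hconn : IsPreconnected (K : Set (Matrix n n ℂ))) (hJ : IsSymplecticForm J)
    (hle : skewAdjointMatricesLieSubalgebra J ≤ hK.complexLieAlgebra)
    (hmem : ∀ X ∈ hK.tangentSpace, X ∈ skewAdjointMatricesLieSubalgebra J) :
    K = unitarySymplectic J :=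
  le_antisymm
    (hK.le_of_forall_exp_mem hconn fun X hX ↦
      exp_mem_unitarySymplectic (hmem X hX) (hK.star_eq_neg hX))
    (hK.unitarySymplectic_le hJ hle)

lemma eq_unitScalarMul_unitarySymplectic [Nonempty n] (hK : IsClosedUnitarySubgroup K)
    (hconn : IsPreconnected (K : Set (Matrix n n ℂ))) (hJ : IsSymplecticForm J)
    (hle : skewAdjointMatricesLieSubalgebra J ≤ hK.complexLieAlgebra)
    (hmem : ∀ X ∈ hK.tangentSpace, ∃ c : ℂ, X - c • 1 ∈ skewAdjointMatricesLieSubalgebra J)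
    {X : Matrix n n ℂ} (hX : X ∈ hK.tangentSpace)
    (hXJ : X ∉ skewAdjointMatricesLieSubalgebra J) :
    K = unitScalarMul (unitarySymplectic J) := by
  refine le_antisymm (hK.le_of_forall_exp_mem hconn fun Y hY ↦ ?_) ?_
  · obtain ⟨c, hc⟩ := hmem Y hY
    exact hJ.exp_mem_unitScalarMul hc (hK.star_eq_neg hY)
  have hone : (1 : Matrix n n ℂ) ∈ hK.complexLieAlgebra := by
    obtain ⟨c, hc⟩ := hmem X hX
    have hc0 : c ≠ 0 := by
      rintro rfl
      rw [zero_smul, sub_zero] at hc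
      exact hXJ hc
    have hsmul : c • (1 : Matrix n n ℂ) ∈ hK.complexLieAlgebra := by
      simpa only [sub_sub_cancel] using sub_mem (hK.mem_complexLieAlgebra_of_mem hX) (hle hc)
    exact (hK.complexLieAlgebra.toSubmodule.smul_mem_iff hc0).1 hsmul
  rintro _ ⟨t, B, hB, rfl⟩
  have hscalar : exp ((t * Complex.I) • (1 : Matrix n n ℂ)) ∈ K :=
    hK.exp_mem_of_mem_complexLieAlgebra (hK.complexLieAlgebra.smul_mem _ hone) (by simp)
  simpa [exp_smul_one] using K.mul_mem hscalar (hK.unitarySymplectic_le hJ hle hB)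

theorem classification [Nonempty n] (hK : IsClosedUnitarySubgroup K)
    (hconn : IsPreconnected (K : Set (Matrix n n ℂ)))
    (hdim : Fintype.card n ^ 2 + 2 ≤ finrank ℝ hK.lieAlgebra + 2 * Fintype.card n) :
    K = unitaryGroup n ℂ ∨ K = specialUnitaryGroup n ℂ ∨
      (∃ v, star v ⬝ᵥ v = 1 ∧
        K = unitaryGroup n ℂ ⊓ Submonoid.centralizer {vecMulVec v (star v)}) ∨
      Fintype.card n = 4 ∧ ∃ J, IsSymplecticForm J ∧
        (K = unitarySymplectic J ∨ K = unitScalarMul (unitarySymplectic J)) := by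
  have hstar (X) (hX : X ∈ hK.complexLieAlgebra) : Xᴴ ∈ hK.complexLieAlgebra :=
    hK.star_mem_complexLieAlgebra hX
  have hdimg : Fintype.card n ^ 2 + 2 ≤ finrank ℂ hK.complexLieAlgebra + 2 * Fintype.card n :=
    hdim.trans (Nat.add_le_add_right hK.finrank_lieAlgebra_le _)
  by_cases hirr : IsStarIrreducible hK.complexLieAlgebra
  · obtain hsl | ⟨hcard, J, hJ, hle, hmem⟩ := hirr.sl_le_or_exists_isSymplecticForm hdimg
    · by_cases htrace : ∀ X ∈ hK.tangentSpace, X.trace = 0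
      · exact .inr (.inl (hK.eq_specialUnitaryGroup_of_sl_le hconn hsl htrace))
      · push Not at htrace
        obtain ⟨X, hX, hX0⟩ := htrace
        exact .inl (hK.eq_unitaryGroup_of_sl_le hsl hX hX0)
    · refine .inr (.inr (.inr ⟨hcard, J, hJ, ?_⟩))
      by_cases hsp : ∀ X ∈ hK.tangentSpace, X ∈ skewAdjointMatricesLieSubalgebra J
      · exact .inl (hK.eq_unitarySymplectic hconn hJ hle hsp)
      · push Not at hsp
        obtain ⟨X, hX, hXJ⟩ := hsp
        exact .inr (hK.eq_unitScalarMul_unitarySymplectic hconn hJ hle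
          (fun Y hY ↦ hmem Y (hK.mem_complexLieAlgebra_of_mem hY)) hX hXJ)
  · obtain ⟨V, hV, hbot, htop⟩ : ∃ V : Submodule ℂ (n → ℂ),
        (∀ X ∈ hK.complexLieAlgebra, ∀ v ∈ V, X *ᵥ v ∈ V) ∧ V ≠ ⊥ ∧ V ≠ ⊤ := by
      by_contra! hall
      exact hirr ⟨hstar _, fun V hV ↦ or_iff_not_imp_left.2 (hall V hV)⟩
    obtain ⟨v, hv, hg⟩ := exists_forall_mem_iff_commute_of_invariant hstar hdimg hV hbot htop
    have hP : IsSelfAdjoint (vecMulVec v (star v)) := by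
      rw [IsSelfAdjoint, star_eq_conjTranspose, conjTranspose_vecMulVec, star_star]
    exact .inr (.inr (.inl ⟨v, hv, hK.eq_unitaryGroup_inf_centralizer hconn hP hg⟩))

end IsClosedUnitarySubgroup

end Classification

/-! ### Unitary normal forms -/

section Conjugation

variable {A : Type*} [Ring A] [StarRing A] [Algebra ℂ A] {n : Type*} [Fintype n] [DecidableEq n]

lemma image_conj_eq {H : Subgroup (unitary A)} {M : Submonoid A} {U : unitary A}
    (hH : H.toSubmonoid.map (unitary A).subtype = M.comap (Unitary.conjStarAlgAut ℂ A U)) :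
    (fun a ↦ U * a * U⁻¹) '' (H : Set (unitary A)) = {a : unitary A | (a : A) ∈ M} := by
  have hpre : (H : Set (unitary A)) = MulAut.conj U ⁻¹' {a : unitary A | (a : A) ∈ M} := by
    ext a
    have := Submonoid.ext_iff.1 hH a
    simpa using! this
  rw [hpre]
  exact Set.image_preimage_eq _ (MulAut.conj U).surjective

lemma comap_unitary (f : A ≃⋆ₐ[ℂ] A) : (unitary A).comap f = unitary A := by
  ext a
  simp only [Submonoid.mem_comap, Unitary.mem_iff, ← map_star, ← map_mul,
    EmbeddingLike.map_eq_one_iff]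

lemma comap_centralizer_singleton (f : A ≃⋆ₐ[ℂ] A) (p : A) :
    (Submonoid.centralizer {f p}).comap f = Submonoid.centralizer {p} := by
  ext a
  simp only [Submonoid.mem_comap, Submonoid.mem_centralizer_iff, Set.mem_singleton_iff, forall_eq]
  exact commute_map_iff f.injective

lemma comap_unitScalarMul (f : A ≃⋆ₐ[ℂ] A) (M : Submonoid A) :
    (unitScalarMul M).comap f = unitScalarMul (M.comap f) := by
  ext a
  constructor
  · rintro ⟨t, b, hb, hab⟩
    refine ⟨t, f.symm b, by simpa using hb, ?_⟩
    rw [← map_smul, ← hab, StarAlgEquiv.symm_apply_apply]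
  · rintro ⟨t, b, hb, rfl⟩
    exact ⟨t, f b, hb, map_smul f _ b⟩

lemma comap_unitarySymplectic (U : unitaryGroup n ℂ) (J : Matrix n n ℂ) :
    (unitarySymplectic J).comap (Unitary.conjStarAlgAut ℂ (Matrix n n ℂ) U) =
      unitarySymplectic ((U : Matrix n n ℂ)ᵀ * J * (U : Matrix n n ℂ)) := by
  obtain ⟨U, hU⟩ := U
  have hUs : Uᴴ * U = 1 := mem_unitaryGroup_iff'.1 hU
  have hUt : Uᵀ * (Uᴴ)ᵀ = 1 := by rw [← transpose_mul, hUs, transpose_one]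
  have hUt' : (Uᴴ)ᵀ * Uᵀ = 1 := mul_eq_one_comm.1 hUt
  ext B
  refine and_congr (Submonoid.ext_iff.1 (comap_unitary (Unitary.conjStarAlgAut ℂ _ ⟨U, hU⟩)) B) ?_
  change (U * B * Uᴴ)ᵀ * J * (U * B * Uᴴ) = J ↔ Bᵀ * (Uᵀ * J * U) * B = Uᵀ * J * U
  have hconj : (U * B * Uᴴ)ᵀ * J * (U * B * Uᴴ) = (Uᴴ)ᵀ * (Bᵀ * (Uᵀ * J * U) * B) * Uᴴ := by
    simp only [transpose_mul, Matrix.mul_assoc]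
  rw [hconj]
  constructor <;> intro h
  · calc Bᵀ * (Uᵀ * J * U) * B = Uᵀ * (Uᴴ)ᵀ * (Bᵀ * (Uᵀ * J * U) * B) * (Uᴴ * U) := by
          rw [hUt, hUs, Matrix.one_mul, Matrix.mul_one]
      _ = Uᵀ * ((Uᴴ)ᵀ * (Bᵀ * (Uᵀ * J * U) * B) * Uᴴ) * U := by simp only [Matrix.mul_assoc]
      _ = Uᵀ * J * U := by rw [h]
  · rw [h]
    simp only [Matrix.mul_assoc, mul_eq_one_comm.1 hUs, Matrix.mul_one]
    rw [← Matrix.mul_assoc, hUt', Matrix.one_mul]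

end Conjugation

section NormalForm

variable {n : Type*} [Fintype n]

lemma exists_orthonormal_pair (M : Matrix n n ℂ) (hcard : 2 < Fintype.card n) :
    ∃ u w : n → ℂ, star u ⬝ᵥ u = 1 ∧ star w ⬝ᵥ w = 1 ∧ star u ⬝ᵥ w = 0 ∧ u ᵥ* M ⬝ᵥ w = 0 := by
  obtain ⟨i⟩ : Nonempty n := Fintype.card_pos_iff.1 (by lia)
  classical
  let u : n → ℂ := Pi.single i 1
  have hker : LinearMap.ker (of ![star u, u ᵥ* M]).mulVecLin ≠ ⊥ :=
    LinearMap.ker_ne_bot_of_finrank_lt (by simpa using hcard)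
  obtain ⟨w₀, hw₀, hne⟩ := Submodule.exists_mem_ne_zero_of_ne_bot hker
  obtain ⟨c, -, hc⟩ := exists_smul_star_dotProduct_eq_one hne
  rw [LinearMap.mem_ker, mulVecLin_apply] at hw₀
  have huw : star u ⬝ᵥ w₀ = 0 := congrFun hw₀ 0
  have huMw : u ᵥ* M ⬝ᵥ w₀ = 0 := congrFun hw₀ 1
  refine ⟨u, c • w₀, by simp [u], hc, ?_, ?_⟩
  · rw [dotProduct_smul, huw, smul_zero]
  · rw [dotProduct_smul, huMw, smul_zero]

variable [DecidableEq n]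

lemma of_star_mem_unitaryGroup {b : n → n → ℂ}
    (hb : ∀ i j, star (b i) ⬝ᵥ b j = if i = j then 1 else 0) :
    of (fun i ↦ star (b i)) ∈ unitaryGroup n ℂ := by
  rw [mem_unitaryGroup_iff]
  ext i j
  rw [one_apply, ← hb, mul_apply, dotProduct]
  simp

lemma exists_mulVec_eq_single {v : n → ℂ} (hv : star v ⬝ᵥ v = 1) (i : n) :
    ∃ U : unitaryGroup n ℂ, (U : Matrix n n ℂ) *ᵥ v = Pi.single i 1 := by
  have hnorm : ‖WithLp.toLp 2 v‖ = 1 := by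
    rw [← sq_eq_sq₀ (norm_nonneg _) zero_le_one, one_pow, ← Complex.ofReal_inj, Complex.ofReal_pow,
      ← RCLike.ofReal_eq_complex_ofReal, ← inner_self_eq_norm_sq_to_K (𝕜 := ℂ),
      EuclideanSpace.inner_eq_star_dotProduct, dotProduct_comm, hv]
    simp
  have hortho : Orthonormal ℂ (({i} : Set n).domRestrict fun _ ↦ WithLp.toLp 2 v) :=
    ⟨fun _ ↦ hnorm, fun j k hjk ↦ (hjk (Subsingleton.elim j k)).elim⟩
  obtain ⟨b, hb⟩ := hortho.exists_orthonormalBasis_extension_of_card_eq (by simp)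
  have hdot (j k : n) : star (b j).ofLp ⬝ᵥ (b k).ofLp = if j = k then 1 else 0 := by
    rw [dotProduct_comm, ← EuclideanSpace.inner_eq_star_dotProduct,
      orthonormal_iff_ite.1 b.orthonormal]
  refine ⟨⟨_, of_star_mem_unitaryGroup hdot⟩, funext fun j ↦ ?_⟩
  have : v = (b i).ofLp := by rw [hb i rfl]
  rw [this, Pi.single_apply, ← hdot]
  rfl

lemma commute_single_same_iff {R : Type*} [Semiring R] {A : Matrix n n R} {i : n} :
    Commute (single i i 1) A ↔ ∀ j, j ≠ i → A i j = 0 ∧ A j i = 0 := by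
  refine ⟨fun h j hj ↦ ⟨row_eq_zero_of_commute_single h hj, col_eq_zero_of_commute_single h hj⟩,
    fun h ↦ ?_⟩
  ext j k
  by_cases hj : j = i <;> by_cases hk : k = i <;> simp_all

lemma IsSymplecticForm.exists_eq_symplJ {J : Matrix (Fin 4) (Fin 4) ℂ} (hJ : IsSymplecticForm J) :
    ∃ U : unitaryGroup (Fin 4) ℂ,
      (U : Matrix (Fin 4) (Fin 4) ℂ)ᵀ * symplJ 4 * (U : Matrix (Fin 4) (Fin 4) ℂ) = J := by
  obtain ⟨u, w, hu, hw, huw, huJw⟩ := exists_orthonormal_pair J (by simp)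
  have hwJu : w ᵥ* J ⬝ᵥ u = 0 := by rw [hJ.vecMul_dotProduct_comm, huJw, neg_zero]
  have hwu : star w ⬝ᵥ u = 0 := star_dotProduct_eq_zero_comm.1 huw
  let b : Fin 4 → Fin 4 → ℂ := ![u, w, star (u ᵥ* J), star (w ᵥ* J)]
  have hb (i j : Fin 4) : star (b i) ⬝ᵥ b j = if i = j then 1 else 0 := by
    fin_cases i <;> fin_cases j <;>
      simp [b, hJ.vecMul_dotProduct_self, hJ.vecMul_dotProduct_star_vecMul, star_dotProduct_star,
        hu, hw, huw, hwu, huJw, hwJu]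
  have hU := of_star_mem_unitaryGroup hb
  set U := of fun i ↦ star (b i)
  have hrow (i : Fin 4) : b i ᵥ* J = ∑ k, symplJ 4 i k • star (b k) := by
    fin_cases i <;> simp [b, symplJ, Fin.sum_univ_four, hJ.star_vecMul_vecMul]
  have hbU : (Uᴴ)ᵀ = of b := by
    ext i j
    simp [U]
  have hSU : symplJ 4 * U = (Uᴴ)ᵀ * J := by
    rw [hbU]
    ext i j
    calc (symplJ 4 * U) i j = (∑ k, symplJ 4 i k • star (b k)) j := by simp [mul_apply, U]
      _ = (of b * J) i j := by rw [← hrow]; rfl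
  refine ⟨⟨U, hU⟩, ?_⟩
  change Uᵀ * symplJ 4 * U = J
  have hUs : Uᴴ * U = 1 := mem_unitaryGroup_iff'.1 hU
  rw [Matrix.mul_assoc, hSU, ← Matrix.mul_assoc, ← transpose_mul, hUs, transpose_one,
    Matrix.one_mul]

end NormalForm

section Bridge

variable {N : ℕ}

lemma isClosedUnitarySubgroup_map_subtype {A : Type*} [CStarAlgebra A] {H : Subgroup (unitary A)}
    (hH : IsClosed (H : Set (unitary A))) :
    IsClosedUnitarySubgroup (H.toSubmonoid.map (unitary A).subtype) where
  le_unitary := by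
    rintro _ ⟨a, -, rfl⟩
    exact a.2
  star_mem := by
    rintro _ ⟨a, ha, rfl⟩
    exact ⟨a⁻¹, H.inv_mem ha, rfl⟩
  isClosed := isClosed_unitary.isClosedEmbedding_subtypeVal.isClosedMap _ hH

lemma coe_eq_setOf_mem {A : Type*} [Monoid A] [StarMul A] {H : Subgroup (unitary A)}
    {M : Submonoid A} (h : H.toSubmonoid.map (unitary A).subtype = M) :
    (H : Set (unitary A)) = {a : unitary A | (a : A) ∈ M} := by
  subst h
  ext a
  simp

lemma blockDiagSet_eq {i : Fin N} (hi : (i : ℕ) = N - 1) :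
    blockDiagSet N = {A : unitaryGroup (Fin N) ℂ |
      (A : Matrix (Fin N) (Fin N) ℂ) ∈ unitaryGroup (Fin N) ℂ ⊓
        Submonoid.centralizer {single i i 1}} := by
  have hlast (j : Fin N) : (j : ℕ) = N - 1 ↔ j = i := by rw [← hi, Fin.ext_iff]
  ext A
  have hcomm : (A : Matrix (Fin N) (Fin N) ℂ) ∈ Submonoid.centralizer {single i i 1} ↔
      Commute (single i i 1) (A : Matrix (Fin N) (Fin N) ℂ) := by
    simp [Submonoid.mem_centralizer_iff, Commute, SemiconjBy]
  rw [Set.mem_ofPred_eq, Submonoid.mem_inf, and_iff_right A.2, hcomm, commute_single_same_iff]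
  simp only [blockDiagSet, Set.mem_ofPred_eq, hlast]
  refine ⟨fun h j hj ↦ ⟨h i j (by simp [hj]), h j i (by simp [hj])⟩, fun h j k hjk ↦ ?_⟩
  by_cases hj : j = i
  · subst hj
    exact (h k fun hk ↦ hjk (by simp [hk])).1
  · obtain rfl : k = i := by_contra fun hk ↦ hjk (iff_of_false hj hk)
    exact (h j hj).2

lemma spSet_eq : spSet N = {A : unitaryGroup (Fin N) ℂ |
    (A : Matrix (Fin N) (Fin N) ℂ) ∈ unitarySymplectic (symplJ N)} :=
  Set.ext fun A ↦ (and_iff_right A.2).symm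

lemma eSpSet_eq : eSpSet N = {A : unitaryGroup (Fin N) ℂ |
    (A : Matrix (Fin N) (Fin N) ℂ) ∈ unitScalarMul (unitarySymplectic (symplJ N))} := by
  ext A
  refine exists_congr fun t ↦ ⟨?_, ?_⟩
  · rintro ⟨B, hB, h⟩
    exact ⟨B, ⟨B.2, hB⟩, h⟩
  · rintro ⟨B, hB, h⟩
    exact ⟨⟨B, hB.1⟩, hB.2, h⟩

open scoped Matrix.Norms.L2Operator in
lemma unitarySubgroupDim_le_finrank {H : Subgroup (unitaryGroup (Fin N) ℂ)}
    (hK : IsClosedUnitarySubgroup (H.toSubmonoid.map (unitaryGroup (Fin N) ℂ).subtype)) :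
    unitarySubgroupDim N H ≤ finrank ℝ hK.lieAlgebra := by
  let f : Matrix (Fin N) (Fin N) ℂ →ₗ[ℝ] Fin N → Fin N → ℂ := (ofLinearEquiv ℝ).symm.toLinearMap
  exact le_of_eq_of_le (congrArg dimH (Set.image_image f.toContinuousLinearMap _ _).symm)
    (hK.dimH_image_le f.toContinuousLinearMap)

lemma exists_conj_eq_blockDiagSet [NeZero N] {H : Subgroup (unitaryGroup (Fin N) ℂ)}
    {v : Fin N → ℂ} (hv : star v ⬝ᵥ v = 1)
    (hH : H.toSubmonoid.map (unitaryGroup (Fin N) ℂ).subtype =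
      unitaryGroup (Fin N) ℂ ⊓ Submonoid.centralizer {vecMulVec v (star v)}) :
    ∃ U : unitaryGroup (Fin N) ℂ, (fun A ↦ U * A * U⁻¹) '' (H : Set _) = blockDiagSet N := by
  let i : Fin N := ⟨N - 1, Nat.sub_one_lt (NeZero.ne N)⟩
  obtain ⟨U, hU⟩ := exists_mulVec_eq_single hv i
  have hconj : Unitary.conjStarAlgAut ℂ _ U (vecMulVec v (star v)) = single i i 1 := by
    rw [Unitary.conjStarAlgAut_apply, mul_vecMulVec, vecMulVec_mul, hU, star_eq_conjTranspose,
      ← star_mulVec, hU]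
    simp [single_eq_single_vecMulVec_single]
  refine ⟨U, ?_⟩
  rw [blockDiagSet_eq (i := i) rfl, image_conj_eq]
  rw [hH, ← hconj, Submonoid.comap_inf, comap_centralizer_singleton, comap_unitary]

lemma exists_conj_eq_spSet {H : Subgroup (unitaryGroup (Fin 4) ℂ)} {J : Matrix (Fin 4) (Fin 4) ℂ}
    (hJ : IsSymplecticForm J)
    (hH : H.toSubmonoid.map (unitaryGroup (Fin 4) ℂ).subtype = unitarySymplectic J) :
    ∃ U : unitaryGroup (Fin 4) ℂ, (fun A ↦ U * A * U⁻¹) '' (H : Set _) = spSet 4 := by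
  obtain ⟨U, rfl⟩ := hJ.exists_eq_symplJ
  exact ⟨U, by rw [spSet_eq, image_conj_eq (hH.trans (comap_unitarySymplectic U _).symm)]⟩

lemma exists_conj_eq_eSpSet {H : Subgroup (unitaryGroup (Fin 4) ℂ)} {J : Matrix (Fin 4) (Fin 4) ℂ}
    (hJ : IsSymplecticForm J)
    (hH : H.toSubmonoid.map (unitaryGroup (Fin 4) ℂ).subtype =
      unitScalarMul (unitarySymplectic J)) :
    ∃ U : unitaryGroup (Fin 4) ℂ, (fun A ↦ U * A * U⁻¹) '' (H : Set _) = eSpSet 4 := by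
  obtain ⟨U, rfl⟩ := hJ.exists_eq_symplJ
  rw [← comap_unitarySymplectic, ← comap_unitScalarMul] at hH
  exact ⟨U, by rw [eSpSet_eq, image_conj_eq hH]⟩

open scoped Matrix.Norms.L2Operator in
theorem map_subtype_eq_of_isClosed_of_isConnected [NeZero N]
    {H : Subgroup (unitaryGroup (Fin N) ℂ)} (hclosed : IsClosed (H : Set (unitaryGroup (Fin N) ℂ)))
    (hconn : IsConnected (H : Set (unitaryGroup (Fin N) ℂ)))
    (hdim : ((N ^ 2 - 2 * N + 2 : ℕ) : ℝ≥0∞) ≤ unitarySubgroupDim N H) :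
    let K := H.toSubmonoid.map (unitaryGroup (Fin N) ℂ).subtype
    K = unitaryGroup (Fin N) ℂ ∨ K = specialUnitaryGroup (Fin N) ℂ ∨
      (∃ v, star v ⬝ᵥ v = 1 ∧
        K = unitaryGroup (Fin N) ℂ ⊓ Submonoid.centralizer {vecMulVec v (star v)}) ∨
      N = 4 ∧ ∃ J, IsSymplecticForm J ∧
        (K = unitarySymplectic J ∨ K = unitScalarMul (unitarySymplectic J)) := by
  have hK := isClosedUnitarySubgroup_map_subtype hclosed
  have hfinrank : N ^ 2 - 2 * N + 2 ≤ finrank ℝ hK.lieAlgebra := by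
    exact_mod_cast hdim.trans (unitarySubgroupDim_le_finrank hK)
  have hconnK := hconn.isPreconnected.image _ continuous_subtype_val.continuousOn
  simpa only [Fintype.card_fin] using hK.classification hconnK (by rw [Fintype.card_fin]; omega)

end Bridge

end UnitaryClassification

/-- A connected closed subgroup of `U(N)`, `N ≥ 2`, of dimension at least `N² - 2N + 2`
is `U(N)`, `SU(N)`, a conjugate of the block-diagonal `U(N-1) × U(1)`, or (for `N = 4`)
a conjugate of `Sp(2)` or of `e^{iℝ}·Sp(2)`. -/
theorem stmt_12 {N : ℕ} (hN : 2 ≤ N)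
    (H : Subgroup ↥(Matrix.unitaryGroup (Fin N) ℂ))
    (hclosed : IsClosed (H : Set ↥(Matrix.unitaryGroup (Fin N) ℂ)))
    (hconn : IsConnected (H : Set ↥(Matrix.unitaryGroup (Fin N) ℂ)))
    (hdim : ((N ^ 2 - 2 * N + 2 : ℕ) : ℝ≥0∞) ≤ unitarySubgroupDim N H) :
    H = ⊤ ∨
    (H : Set ↥(Matrix.unitaryGroup (Fin N) ℂ)) =
      {A : ↥(Matrix.unitaryGroup (Fin N) ℂ) | (A : Matrix (Fin N) (Fin N) ℂ).det = 1} ∨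
    (∃ U : ↥(Matrix.unitaryGroup (Fin N) ℂ),
      (fun A => U * A * U⁻¹) '' (H : Set ↥(Matrix.unitaryGroup (Fin N) ℂ)) =
        blockDiagSet N) ∨
    (N = 4 ∧ ∃ U : ↥(Matrix.unitaryGroup (Fin N) ℂ),
      (fun A => U * A * U⁻¹) '' (H : Set ↥(Matrix.unitaryGroup (Fin N) ℂ)) = spSet N ∨
      (fun A => U * A * U⁻¹) '' (H : Set ↥(Matrix.unitaryGroup (Fin N) ℂ)) = eSpSet N) := by
  have : NeZero N := ⟨by lia⟩
  obtain hU | hSU | ⟨v, hv, hblock⟩ | ⟨rfl, J, hJ, hSp | heSp⟩ :=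
    UnitaryClassification.map_subtype_eq_of_isClosed_of_isConnected hclosed hconn hdim
  · left
    ext A
    simp [← SetLike.mem_coe, UnitaryClassification.coe_eq_setOf_mem hU]
  · right; left
    ext A
    simp [UnitaryClassification.coe_eq_setOf_mem hSU, Matrix.mem_specialUnitaryGroup_iff]
  · exact .inr (.inr (.inl (UnitaryClassification.exists_conj_eq_blockDiagSet hv hblock)))
  · obtain ⟨U, hU⟩ := UnitaryClassification.exists_conj_eq_spSet hJ hSp
    exact .inr (.inr (.inr ⟨rfl, U, .inl hU⟩))
  · obtain ⟨U, hU⟩ := UnitaryClassification.exists_conj_eq_eSpSet hJ heSp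
    exact .inr (.inr (.inr ⟨rfl, U, .inr hU⟩))
end
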